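/- Let e ≥ 2, r = 3, with D^u as above for a fixed u ∈ {1,…,6}, and let M ∈ D^u be such that Pt(0,M) is Kleshchev. Then there exist a matrix L ∈ M(3,e) with wt(L) = 0, an integer m ≥ 0, indices i_1,…,i_m ∈ {1,…,e−1} and integers k_1,…,k_m > 0 such that, in the free ℤ[v,v^{−1}]-module with basis M(3,e), G^{(k_m)}_{i_m} ⋯ G^{(k_1)}_{i_1} [L] = [M] + Σ_{M′ ≠ M} a_{M′}(v) [M′], where every coefficient a_{M′}(v) lies in v·ℕ[v] and every M′ with a_{M′}(v) ≠ 0 lies in D^u. -/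

import Mathlib

open scoped Classical

namespace AK
noncomputable section



/-! ### Matrices, order from base tuple, abacus β-sets -/

/-- The order ≺ on columns determined by a base tuple `B`. -/
def prec {e : ℕ} (B : Fin e → ℕ) (i j : Fin e) : Prop :=
  B i < B j ∨ (B i = B j ∧ i < j)

/-- `rank B i = π(B)⁻¹(i)`, the number of columns ≺-smaller than `i`. -/
def rank {e : ℕ} (B : Fin e → ℕ) (i : Fin e) : Fin e :=
  ⟨(Finset.univ.filter (fun j => prec B j i)).card, by
    have h1 : (Finset.univ.filter (fun j => prec B j i)) ⊆ Finset.univ.erase i := by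
      intro j hj
      rw [Finset.mem_filter] at hj
      refine Finset.mem_erase.mpr ⟨?_, Finset.mem_univ j⟩
      rintro rfl
      rcases hj.2 with h | ⟨-, h⟩ <;> exact lt_irrefl _ h
    have h2 := Finset.card_le_card h1
    have h3 : (Finset.univ.erase i).card < Finset.univ.card :=
      Finset.card_erase_lt_of_mem (Finset.mem_univ i)
    simpa using lt_of_le_of_lt h2 h3⟩

/-- The number of beads on runner `i` of the abacus of component `s` of `Pt(B,M)`. -/
def beads {e r : ℕ} (B : Fin e → ℕ) (M : Fin r → Fin e → Bool) (s : Fin r) (i : Fin e) : ℕ :=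
  B i + (if M s (rank B i) then 1 else 0)

/-- The canonical β-set of component `s` of `Pt(B,M)`. -/
def Tset {e r : ℕ} (B : Fin e → ℕ) (M : Fin r → Fin e → Bool) (s : Fin r) : Set ℤ :=
  {z | z < 0 ∨ (0 ≤ z ∧ ∃ h : z.toNat % e < e, z.toNat / e < beads B M s ⟨z.toNat % e, h⟩)}

/-- `n_s`, the total number of beads of component `s`. -/
def nsum {e r : ℕ} (B : Fin e → ℕ) (M : Fin r → Fin e → Bool) (s : Fin r) : ℕ :=
  ∑ i : Fin e, beads B M s i

/-- Decreasing enumeration of a set of integers: `tEnum T x` is `t_{x+1}`. -/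
noncomputable def tEnum (T : Set ℤ) : ℕ → ℤ
  | 0 => sSup T
  | (x + 1) => sSup (T ∩ Set.Iio (tEnum T x))

/-- The multipartition `Pt(B,M)`: component `s`, part `p+1` (0-indexed parts). -/
noncomputable def PtPart {e r : ℕ} (B : Fin e → ℕ) (M : Fin r → Fin e → Bool)
    (s : Fin r) (p : ℕ) : ℕ :=
  (tEnum (Tset B M s) p + (p + 1) - (nsum B M s : ℤ)).toNat

/-- The multicharge of `Pt(B,M)`. -/
noncomputable def PtCharge {e r : ℕ} (B : Fin e → ℕ) (M : Fin r → Fin e → Bool)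
    (s : Fin r) : ZMod e :=
  (nsum B M s : ZMod e)

/-! ### Nodes, good nodes and Kleshchev multipartitions -/

/-- A node `(s, x, y)` (all 0-indexed). -/
abbrev Node (r : ℕ) := Fin r × ℕ × ℕ

/-- `A` is above `B`. -/
def NodeAbove {r : ℕ} (A B : Node r) : Prop :=
  A.1 < B.1 ∨ (A.1 = B.1 ∧ A.2.1 < B.2.1)

/-- The residue of a node. -/
def res {e r : ℕ} (a : Fin r → ZMod e) (A : Node r) : ZMod e :=
  a A.1 - (A.2.1 : ZMod e) + (A.2.2 : ZMod e)

/-- `A` is a removable node of `lam`. -/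
def Removable {r : ℕ} (lam : Fin r → ℕ → ℕ) (A : Node r) : Prop :=
  A.2.2 + 1 = lam A.1 A.2.1 ∧ lam A.1 (A.2.1 + 1) < lam A.1 A.2.1

/-- `A` is an addable node of `lam`. -/
def Addable {r : ℕ} (lam : Fin r → ℕ → ℕ) (A : Node r) : Prop :=
  A.2.2 = lam A.1 A.2.1 ∧ (A.2.1 = 0 ∨ lam A.1 A.2.1 < lam A.1 (A.2.1 - 1))

/-- `A` is a normal node of `lam`. -/
def Normal {e r : ℕ} (a : Fin r → ZMod e) (lam : Fin r → ℕ → ℕ) (A : Node r) : Prop :=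
  Removable lam A ∧
    ∀ B : Node r, Addable lam B → res a B = res a A → NodeAbove A B →
      Set.ncard {C : Node r | Addable lam C ∧ res a C = res a A ∧ NodeAbove A C ∧ NodeAbove C B}
        < Set.ncard {C : Node r | Removable lam C ∧ res a C = res a A ∧ NodeAbove A C ∧ NodeAbove C B}

/-- `A` is a good node of `lam`: normal, and highest among normal nodes of its residue. -/
def Good {e r : ℕ} (a : Fin r → ZMod e) (lam : Fin r → ℕ → ℕ) (A : Node r) : Prop :=
  Normal a lam A ∧ ∀ B : Node r, Normal a lam B → res a B = res a A → B ≠ A → NodeAbove A B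

/-- Remove the node `A` from `lam`. -/
def removeNode {r : ℕ} (lam : Fin r → ℕ → ℕ) (A : Node r) : Fin r → ℕ → ℕ :=
  fun s x => if s = A.1 ∧ x = A.2.1 then lam s x - 1 else lam s x

/-- Kleshchev multipartitions (for the multicharge `a`). -/
inductive IsKleshchev {e r : ℕ} (a : Fin r → ZMod e) : (Fin r → ℕ → ℕ) → Prop
  | empty : IsKleshchev a (fun _ _ => 0)
  | step (lam : Fin r → ℕ → ℕ) (A : Node r) (hA : Good a lam A)
      (h : IsKleshchev a (removeNode lam A)) : IsKleshchev a lam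

/-! ### Weights and bead swaps -/

/-- `δ₊^M(t,s)`. -/
def deltaP {e r : ℕ} (M : Fin r → Fin e → Bool) (t s : Fin r) : ℕ :=
  (Finset.univ.filter (fun i => M t i = true ∧ M s i = false)).card

/-- `wt^M(t,s)`. -/
def wtPair {e r : ℕ} (M : Fin r → Fin e → Bool) (t s : Fin r) : ℕ :=
  min (deltaP M t s) (deltaP M s t)

/-- `wt(M)`. -/
def wtM {e r : ℕ} (M : Fin r → Fin e → Bool) : ℕ :=
  ∑ t : Fin r, ∑ s ∈ Finset.univ.filter (· < t), wtPair M t s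

/-- `M'` is obtained from `M` by a bead swap. -/
def BeadSwap {e r : ℕ} (M M' : Fin r → Fin e → Bool) : Prop :=
  ∃ i j : Fin e, i ≠ j ∧ ∃ s t : Fin r, s ≠ t ∧
    M s i = true ∧ M t j = true ∧ M s j = false ∧ M t i = false ∧
    M' s i = false ∧ M' t j = false ∧ M' s j = true ∧ M' t i = true ∧
    (∀ s' i', (s' ≠ s ∧ s' ≠ t) ∨ (i' ≠ i ∧ i' ≠ j) → M' s' i' = M s' i')




/-! ### The families `α^u_k`, `β^u_l`, `γ^u_{kl}` for `r = 3` -/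

def xcol : Fin 6 → Fin 3 → Bool := fun _ => ![false, false, false]

def ycol : Fin 6 → Fin 3 → Bool :=
  ![![false,true,true], ![true,false,false], ![true,true,false],
    ![false,false,true], ![false,true,true], ![true,false,false]]

def zcol : Fin 6 → Fin 3 → Bool :=
  ![![false,false,true], ![true,false,true], ![false,true,false],
    ![true,false,true], ![false,true,false], ![true,true,false]]

def oycol : Fin 6 → Fin 3 → Bool :=
  ![![true,false,true], ![false,false,true], ![false,true,true],
    ![true,false,false], ![true,true,false], ![false,true,false]]

def ozcol : Fin 6 → Fin 3 → Bool :=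
  ![![false,true,false], ![true,true,false], ![true,false,false],
    ![false,true,true], ![false,false,true], ![true,false,true]]

def aacol : Fin 6 → Fin 3 → Bool :=
  ![![true,true,false], ![false,true,false], ![true,false,true],
    ![false,true,false], ![true,false,true], ![false,false,true]]

def abcol : Fin 6 → Fin 3 → Bool :=
  ![![true,false,false], ![false,true,true], ![false,false,true],
    ![true,true,false], ![true,false,false], ![false,true,true]]

variable {e : ℕ}

/-- The matrix `α^u_k`. -/
def alphaM (Y Z : Finset (Fin e)) {y : ℕ} (hY : Y.card = y + 1) (u : Fin 6)
    (k : Fin (y + 1)) : Fin 3 → Fin e → Bool :=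
  fun s c =>
    if c = Y.orderEmbOfFin hY k then aacol u s
    else if c ∈ Y then ycol u s
    else if c ∈ Z then zcol u s
    else false

/-- The matrix `β^u_l`. -/
def betaM (Y Z : Finset (Fin e)) {z : ℕ} (hZ : Z.card = z + 1) (u : Fin 6)
    (l : Fin (z + 1)) : Fin 3 → Fin e → Bool :=
  fun s c =>
    if c = Z.orderEmbOfFin hZ l then abcol u s
    else if c ∈ Z then zcol u s
    else if c ∈ Y then ycol u s
    else false

/-- The matrix `γ^u_{kl}`. -/
def gammaM (Y Z : Finset (Fin e)) {y z : ℕ} (hY : Y.card = y + 1) (hZ : Z.card = z + 1)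
    (u : Fin 6) (k : Fin (y + 1)) (l : Fin (z + 1)) : Fin 3 → Fin e → Bool :=
  fun s c =>
    if c = Y.orderEmbOfFin hY k then oycol u s
    else if c = Z.orderEmbOfFin hZ l then ozcol u s
    else if c ∈ Y then ycol u s
    else if c ∈ Z then zcol u s
    else false

/-- The set `D^u` of matrices in the block. -/
def Duset (Y Z : Finset (Fin e)) {y z : ℕ} (hY : Y.card = y + 1) (hZ : Z.card = z + 1)
    (u : Fin 6) : Set (Fin 3 → Fin e → Bool) :=
  {A | (∃ k, A = alphaM Y Z hY u k) ∨ (∃ l, A = betaM Y Z hZ u l) ∨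
       (∃ k l, A = gammaM Y Z hY hZ u k l)}


/-! ### The operators `G^{(k)}_i` on the free `ℤ[v,v⁻¹]`-module with basis `M(r,e)` -/

/-- The column `i - 1`. -/
def colPred {e : ℕ} (i : Fin e) : Fin e :=
  ⟨i.1 - 1, Nat.lt_of_le_of_lt (Nat.sub_le _ _) i.isLt⟩

/-- `L →(i,k) M`: move `k` ones from column `i-1` to column `i`. -/
def GArrow {e r : ℕ} (i : Fin e) (k : ℕ) (L M : Fin r → Fin e → Bool) : Prop :=
  ∃ S : Finset (Fin r), S.card = k ∧
    (∀ s ∈ S, L s (colPred i) = true ∧ L s i = false) ∧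
    M = fun s c => if s ∈ S ∧ (c = colPred i ∨ c = i) then !(L s c) else L s c

/-- `N_i(L,M)` for `L →(i,k) M`. -/
def Nval {e r : ℕ} (i : Fin e) (L M : Fin r → Fin e → Bool) : ℤ :=
  ∑ a ∈ Finset.univ.filter (fun a : Fin r => ¬(L a i = M a i)),
    (((Finset.univ.filter
        (fun s : Fin r => a < s ∧ M s (colPred i) = true ∧ M s i = false)).card : ℤ)
      - ((Finset.univ.filter
        (fun s : Fin r => a < s ∧ L s (colPred i) = false ∧ L s i = true)).card : ℤ))

/-- The free `ℤ[v,v⁻¹]`-module on the set of `r × e` matrices. -/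
abbrev FM (r e : ℕ) := (Fin r → Fin e → Bool) →₀ LaurentPolynomial ℤ

/-- The operator `G^{(k)}_i`. -/
def Gop {e r : ℕ} (i : Fin e) (k : ℕ) (f : FM r e) : FM r e :=
  f.sum fun L c =>
    ∑ M ∈ Finset.univ.filter (fun M => GArrow i k L M),
      Finsupp.single M (c * LaurentPolynomial.T (Nval i L M))

/-- `G^{(k_m)}_{i_m} ⋯ G^{(k_1)}_{i_1}`, applied in order of the list. -/
def GopList {e r : ℕ} (ops : List (Fin e × ℕ)) (f : FM r e) : FM r e :=
  ops.foldl (fun g p => Gop p.1 p.2 g) f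

/-- Membership in `ℕ[v, v⁻¹]` (nonnegative Laurent polynomials). -/
def IsNNLaurent (a : LaurentPolynomial ℤ) : Prop :=
  ∃ f : ℤ →₀ ℕ, a = f.sum fun n c => (c : LaurentPolynomial ℤ) * LaurentPolynomial.T n

/-- Membership in `v·ℕ[v]`. -/
def IsVNPoly (a : LaurentPolynomial ℤ) : Prop :=
  ∃ f : ℤ →₀ ℕ, (∀ n ∈ f.support, 1 ≤ n) ∧
    a = f.sum fun n c => (c : LaurentPolynomial ℤ) * LaurentPolynomial.T n


/-! ### Columns and local moves -/

abbrev Col := Fin 3 → Bool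

def bz (b : Bool) : ℤ := bif b then 1 else 0

def mvA (S a : Col) : Col := fun s => a s && !(S s)
def mvB (S b : Col) : Col := fun s => b s || S s

def nv (S a b : Col) : ℤ :=
  (bif S 0 then
    (bz (mvA S a 1 && !(mvB S b 1)) + bz (mvA S a 2 && !(mvB S b 2)))
      - (bz (!(a 1) && b 1) + bz (!(a 2) && b 2)) else 0) +
  (bif S 1 then bz (mvA S a 2 && !(mvB S b 2)) - bz (!(a 2) && b 2) else 0)

def csz (a : Col) : ℕ := (a 0).toNat + (a 1).toNat + (a 2).toNat

def cle (a b : Col) : Bool := (!(a 0) || b 0) && (!(a 1) || b 1) && (!(a 2) || b 2)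

def ceq (a b : Col) : Bool := (a 0 == b 0) && (a 1 == b 1) && (a 2 == b 2)

theorem ceq_iff (a b : Col) : ceq a b = true ↔ a = b := by
  constructor
  · intro h
    simp only [ceq, Bool.and_eq_true, beq_iff_eq] at h
    funext s
    fin_cases s
    · exact h.1.1
    · exact h.1.2
    · exact h.2
  · rintro rfl
    simp [ceq]

def okS (k : ℕ) (S a b : Col) : Bool :=
  (csz S == k) && cle S a && cle S (fun s => !(b s))

def mkCol (x y z : Bool) : Col := ![x, y, z]

def allCols : List Col :=
  [mkCol false false false, mkCol false false true, mkCol false true false, mkCol false true true,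
   mkCol true false false, mkCol true false true, mkCol true true false, mkCol true true true]

theorem mkCol_eta (a : Col) : a = mkCol (a 0) (a 1) (a 2) := by
  funext s; fin_cases s <;> rfl

theorem mem_allCols (a : Col) : a ∈ allCols := by
  rw [mkCol_eta a]
  cases a 0 <;> cases a 1 <;> cases a 2 <;> simp [allCols]

theorem nodup_allCols : allCols.Nodup := by
  have h : ∀ x y z x' y' z', mkCol x y z = mkCol x' y' z' ↔ (x = x' ∧ y = y' ∧ z = z') := by
    intro x y z x' y' z'
    constructor
    · intro h
      exact ⟨congrFun h 0, congrFun h 1, congrFun h 2⟩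
    · rintro ⟨rfl, rfl, rfl⟩; rfl
  simp [allCols, h]

def colMoves (k : ℕ) (a b : Col) : List (Col × Col × ℤ) :=
  (allCols.filter (fun S => okS k S a b)).map fun S => (mvA S a, mvB S b, nv S a b)

/-- flip between column-wise functions and matrices -/
def fl {e : ℕ} (N : Fin e → Col) : Fin 3 → Fin e → Bool := fun s c => N c s

theorem fl_inj {e : ℕ} {N N' : Fin e → Col} (h : fl N = fl N') : N = N' := by
  funext c s
  exact congrFun (congrFun h s) c

def gopG {ι : Type} [DecidableEq ι] (a b : ι) (k : ℕ) (l : List ((ι → Col) × ℤ)) :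
    List ((ι → Col) × ℤ) :=
  l.flatMap fun t => (colMoves k (t.1 a) (t.1 b)).map fun r =>
    (Function.update (Function.update t.1 a r.1) b r.2.1, t.2 + r.2.2)

def Vec {e : ℕ} (l : List ((Fin e → Col) × ℤ)) : FM 3 e :=
  (l.map fun t => Finsupp.single (fl t.1) (LaurentPolynomial.T t.2 : LaurentPolynomial ℤ)).sum

theorem colPred_ne {e : ℕ} (i : Fin e) (hi : i.1 ≠ 0) : colPred i ≠ i := by
  intro h
  have := congrArg Fin.val h
  simp [colPred] at this
  omega

def mvN {e : ℕ} (i : Fin e) (N : Fin e → Col) (S : Col) : Fin e → Col :=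
  Function.update (Function.update N (colPred i) (mvA S (N (colPred i)))) i (mvB S (N i))

theorem mvN_pred {e : ℕ} (i : Fin e) (hi : i.1 ≠ 0) (N : Fin e → Col) (S : Col) :
    mvN i N S (colPred i) = mvA S (N (colPred i)) := by
  simp [mvN, Function.update_of_ne (colPred_ne i hi)]

theorem mvN_self {e : ℕ} (i : Fin e) (N : Fin e → Col) (S : Col) :
    mvN i N S i = mvB S (N i) := by
  simp [mvN]

theorem okS_iff (k : ℕ) (S a b : Col) : okS k S a b = true ↔
    (csz S = k ∧ ∀ s, S s = true → a s = true ∧ b s = false) := by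
  simp only [okS, cle, Bool.and_eq_true, beq_iff_eq, Fin.forall_fin_succ, IsEmpty.forall_iff]
  constructor
  · rintro ⟨⟨h1, h2⟩, h3⟩
    refine ⟨h1, ?_⟩
    revert h2 h3
    change _ → _ → ((_ ∧ (S 1 = true → a 1 = true ∧ b 1 = false) ∧ (S 2 = true → a 2 = true ∧ b 2 = false) ∧ True))
    cases S 0 <;> cases S 1 <;> cases S 2 <;> simp <;> tauto
  · rintro ⟨h1, h2⟩
    refine ⟨⟨h1, ?_⟩, ?_⟩ <;> revert h2 <;>
    change ((_ ∧ (S 1 = true → a 1 = true ∧ b 1 = false) ∧ (S 2 = true → a 2 = true ∧ b 2 = false) ∧ True)) → _ <;>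
    cases S 0 <;> cases S 1 <;> cases S 2 <;> simp <;> tauto

theorem mvN_diff {e : ℕ} (i : Fin e) (k : ℕ) (N : Fin e → Col) (S : Col)
    (hS : okS k S (N (colPred i)) (N i) = true) (s : Fin 3) :
    (¬ (fl N s i = fl (mvN i N S) s i)) ↔ S s = true := by
  have h := ((okS_iff _ _ _ _).1 hS).2 s
  simp only [fl, mvN_self, mvB]
  cases hs : S s
  · simp
  · simp [(h hs).2]

theorem Nval_mvN {e : ℕ} (i : Fin e) (hi : i.1 ≠ 0) (k : ℕ) (N : Fin e → Col) (S : Col)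
    (hS : okS k S (N (colPred i)) (N i) = true) :
    Nval i (fl N) (fl (mvN i N S)) = nv S (N (colPred i)) (N i) := by
  unfold Nval
  have : (Finset.univ.filter (fun a : Fin 3 => ¬(fl N a i = fl (mvN i N S) a i)))
      = Finset.univ.filter (fun a : Fin 3 => S a = true) := by
    ext a
    simp only [Finset.mem_filter, Finset.mem_univ, true_and]
    exact mvN_diff i k N S hS a
  rw [this]
  have c1 : ∀ a : Fin 3, (Finset.univ.filter (fun s : Fin 3 => a < s ∧
      fl (mvN i N S) s (colPred i) = true ∧ fl (mvN i N S) s i = false)).card =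
      ∑ s : Fin 3, if a < s ∧ mvA S (N (colPred i)) s = true ∧ mvB S (N i) s = false
        then 1 else 0 := by
    intro a
    rw [Finset.card_filter]
    simp only [fl, mvN_self, mvN_pred i hi]
  have c2 : ∀ a : Fin 3, (Finset.univ.filter (fun s : Fin 3 => a < s ∧
      fl N s (colPred i) = false ∧ fl N s i = true)).card =
      ∑ s : Fin 3, if a < s ∧ N (colPred i) s = false ∧ N i s = true then 1 else 0 := by
    intro a
    rw [Finset.card_filter]
    rfl
  simp only [c1, c2, Finset.sum_filter, Fin.sum_univ_three, nv]
  have e1 : ∀ (p q : Bool), (if p = true ∧ q = false then (1:ℕ) else 0) = (bz (p && !q)).toNat := by decide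
  have e2 : ∀ (p q : Bool), (if p = false ∧ q = true then (1:ℕ) else 0) = (bz (!p && q)).toNat := by decide
  have e3 : ∀ p : Bool, ((bz p).toNat : ℤ) = bz p := by decide
  cases h0 : S 0 <;> cases h1 : S 1 <;> simp [e1, e2, e3]

theorem GArrow_iff {e : ℕ} (i : Fin e) (hi : i.1 ≠ 0) (k : ℕ) (N : Fin e → Col)
    (M : Fin 3 → Fin e → Bool) :
    GArrow i k (fl N) M ↔ ∃ S : Col, okS k S (N (colPred i)) (N i) = true ∧ M = fl (mvN i N S) := by
  have hcard : ∀ S : Col, (Finset.univ.filter (fun s => S s = true)).card = csz S := by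
    intro S
    simp only [Finset.card_filter, Fin.sum_univ_three, csz]
    cases S 0 <;> cases S 1 <;> cases S 2 <;> rfl
  have key : ∀ S : Col, (∀ s, S s = true → N (colPred i) s = true ∧ N i s = false) →
      (fun s c => if S s = true ∧ (c = colPred i ∨ c = i) then !(fl N s c) else fl N s c)
        = fl (mvN i N S) := by
    intro S h
    funext s c
    by_cases hc : c = i
    · subst hc
      simp only [fl, mvN_self, mvB]
      cases hs : S s
      · simp
      · simp [(h s hs).2]
    · by_cases hc' : c = colPred i
      · subst hc'
        simp only [fl, mvN_pred i hi, mvA]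
        cases hs : S s
        · simp
        · simp [(h s hs).1]
      · simp [fl, mvN, hc, hc']
  constructor
  · rintro ⟨S, hk, h, rfl⟩
    refine ⟨fun s => decide (s ∈ S), ?_, ?_⟩
    · rw [okS_iff]
      refine ⟨?_, ?_⟩
      · rw [← hcard, ← hk]; simp
      · intro s hs
        exact h s (by simpa using hs)
    · rw [← key]
      · simp
      · intro s hs
        exact h s (by simpa using hs)
  · rintro ⟨S, h, rfl⟩
    rw [okS_iff] at h
    refine ⟨Finset.univ.filter (fun s => S s = true), ?_, ?_, ?_⟩
    · rw [hcard, h.1]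
    · intro s hs
      exact h.2 s (by simpa using hs)
    · rw [← key S h.2]; simp

theorem Gop_single {e : ℕ} (i : Fin e) (hi : i.1 ≠ 0) (k : ℕ) (N : Fin e → Col)
    (c : LaurentPolynomial ℤ) :
    Gop i k (Finsupp.single (fl N) c) =
      ((allCols.filter (fun S => okS k S (N (colPred i)) (N i))).map fun S =>
        Finsupp.single (fl (mvN i N S)) (c * LaurentPolynomial.T (nv S (N (colPred i)) (N i)))).sum := by
  unfold Gop
  rw [Finsupp.sum_single_index (by simp)]
  rw [← List.sum_toFinset _ (nodup_allCols.filter _)]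
  symm
  refine Finset.sum_bij (fun S _ => fl (mvN i N S)) ?_ ?_ ?_ ?_
  · intro S hS
    simp only [List.mem_toFinset, List.mem_filter] at hS
    simp only [Finset.mem_filter, Finset.mem_univ, true_and]
    exact (GArrow_iff i hi k N _).2 ⟨S, hS.2, rfl⟩
  · intro S hS S' hS' h
    simp only [List.mem_toFinset, List.mem_filter] at hS hS'
    funext s
    have a1 := mvN_diff i k N S hS.2 s
    have a2 := mvN_diff i k N S' hS'.2 s
    have h : fl (mvN i N S) = fl (mvN i N S') := h
    rw [h, a2] at a1
    exact Bool.eq_iff_iff.2 a1.symm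
  · intro M hM
    simp only [Finset.mem_filter, Finset.mem_univ, true_and] at hM
    obtain ⟨S, hS, rfl⟩ := (GArrow_iff i hi k N M).1 hM
    exact ⟨S, by simp [mem_allCols, hS], rfl⟩
  · intro S hS
    simp only [List.mem_toFinset, List.mem_filter] at hS
    rw [Nval_mvN i hi k N S hS.2]

theorem Gop_add {e : ℕ} (i : Fin e) (k : ℕ) (f g : FM 3 e) :
    Gop i k (f + g) = Gop i k f + Gop i k g := by
  unfold Gop
  rw [Finsupp.sum_add_index']
  · intro L; simp
  · intro L c d
    simp [add_mul, Finset.sum_add_distrib]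

theorem Gop_zero {e : ℕ} (i : Fin e) (k : ℕ) : Gop i k (0 : FM 3 e) = 0 := by
  simp [Gop]

theorem Vec_nil {e : ℕ} : Vec ([] : List ((Fin e → Col) × ℤ)) = 0 := rfl
theorem Vec_cons {e : ℕ} (t) (l : List ((Fin e → Col) × ℤ)) :
    Vec (t :: l) = Finsupp.single (fl t.1) (LaurentPolynomial.T t.2) + Vec l := by
  simp [Vec]
theorem Vec_append {e : ℕ} (l l' : List ((Fin e → Col) × ℤ)) :
    Vec (l ++ l') = Vec l + Vec l' := by
  simp [Vec]

theorem Gop_Vec {e : ℕ} (i : Fin e) (hi : i.1 ≠ 0) (k : ℕ) (l : List ((Fin e → Col) × ℤ)) :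
    Gop i k (Vec l) = Vec (gopG (colPred i) i k l) := by
  induction l with
  | nil => simp [gopG, Vec_nil, Gop_zero]
  | cons t l ih =>
    have : gopG (colPred i) i k (t :: l) =
      ((colMoves k (t.1 (colPred i)) (t.1 i)).map fun r =>
        (Function.update (Function.update t.1 (colPred i) r.1) i r.2.1, t.2 + r.2.2))
        ++ gopG (colPred i) i k l := by
      simp [gopG]
    rw [this, Vec_append, Vec_cons, Gop_add, ih, Gop_single i hi]
    congr 1
    simp only [Vec, colMoves, List.map_map]
    congr 1
    apply List.map_congr_left
    intro S _
    simp only [Function.comp, mvN, LaurentPolynomial.T_add]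

/-! ### Reachable vectors -/

def Reach {e : ℕ} (l : List ((Fin e → Col) × ℤ)) : Prop :=
  ∃ L : Fin 3 → Fin e → Bool, wtM L = 0 ∧
      ∃ ops : List (Fin e × ℕ), (∀ p ∈ ops, p.1.1 ≠ 0 ∧ 0 < p.2) ∧
        GopList ops (Finsupp.single L 1) = Vec l

def cmpC (a b : Col) : Bool := cle a b || cle b a

theorem cle_iff (a b : Col) : cle a b = true ↔ ∀ s, a s = true → b s = true := by
  simp only [cle, Bool.and_eq_true]
  constructor
  · rintro ⟨⟨h0, h1⟩, h2⟩ s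
    fin_cases s
    · revert h0; change (!(a 0) || b 0) = true → (a 0 = true → b 0 = true)
      cases a 0 <;> simp
    · revert h1; change (!(a 1) || b 1) = true → (a 1 = true → b 1 = true)
      cases a 1 <;> simp
    · revert h2; change (!(a 2) || b 2) = true → (a 2 = true → b 2 = true)
      cases a 2 <;> simp
  · intro h
    have h0 := h 0
    have h1 := h 1
    have h2 := h 2
    revert h0 h1 h2
    cases a 0 <;> cases a 1 <;> cases a 2 <;> simp <;> tauto

theorem cmpC_comm (a b : Col) : cmpC a b = cmpC b a := by
  simp [cmpC, Bool.or_comm]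

theorem wt0_of_chain {e : ℕ} (N : Fin e → Col) (h : ∀ c d, cmpC (N c) (N d) = true) :
    wtM (fl N) = 0 := by
  unfold wtM
  refine Finset.sum_eq_zero fun t _ => Finset.sum_eq_zero fun s _ => ?_
  unfold wtPair
  by_contra hne
  have h1 : deltaP (fl N) t s ≠ 0 := by
    intro h0; apply hne; rw [h0]; simp
  have h2 : deltaP (fl N) s t ≠ 0 := by
    intro h0; apply hne; rw [h0]; simp
  unfold deltaP at h1 h2
  obtain ⟨c, hc⟩ := Finset.card_pos.1 (Nat.pos_of_ne_zero h1)
  obtain ⟨d, hd⟩ := Finset.card_pos.1 (Nat.pos_of_ne_zero h2)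
  have hc := (Finset.mem_filter.1 hc).2
  have hd := (Finset.mem_filter.1 hd).2
  simp only [fl] at hc hd
  have := h c d
  simp only [cmpC, Bool.or_eq_true, cle_iff] at this
  rcases this with h' | h'
  · have := h' t hc.1; rw [hd.2] at this; cases this
  · have := h' s hd.1; rw [hc.2] at this; cases this

theorem reach_base {e : ℕ} (N : Fin e → Col) (h : ∀ c d, cmpC (N c) (N d) = true) :
    Reach [(N, 0)] :=
  ⟨fl N, wt0_of_chain N h, [], by simp, by simp [GopList, Vec]⟩

theorem reach_step {e : ℕ} (l : List ((Fin e → Col) × ℤ)) (hl : Reach l) (a b : Fin e)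
    (hab : b.1 = a.1 + 1) (k : ℕ) (hk : 0 < k) : Reach (gopG a b k l) := by
  obtain ⟨L, hL, ops, hops, h⟩ := hl
  have ha : colPred b = a := by
    apply Fin.ext; simp [colPred, hab]
  refine ⟨L, hL, ops ++ [(b, k)], ?_, ?_⟩
  · intro p hp
    rw [List.mem_append] at hp
    rcases hp with hp | hp
    · exact hops p hp
    · simp only [List.mem_singleton] at hp
      subst hp
      exact ⟨by simp [hab], hk⟩
  · unfold GopList at h ⊢
    rw [List.foldl_append, h]
    simp only [List.foldl_cons, List.foldl_nil]
    rw [Gop_Vec b (by omega) k l, ha]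

def pm {ι : Type} (π : Equiv.Perm ι) (l : List ((ι → Col) × ℤ)) : List ((ι → Col) × ℤ) :=
  l.map fun t => (t.1 ∘ π.symm, t.2)

theorem pm_gopG {ι : Type} [DecidableEq ι] (π : Equiv.Perm ι) (a b : ι) (k : ℕ)
    (l : List ((ι → Col) × ℤ)) : pm π (gopG a b k l) = gopG (π a) (π b) k (pm π l) := by
  simp only [pm, gopG, List.map_flatMap, List.flatMap_map, List.map_map, Function.comp,
    Equiv.symm_apply_apply]
  congr 1
  funext t
  apply List.map_congr_left
  intro r _
  simp only [Function.comp]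
  congr 1
  funext c
  simp only [Function.update_apply, Function.comp_apply, Equiv.symm_apply_eq]

theorem pm_pm {ι : Type} (π σ : Equiv.Perm ι) (l : List ((ι → Col) × ℤ)) :
    pm π (pm σ l) = pm (σ.trans π) l := by
  simp [pm, Function.comp_def]

theorem pm_refl {ι : Type} (l : List ((ι → Col) × ℤ)) : pm (Equiv.refl ι) l = l := by
  simp [pm, Function.comp_def]

theorem colMoves_swap_aux : ∀ x y z x' y' z' : Bool,
    cle (mkCol x' y' z') (mkCol x y z) = true →
    colMoves (csz (mkCol x y z) - csz (mkCol x' y' z')) (mkCol x y z) (mkCol x' y' z')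
      = [(mkCol x' y' z', mkCol x y z, 0)] := by
  decide

theorem colMoves_swap (a b : Col) (k : ℕ) (h : cle b a = true) (hk : csz a = csz b + k) :
    colMoves k a b = [(b, a, 0)] := by
  have := colMoves_swap_aux (a 0) (a 1) (a 2) (b 0) (b 1) (b 2)
  rw [← mkCol_eta, ← mkCol_eta] at this
  have e1 : csz a - csz b = k := by omega
  rw [e1] at this
  exact this h

theorem gopG_swap {ι : Type} [DecidableEq ι] (a b : ι) (k : ℕ)
    (l : List ((ι → Col) × ℤ)) (h : ∀ t ∈ l, cle (t.1 b) (t.1 a) = true ∧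
      csz (t.1 a) = csz (t.1 b) + k) : gopG a b k l = pm (Equiv.swap a b) l := by
  induction l with
  | nil => rfl
  | cons t l ih =>
    have : gopG a b k (t :: l) = ((colMoves k (t.1 a) (t.1 b)).map fun r =>
        (Function.update (Function.update t.1 a r.1) b r.2.1, t.2 + r.2.2)) ++ gopG a b k l := by
      simp [gopG]
    rw [this, ih (fun t ht => h t (List.mem_cons_of_mem _ ht))]
    obtain ⟨h1, h2⟩ := h t (List.mem_cons_self)
    rw [colMoves_swap _ _ _ h1 h2]
    simp only [pm, List.map_cons, List.map_nil, List.singleton_append, add_zero]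
    congr 2
    funext c
    simp only [Function.comp, Equiv.symm_swap, Function.update_apply, Equiv.swap_apply_def]
    by_cases hb : c = b
    · subst hb
      by_cases ha : c = a
      · subst ha; simp
      · simp [ha]
    · by_cases ha : c = a
      · subst ha; simp [hb]
      · simp [ha, hb]

theorem cle_of_cmp_lt (a b : Col) (h : cmpC a b = true) (hlt : csz a < csz b) :
    cle a b = true := by
  have : ∀ x y z x' y' z' : Bool, cmpC (mkCol x y z) (mkCol x' y' z') = true →
    csz (mkCol x y z) < csz (mkCol x' y' z') → cle (mkCol x y z) (mkCol x' y' z') = true := by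
    decide
  have := this (a 0) (a 1) (a 2) (b 0) (b 1) (b 2)
  rw [← mkCol_eta, ← mkCol_eta] at this
  exact this h hlt

theorem exists_ascent {e : ℕ} (a b : Fin e) (sz : Fin e → ℕ) (hab : a.1 + 1 < b.1)
    (H : ∀ c, a < c → c < b → sz c < sz b ∨ sz a < sz c) :
    ∃ j j' : Fin e, j'.1 = j.1 + 1 ∧ a ≤ j ∧ j' ≤ b ∧ sz j < sz j' := by
  by_contra hcon
  push Not at hcon
  have hb := b.2
  have key : ∀ n, a.1 + 1 ≤ n → ∀ h : n ≤ b.1,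
      sz ⟨n, by omega⟩ ≤ sz ⟨a.1 + 1, by omega⟩ := by
    intro n hn
    induction n, hn using Nat.le_induction with
    | base => intro _; exact le_refl _
    | succ n hn ih =>
      intro h
      have h1 := ih (by omega)
      have h2 := hcon ⟨n, by omega⟩ ⟨n + 1, by omega⟩ rfl (by rw [Fin.le_def]; simp; omega)
        (by rw [Fin.le_def]; exact h)
      omega
  have h1 := key b.1 (by omega) (le_refl _)
  have h2 := hcon a ⟨a.1 + 1, by omega⟩ rfl (le_refl _) (by rw [Fin.le_def]; simp; omega)
  have h3 := H ⟨a.1 + 1, by omega⟩ (by rw [Fin.lt_def]; simp) (by rw [Fin.lt_def]; simp; omega)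
  simp only [Fin.eta] at h1
  omega

theorem together {e : ℕ} : ∀ (n : ℕ) (l : List ((Fin e → Col) × ℤ)) (a b : Fin e)
    (sz : Fin e → ℕ) (_ : ∑ c, c.1 * sz c < n) (_ : a < b)
    (_ : ∀ t ∈ l, ∀ c, a ≤ c → c ≤ b → csz (t.1 c) = sz c)
    (_ : ∀ t ∈ l, ∀ c d, a ≤ c → c ≤ b → a ≤ d → d ≤ b → c ≠ d → ¬ (c = a ∧ d = b) →
      ¬ (c = b ∧ d = a) → sz c ≠ sz d → cmpC (t.1 c) (t.1 d) = true)
    (_ : ∀ c, a < c → c < b → sz c < sz b ∨ sz a < sz c),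
    ∃ π : Equiv.Perm (Fin e), (π b).1 = (π a).1 + 1 ∧ a ≤ π a ∧ π b ≤ b ∧
      (∀ c, ¬ (a ≤ c ∧ c ≤ b) → π c = c) ∧
      (∀ c, a ≤ c → c < π a → sz a < sz (π.symm c)) ∧
      (∀ c, c ≤ b → π b < c → sz (π.symm c) < sz b) ∧
      (Reach (pm π l) → Reach l) := by
  intro n
  induction n with
  | zero => intro l a b sz h; omega
  | succ n ih =>
    intro l a b sz hsum hab hsz hcmp H
    by_cases hadj : b.1 = a.1 + 1
    · exact ⟨Equiv.refl _, hadj, le_refl _, le_refl _, fun _ _ => rfl,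
        fun c h1 h2 => absurd h1 (not_le.2 h2), fun c h1 h2 => absurd h1 (not_le.2 h2), by rw [pm_refl]; exact id⟩
    have hab' : a.1 + 1 < b.1 := by rw [Fin.lt_def] at hab; omega
    obtain ⟨j, j', hj', haj, hjb, hlt⟩ := exists_ascent a b sz hab' H
    set τ := Equiv.swap j j' with hτdef
    have hττ : ∀ c, τ (τ c) = c := by intro c; simp [hτdef]
    have hjj : j ≠ j' := by
      intro h; rw [h] at hlt; omega
    have hτ : ∀ c, (τ c = c ∧ c ≠ j ∧ c ≠ j') ∨ (c = j ∧ τ c = j') ∨ (c = j' ∧ τ c = j) := by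
      intro c
      by_cases h1 : c = j
      · subst h1; right; left; simp [hτdef]
      · by_cases h2 : c = j'
        · subst h2; right; right; simp [hτdef]
        · left; exact ⟨Equiv.swap_apply_of_ne_of_ne h1 h2, h1, h2⟩
    have hn : ∀ c, ((τ c).1 = c.1 ∧ c.1 ≠ j.1 ∧ c.1 ≠ j'.1) ∨ (c.1 = j.1 ∧ (τ c).1 = j'.1) ∨
        (c.1 = j'.1 ∧ (τ c).1 = j.1) := by
      intro c
      rcases hτ c with ⟨h, h1, h2⟩ | ⟨h, h1⟩ | ⟨h, h1⟩
      · exact Or.inl ⟨congrArg Fin.val h, fun h => h1 (Fin.ext h), fun h => h2 (Fin.ext h)⟩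
      · exact Or.inr (Or.inl ⟨congrArg Fin.val h, congrArg Fin.val h1⟩)
      · exact Or.inr (Or.inr ⟨congrArg Fin.val h, congrArg Fin.val h1⟩)
    rw [Fin.le_def] at haj hjb
    have hpres : ∀ c, a ≤ c → c ≤ b → a ≤ τ c ∧ τ c ≤ b := by
      intro c h1 h2
      rw [Fin.le_def] at *
      rw [Fin.le_def]
      have := hn c
      omega
    have hna := hn a
    have hnb := hn b
    have ha2 : a ≤ τ a := by
      rw [Fin.le_def]; omega
    have hb2 : τ b ≤ b := by
      rw [Fin.le_def]; omega
    have hab2 : τ a < τ b := by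
      rw [Fin.lt_def]; omega
    have hpres2 : ∀ c, τ a ≤ c → c ≤ τ b → a ≤ τ c ∧ τ c ≤ b := fun c h1 h2 =>
      hpres c (le_trans ha2 h1) (le_trans h2 hb2)
    have hl2 : ∀ t ∈ pm τ l, ∃ t0 ∈ l, t.1 = t0.1 ∘ τ := by
      intro t ht
      simp only [pm, List.mem_map] at ht
      obtain ⟨t0, h0, rfl⟩ := ht
      exact ⟨t0, h0, by simp [hτdef]⟩
    have hsum2 : ∑ c, c.1 * (sz ∘ τ) c < n := by
      have h1 : ∑ c : Fin e, c.1 * (sz ∘ τ) c = ∑ c : Fin e, (τ c).1 * sz c := by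
        rw [← Equiv.sum_comp τ]
        apply Finset.sum_congr rfl
        intro c _
        simp [hττ]
      have h2 : ∀ f : Fin e → ℕ, ∑ c, f c =
          f j + (f j' + ∑ c ∈ (Finset.univ.erase j).erase j', f c) := by
        intro f
        rw [← Finset.add_sum_erase Finset.univ f (Finset.mem_univ j),
          ← Finset.add_sum_erase (Finset.univ.erase j) f (a := j')]
        simp [hjj.symm]
      rw [h1]
      have h3 : ∑ c ∈ (Finset.univ.erase j).erase j', (τ c).1 * sz c =
          ∑ c ∈ (Finset.univ.erase j).erase j', c.1 * sz c := by
        apply Finset.sum_congr rfl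
        intro c hc
        simp only [Finset.mem_erase, Finset.mem_univ, and_true] at hc
        rcases hτ c with h | h | h
        · rw [h.1]
        · exact absurd h.1 hc.2
        · exact absurd h.1 hc.1
      rw [h2] at hsum ⊢
      rw [h3]
      have e1 : τ j = j' := by simp [hτdef]
      have e2 : τ j' = j := by simp [hτdef]
      rw [e1, e2, hj']
      rw [hj'] at hsum
      nlinarith
    obtain ⟨π, h1, h2, h3, h4, h6, h7, h5⟩ := ih (pm τ l) (τ a) (τ b) (sz ∘ τ) hsum2 hab2
      (by
        intro t ht c hc1 hc2
        obtain ⟨t0, ht0, e0⟩ := hl2 t ht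
        rw [e0]
        exact hsz t0 ht0 _ (hpres2 c hc1 hc2).1 (hpres2 c hc1 hc2).2)
      (by
        intro t ht c d hc1 hc2 hd1 hd2 hcd hn1 hn2 hszne
        obtain ⟨t0, ht0, e0⟩ := hl2 t ht
        rw [e0]
        refine hcmp t0 ht0 _ _ (hpres2 c hc1 hc2).1 (hpres2 c hc1 hc2).2
          (hpres2 d hd1 hd2).1 (hpres2 d hd1 hd2).2 (fun h => hcd (τ.injective h)) ?_ ?_ hszne
        · rintro ⟨q1, q2⟩
          exact hn1 ⟨by rw [← q1, hττ], by rw [← q2, hττ]⟩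
        · rintro ⟨q1, q2⟩
          exact hn2 ⟨by rw [← q1, hττ], by rw [← q2, hττ]⟩)
      (by
        intro c hc1 hc2
        have hp := hpres2 c hc1.le hc2.le
        have q1 : τ c ≠ a := by
          intro h; rw [← h, hττ] at hc1; exact lt_irrefl _ hc1
        have q2 : τ c ≠ b := by
          intro h; rw [← h, hττ] at hc2; exact lt_irrefl _ hc2
        have := H (τ c) (lt_of_le_of_ne hp.1 q1.symm) (lt_of_le_of_ne hp.2 q2)
        simpa [hττ] using this)
    have hs4 : ∀ c, ¬ (τ a ≤ c ∧ c ≤ τ b) → π.symm c = c := by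
      intro c hc
      rw [Equiv.symm_apply_eq, h4 c hc]
    have hst : ∀ c, (τ.trans π).symm c = τ (π.symm c) := by
      intro c
      rw [Equiv.symm_apply_eq]
      simp [hττ]
    refine ⟨τ.trans π, h1, le_trans ha2 h2, le_trans h3 hb2, ?_, ?_, ?_, ?_⟩
    · intro c hc
      have : τ c = c := by
        rcases hτ c with h | h | h
        · exact h.1
        · exact absurd (by rw [Fin.le_def, Fin.le_def, h.1]; omega) hc
        · exact absurd (by rw [Fin.le_def, Fin.le_def, h.1]; omega) hc
      simp only [Equiv.trans_apply]
      rw [this]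
      apply h4
      rintro ⟨q1, q2⟩
      exact hc ⟨le_trans ha2 q1, le_trans q2 hb2⟩
    · intro c hc1 hc2
      rw [hst]
      by_cases hc : τ a ≤ c
      · have := h6 c hc hc2
        simpa [hττ] using this
      · rw [hs4 c (fun h => hc h.1)]
        have hnc := hn c
        rw [Fin.le_def] at hc hc1
        have q1 : a = j := Fin.ext (by omega)
        have q2 : c = j := Fin.ext (by omega)
        rw [q1, q2]
        have e1 : τ j = j' := by simp [hτdef]
        rw [e1]; exact hlt
    · intro c hc1 hc2
      rw [hst]
      by_cases hc : c ≤ τ b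
      · have := h7 c hc hc2
        simpa [hττ] using this
      · rw [hs4 c (fun h => hc h.2)]
        have hnc := hn c
        rw [Fin.le_def] at hc hc1
        have q1 : b = j' := Fin.ext (by omega)
        have q2 : c = j' := Fin.ext (by omega)
        rw [q1, q2]
        have e1 : τ j' = j := by simp [hτdef]
        rw [e1]; exact hlt
    · intro hr
      rw [← pm_pm] at hr
      have hr2 := h5 hr
      have hs := reach_step _ hr2 j j' hj' (sz j' - sz j) (by omega)
      rw [gopG_swap, ← hτdef, pm_pm] at hs
      · have : τ.trans τ = Equiv.refl _ := by
          ext c; simp [hττ]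
        rwa [this, pm_refl] at hs
      · intro t ht
        obtain ⟨t0, ht0, e0⟩ := hl2 t ht
        rw [e0]
        have e1 : τ j = j' := by simp [hτdef]
        have e2 : τ j' = j := by simp [hτdef]
        simp only [Function.comp, e1, e2]
        have s1 := hsz t0 ht0 j (by rw [Fin.le_def]; omega) (by rw [Fin.le_def]; omega)
        have s2 := hsz t0 ht0 j' (by rw [Fin.le_def]; omega) (by rw [Fin.le_def]; omega)
        refine ⟨cle_of_cmp_lt _ _ ?_ (by omega), by omega⟩
        refine hcmp t0 ht0 _ _ (by rw [Fin.le_def]; omega) (by rw [Fin.le_def]; omega)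
          (by rw [Fin.le_def]; omega) (by rw [Fin.le_def]; omega) hjj ?_ ?_ hlt.ne
        · rintro ⟨q1, q2⟩
          have := congrArg Fin.val q1
          have := congrArg Fin.val q2
          omega
        · rintro ⟨q1, q2⟩
          have := congrArg Fin.val q1
          have := congrArg Fin.val q2
          omega

/-! ### Embedding words into matrices -/

def ext {e m : ℕ} (pos : Fin m → Fin e) (base : Fin e → Col) (t : (Fin m → Col) × ℤ) :
    (Fin e → Col) × ℤ := (Function.extend pos t.1 base, t.2)

theorem extend_update {e m : ℕ} (pos : Fin m → Fin e) (hp : Function.Injective pos)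
    (base : Fin e → Col) (w : Fin m → Col) (a : Fin m) (v : Col) :
    Function.extend pos (Function.update w a v) base =
      Function.update (Function.extend pos w base) (pos a) v := by
  funext c
  by_cases h : ∃ j, pos j = c
  · obtain ⟨j, rfl⟩ := h
    rw [hp.extend_apply]
    simp only [Function.update_apply, hp.extend_apply, hp.eq_iff]
  · rw [Function.extend_apply' _ _ _ h, Function.update_of_ne, Function.extend_apply' _ _ _ h]
    rintro rfl
    exact h ⟨a, rfl⟩

theorem gopG_ext {e m : ℕ} (pos : Fin m → Fin e) (hp : Function.Injective pos)
    (base : Fin e → Col) (a b : Fin m) (k : ℕ) (l : List ((Fin m → Col) × ℤ)) :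
    (gopG a b k l).map (ext pos base) = gopG (pos a) (pos b) k (l.map (ext pos base)) := by
  simp only [gopG, List.map_flatMap, List.flatMap_map, List.map_map]
  congr 1
  funext t
  simp only [ext, hp.extend_apply]
  apply List.map_congr_left
  intro r _
  simp only [Function.comp]
  rw [ext, extend_update _ hp, extend_update _ hp]

theorem pm_ext {e m : ℕ} (pos : Fin m → Fin e) (base : Fin e → Col) (π : Equiv.Perm (Fin e))
    (l : List ((Fin m → Col) × ℤ)) (hp : Function.Injective pos) :
    pm π (l.map (ext pos base)) = l.map (ext (π ∘ pos) (base ∘ π.symm)) := by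
  simp only [pm, List.map_map]
  apply List.map_congr_left
  intro t _
  simp only [Function.comp, ext]
  congr 1
  funext c
  by_cases h : ∃ j, pos j = π.symm c
  · obtain ⟨j, hj⟩ := h
    have hc : c = (π ∘ pos) j := by simp [hj]
    have hi : Function.Injective (π ∘ pos) := π.injective.comp hp
    rw [Function.comp_apply, ← hj, hp.extend_apply, hc, hi.extend_apply]
  · have h' : ¬ ∃ j, (π ∘ pos) j = c := by
      rintro ⟨j, rfl⟩
      exact h ⟨j, by simp⟩
    rw [Function.comp_apply, Function.extend_apply' _ _ _ h, Function.extend_apply' _ _ _ h']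
    rfl

def goodS {m : ℕ} (a b : Fin m) (sa sb : ℕ) (l : List ((Fin m → Col) × ℤ)) (vals : List Col) :
    Bool :=
  (l.all fun t => (csz (t.1 a) == sa) && (csz (t.1 b) == sb) &&
    vals.all fun v => (csz v == sa || cmpC v (t.1 a)) && (csz v == sb || cmpC v (t.1 b))) &&
  (vals.all fun v => (decide (csz v < sb) || decide (sa < csz v)) && vals.all fun w => cmpC v w)

theorem core {e m : ℕ} (l : List ((Fin m → Col) × ℤ)) (a b : Fin m) (sa sb : ℕ)
    (vals : List Col) (hg : goodS a b sa sb l vals = true)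
    (pos : Fin m → Fin e) (hp : Function.Injective pos) (base : Fin e → Col)
    (base0 : Fin e → Col)
    (hlt : pos a < pos b) (hbt : ∀ c, pos a < c → c < pos b → base0 c ∈ vals ∧
      ∀ t ∈ l, Function.extend pos t.1 base c = base0 c) :
    ∃ π : Equiv.Perm (Fin e), (π (pos b)).1 = (π (pos a)).1 + 1 ∧ pos a ≤ π (pos a) ∧
      π (pos b) ≤ pos b ∧ (∀ c, ¬ (pos a ≤ c ∧ c ≤ pos b) → π c = c) ∧
      (∀ c, pos a < π.symm c → π.symm c < pos b → c < π (pos a) → sa < csz (base0 (π.symm c))) ∧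
      (∀ c, pos a < π.symm c → π.symm c < pos b → π (pos b) < c → csz (base0 (π.symm c)) < sb) ∧
      (Reach (l.map (ext (π ∘ pos) (base ∘ π.symm))) → Reach (l.map (ext pos base))) := by
  simp only [goodS, Bool.and_eq_true, List.all_eq_true, beq_iff_eq, Bool.or_eq_true,
    decide_eq_true_eq] at hg
  obtain ⟨hg1, hg2⟩ := hg
  let sz : Fin e → ℕ := fun c => if c = pos a then sa else if c = pos b then sb else csz (base0 c)
  have hne : pos b ≠ pos a := hlt.ne'
  have sza : sz (pos a) = sa := by simp [sz]
  have szb : sz (pos b) = sb := by simp [sz, hne]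
  have szc : ∀ c, pos a < c → c < pos b → sz c = csz (base0 c) := by
    intro c h1 h2
    simp [sz, h1.ne', h2.ne]
  have split : ∀ c, pos a ≤ c → c ≤ pos b → c = pos a ∨ c = pos b ∨ (pos a < c ∧ c < pos b) := by
    intro c h1 h2
    rcases h1.eq_or_lt with h | h
    · exact Or.inl h.symm
    · rcases h2.eq_or_lt with h' | h'
      · exact Or.inr (Or.inl h')
      · exact Or.inr (Or.inr ⟨h, h'⟩)
  obtain ⟨π, h1, h2, h3, h4, h6, h7, h5⟩ := together _ (l.map (ext pos base)) (pos a) (pos b) sz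
    (Nat.lt_succ_self _) hlt
    (by
      intro t ht c hc1 hc2
      obtain ⟨t0, ht0, rfl⟩ := List.mem_map.1 ht
      rcases split c hc1 hc2 with rfl | rfl | h
      · rw [sza]; simp only [ext, hp.extend_apply]; exact (hg1 t0 ht0).1.1
      · rw [szb]; simp only [ext, hp.extend_apply]; exact (hg1 t0 ht0).1.2
      · rw [szc c h.1 h.2]; simp only [ext]; rw [(hbt c h.1 h.2).2 t0 ht0])
    (by
      intro t ht c d hc1 hc2 hd1 hd2 hcd hn1 hn2 hszne
      obtain ⟨t0, ht0, rfl⟩ := List.mem_map.1 ht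
      simp only [ext]
      rcases split c hc1 hc2 with rfl | rfl | h
      · rcases split d hd1 hd2 with rfl | rfl | h'
        · exact absurd rfl hcd
        · exact absurd ⟨rfl, rfl⟩ hn1
        · rw [(hbt d h'.1 h'.2).2 t0 ht0, hp.extend_apply, cmpC_comm]
          rw [sza, szc d h'.1 h'.2] at hszne
          exact (((hg1 t0 ht0).2 _ (hbt d h'.1 h'.2).1).1).resolve_left hszne.symm
      · rcases split d hd1 hd2 with rfl | rfl | h'
        · exact absurd ⟨rfl, rfl⟩ hn2
        · exact absurd rfl hcd
        · rw [(hbt d h'.1 h'.2).2 t0 ht0, hp.extend_apply, cmpC_comm]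
          rw [szb, szc d h'.1 h'.2] at hszne
          exact (((hg1 t0 ht0).2 _ (hbt d h'.1 h'.2).1).2).resolve_left hszne.symm
      · rw [(hbt c h.1 h.2).2 t0 ht0]
        rcases split d hd1 hd2 with rfl | rfl | h'
        · rw [sza, szc c h.1 h.2] at hszne
          rw [hp.extend_apply]
          exact (((hg1 t0 ht0).2 _ (hbt c h.1 h.2).1).1).resolve_left hszne
        · rw [szb, szc c h.1 h.2] at hszne
          rw [hp.extend_apply]
          exact (((hg1 t0 ht0).2 _ (hbt c h.1 h.2).1).2).resolve_left hszne
        · rw [(hbt d h'.1 h'.2).2 t0 ht0]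
          exact (hg2 _ (hbt c h.1 h.2).1).2 _ (hbt d h'.1 h'.2).1)
    (by
      intro c hc1 hc2
      rw [sza, szb, szc c hc1 hc2]
      exact (hg2 _ (hbt c hc1 hc2).1).1)
  rw [pm_ext _ _ _ _ hp] at h5
  have hin : ∀ c, pos a < π.symm c → π.symm c < pos b → pos a ≤ c ∧ c ≤ pos b := by
    intro c q1 q2
    by_contra hcon
    have q3 : π.symm c = c := by
      rw [Equiv.symm_apply_eq]; exact (h4 c hcon).symm
    rw [q3] at q1 q2
    exact hcon ⟨q1.le, q2.le⟩
  refine ⟨π, h1, h2, h3, h4, ?_, ?_, h5⟩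
  · intro c q1 q2 q3
    have := h6 c (hin c q1 q2).1 q3
    rwa [sza, szc _ q1 q2] at this
  · intro c q1 q2 q3
    have := h7 c (hin c q1 q2).2 q3
    rwa [szb, szc _ q1 q2] at this

theorem stage {e m : ℕ} (l : List ((Fin m → Col) × ℤ)) (a b : Fin m) (k : ℕ) (hk : 0 < k)
    (sa sb : ℕ) (vals : List Col) (hg : goodS a b sa sb (gopG a b k l) vals = true)
    (pos : Fin m → Fin e) (hp : Function.Injective pos) (base : Fin e → Col)
    (hlt : pos a < pos b)
    (hbt : ∀ c, pos a < c → c < pos b → (∀ j, pos j ≠ c) ∧ base c ∈ vals) :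
    ∃ (pos' : Fin m → Fin e) (base' : Fin e → Col), Function.Injective pos' ∧
      (∀ j, j ≠ a → j ≠ b → pos' j = pos j) ∧ pos a ≤ pos' a ∧ (pos' b).1 = (pos' a).1 + 1 ∧
      pos' b ≤ pos b ∧ (∀ c, ∃ d, base' c = base d) ∧
      (∀ c, ¬ (pos a ≤ c ∧ c ≤ pos b) → base' c = base c) ∧
      (∀ c, pos a ≤ c → c ≤ pos b → c ≠ pos' a → c ≠ pos' b → base' c ∈ vals ∧
        (c < pos' a → sa < csz (base' c)) ∧ (pos' b < c → csz (base' c) < sb)) ∧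
      (Reach (l.map (ext pos' base')) → Reach ((gopG a b k l).map (ext pos base))) := by
  obtain ⟨π, h1, h2, h3, h4, h6, h7, h5⟩ := core (gopG a b k l) a b sa sb vals hg pos hp base base hlt
    (by
      intro c h1 h2
      obtain ⟨h3, h4⟩ := hbt c h1 h2
      refine ⟨h4, fun t _ => Function.extend_apply' _ _ _ ?_⟩
      rintro ⟨j, hj⟩
      exact h3 j hj)
  have hsymm : ∀ c, ¬ (pos a ≤ c ∧ c ≤ pos b) → π.symm c = c := by
    intro c hc
    rw [Equiv.symm_apply_eq, h4 c hc]
  refine ⟨π ∘ pos, base ∘ π.symm, π.injective.comp hp, ?_, h2, h1, h3, fun c => ⟨_, rfl⟩, ?_, ?_, ?_⟩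
  · intro j hja hjb
    apply h4
    rintro ⟨q1, q2⟩
    have q1' : pos a < pos j := lt_of_le_of_ne q1 (fun h => hja (hp h).symm)
    have q2' : pos j < pos b := lt_of_le_of_ne q2 (fun h => hjb (hp h))
    exact (hbt _ q1' q2').1 j rfl
  · intro c hc
    simp [hsymm c hc]
  · intro c hc1 hc2 hca hcb
    have hin : pos a ≤ π.symm c ∧ π.symm c ≤ pos b := by
      by_contra hcon
      have := h4 _ hcon
      rw [Equiv.apply_symm_apply] at this
      rw [← this] at hcon
      exact hcon ⟨hc1, hc2⟩
    have q1 : π.symm c ≠ pos a := by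
      intro h; apply hca; simp [← h]
    have q2 : π.symm c ≠ pos b := by
      intro h; apply hcb; simp [← h]
    have q3 := lt_of_le_of_ne hin.1 q1.symm
    have q4 := lt_of_le_of_ne hin.2 q2
    exact ⟨(hbt _ q3 q4).2, fun h => h6 c q3 q4 h, fun h => h7 c q3 q4 h⟩
  · intro hr
    apply h5
    rw [gopG_ext _ (π.injective.comp hp)]
    exact reach_step _ hr _ _ h1 k hk

theorem stage0 {e m : ℕ} (w : Fin m → Col) (a b : Fin m) (k : ℕ) (hk : 0 < k)
    (sa sb : ℕ) (vals : List Col) (hg : goodS a b sa sb (gopG a b k [(w, 0)]) vals = true)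
    (pos : Fin m → Fin e) (hp : Function.Injective pos) (base : Fin e → Col)
    (vs : List Col) (hvs : (vs.all fun v => vs.all fun w => cmpC v w) = true)
    (hw : ∀ j, w j ∈ vs) (hbase : ∀ c, base c ∈ vs)
    (hlt : pos a < pos b)
    (hbt : ∀ c, pos a < c → c < pos b → Function.extend pos w base c ∈ vals) :
    Reach ((gopG a b k [(w, 0)]).map (ext pos base)) := by
  obtain ⟨π, h1, h2, h3, h4, h6, h7, h5⟩ := core (gopG a b k [(w, 0)]) a b sa sb vals hg pos hp base
    (Function.extend pos w base) hlt
    (by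
      intro c h1 h2
      refine ⟨hbt c h1 h2, ?_⟩
      intro t ht
      simp only [gopG, List.flatMap_cons, List.flatMap_nil, List.append_nil, List.mem_map] at ht
      obtain ⟨r, _, rfl⟩ := ht
      rw [extend_update _ hp, extend_update _ hp, Function.update_of_ne h2.ne,
        Function.update_of_ne h1.ne'])
  apply h5
  rw [gopG_ext _ (π.injective.comp hp)]
  apply reach_step _ _ _ _ h1 k hk
  simp only [List.map_cons, List.map_nil, ext]
  apply reach_base
  have hmem : ∀ c, Function.extend (π ∘ pos) w (base ∘ π.symm) c ∈ vs := by
    intro c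
    by_cases h : ∃ j, (π ∘ pos) j = c
    · obtain ⟨j, rfl⟩ := h
      rw [(π.injective.comp hp).extend_apply]
      exact hw j
    · rw [Function.extend_apply' _ _ _ h]
      exact hbase _
  simp only [List.all_eq_true] at hvs
  intro c d
  exact hvs _ (hmem c) _ (hmem d)

/-! ### Column types by role -/

def role : Fin 6 → Fin 3 → Fin 3 :=
  ![![0, 1, 2], ![2, 0, 1], ![1, 2, 0], ![1, 0, 2], ![0, 2, 1], ![2, 1, 0]]

/-- entry in a column: `inP`, `inQ` the type of the column, `isc`, `ish` the special marks. -/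
def cell (u : Fin 6) (inP inQ isc ish : Bool) : Col := fun s =>
  match role u s with
  | 0 => isc
  | 1 => bif (isc && ish) then inP else ((inP && !isc) || ish)
  | 2 => (inP || inQ) && !ish

def cX : Col := fun _ => false
def cT : Col := fun _ => true
def cP (u : Fin 6) : Col := cell u true false false false
def cQ (u : Fin 6) : Col := cell u false true false false

def matC {e : ℕ} (u : Fin 6) (P Q : Finset (Fin e)) (c h : Fin e) : Fin e → Col := fun x =>
  cell u (decide (x ∈ P)) (decide (x ∈ Q)) (decide (x = c)) (decide (x = h))

def bas {e : ℕ} (u : Fin 6) (P Q : Finset (Fin e)) : Fin e → Col := fun x =>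
  cell u (decide (x ∈ P)) (decide (x ∈ Q)) false false

def wC {m : ℕ} (u : Fin 6) (kd : Fin m → Bool) (c h : Fin m) : Fin m → Col := fun j =>
  cell u (kd j) (!(kd j)) (j == c) (j == h)

def weq {m : ℕ} (w w' : Fin m → Col) : Bool := (List.finRange m).all fun j => ceq (w j) (w' j)

def vld {m : ℕ} (kd : Fin m → Bool) (c h : Fin m) : Bool := (c == h) || (kd c && !(kd h))

def check {m : ℕ} (u : Fin 6) (kd : Fin m → Bool) (l : List ((Fin m → Col) × ℤ)) (c h : Fin m) :
    Bool :=
  ((l.filter (fun t => weq t.1 (wC u kd c h))).map (fun t => t.2) == [0]) &&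
  (l.all fun t => weq t.1 (wC u kd c h) || decide (1 ≤ t.2)) &&
  (l.all fun t => (List.finRange m).any fun c' => (List.finRange m).any fun h' =>
    vld kd c' h' && weq t.1 (wC u kd c' h'))

/-! ### The lists -/
def k1a : List ((Fin 2 → Col) × ℤ) := gopG 0 1 1 [(![cT, cX], 0)]
def k1b : List ((Fin 2 → Col) × ℤ) := gopG 0 1 2 [(![cT, cX], 0)]
def k2a (u : Fin 6) : List ((Fin 3 → Col) × ℤ) := gopG 0 1 1 (gopG 1 2 1 [(![cT, cP u, cX], 0)])
def k2b (u : Fin 6) : List ((Fin 3 → Col) × ℤ) := gopG 1 2 1 (gopG 0 2 1 [(![cP u, cT, cX], 0)])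
def k3a (u : Fin 6) : List ((Fin 3 → Col) × ℤ) := gopG 1 2 1 (gopG 0 1 1 [(![cT, cQ u, cX], 0)])
def k3b (u : Fin 6) : List ((Fin 3 → Col) × ℤ) := gopG 0 1 1 (gopG 0 2 1 [(![cT, cX, cQ u], 0)])
def k4 (u : Fin 6) : List ((Fin 4 → Col) × ℤ) :=
  gopG 0 1 1 (gopG 2 3 1 [(![cT, cQ u, cP u, cX], 0)])
def k5a (u : Fin 6) : List ((Fin 4 → Col) × ℤ) := gopG 1 2 1 (k4 u)
def k5b (u : Fin 6) : List ((Fin 4 → Col) × ℤ) :=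
  gopG 0 1 1 (gopG 1 2 1 (gopG 1 3 1 [(![cP u, cT, cX, cQ u], 0)]))

set_option maxRecDepth 100000

theorem g1a : goodS 0 1 2 1 k1a [cX] = true := by decide
theorem g1b : goodS 0 1 1 2 k1b [cX] = true := by decide
theorem g2a1 : ∀ u, goodS 0 1 2 2 (k2a u) [cX] = true := by decide
theorem g2a2 : ∀ u, goodS 1 2 1 1 (gopG 1 2 1 [((![cT, cP u, cX] : Fin 3 → Col), 0)]) [cX, cP u] = true := by decide
theorem g2b1 : ∀ u, goodS 1 2 2 2 (k2b u) [cX] = true := by decide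
theorem g2b2 : ∀ u, goodS 0 2 1 1 (gopG 0 2 1 [((![cP u, cT, cX] : Fin 3 → Col), 0)]) [cX, cP u, cT] = true := by decide
theorem g3a1 : ∀ u, goodS 1 2 1 1 (k3a u) [cX] = true := by decide
theorem g3a2 : ∀ u, goodS 0 1 2 2 (gopG 0 1 1 [((![cT, cQ u, cX] : Fin 3 → Col), 0)]) [cX, cQ u] = true := by decide
theorem g3b1 : ∀ u, goodS 0 1 1 1 (k3b u) [cX] = true := by decide
theorem g3b2 : ∀ u, goodS 0 2 2 2 (gopG 0 2 1 [((![cT, cX, cQ u] : Fin 3 → Col), 0)]) [cX, cQ u] = true := by decide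
theorem g41 : ∀ u, goodS 0 1 2 2 (k4 u) [cX, cQ u] = true := by decide
theorem g42 : ∀ u, goodS 2 3 1 1 (gopG 2 3 1 [((![cT, cQ u, cP u, cX] : Fin 4 → Col), 0)]) [cX, cP u] = true := by decide
theorem g5a1 : ∀ u, goodS 1 2 1 2 (k5a u) [cX] = true := by decide
theorem g5b1 : ∀ u, goodS 0 1 1 2 (k5b u) [cX, cP u] = true := by decide
theorem g5b2 : ∀ u, goodS 1 2 1 1 (gopG 1 2 1 (gopG 1 3 1 [((![cP u, cT, cX, cQ u] : Fin 4 → Col), 0)])) [cX] = true := by decide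
theorem g5b3 : ∀ u, goodS 1 3 2 2 (gopG 1 3 1 [((![cP u, cT, cX, cQ u] : Fin 4 → Col), 0)]) [cX, cQ u] = true := by decide

/-! ### Reading off coefficients -/

theorem isVN_zero : IsVNPoly 0 := ⟨0, by simp, by simp⟩

theorem isVN_T (n : ℤ) (hn : 1 ≤ n) : IsVNPoly (LaurentPolynomial.T n) := by
  refine ⟨Finsupp.single n 1, ?_, ?_⟩
  · intro k hk
    have := Finsupp.support_single_subset hk
    simp only [Finset.mem_singleton] at this
    omega
  · rw [Finsupp.sum_single_index] <;> simp

theorem isVN_add (a b : LaurentPolynomial ℤ) (ha : IsVNPoly a) (hb : IsVNPoly b) :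
    IsVNPoly (a + b) := by
  obtain ⟨f, hf, rfl⟩ := ha
  obtain ⟨g, hg, rfl⟩ := hb
  refine ⟨f + g, ?_, ?_⟩
  · intro n hn
    have := Finsupp.support_add hn
    rw [Finset.mem_union] at this
    rcases this with h | h
    · exact hf n h
    · exact hg n h
  · rw [Finsupp.sum_add_index']
    · intro n; simp
    · intro n x y; push_cast; rw [add_mul]

theorem Vec_apply_cons {e : ℕ} (t) (l : List ((Fin e → Col) × ℤ)) (M) :
    Vec (t :: l) M = (if fl t.1 = M then LaurentPolynomial.T t.2 else 0) + Vec l M := by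
  rw [Vec_cons, Finsupp.add_apply, Finsupp.single_apply]

theorem Vec_isVN {e : ℕ} (l : List ((Fin e → Col) × ℤ)) (M)
    (h : ∀ t ∈ l, fl t.1 = M → 1 ≤ t.2) : IsVNPoly (Vec l M) := by
  induction l with
  | nil => simpa [Vec_nil] using isVN_zero
  | cons t l ih =>
    rw [Vec_apply_cons]
    apply isVN_add
    · split_ifs with h'
      · exact isVN_T _ (h t List.mem_cons_self h')
      · exact isVN_zero
    · exact ih fun t ht => h t (List.mem_cons_of_mem _ ht)

theorem Vec_ne_zero {e : ℕ} (l : List ((Fin e → Col) × ℤ)) (M) (h : Vec l M ≠ 0) :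
    ∃ t ∈ l, fl t.1 = M := by
  by_contra hcon
  push Not at hcon
  apply h
  induction l with
  | nil => simp [Vec_nil]
  | cons t l ih =>
    have h2 : Vec l M = 0 := by
      by_contra h3
      exact h3 (ih h3 fun t ht => hcon t (List.mem_cons_of_mem _ ht))
    rw [Vec_apply_cons, if_neg (hcon t List.mem_cons_self), h2, add_zero]

theorem Vec_filter {e : ℕ} (l : List ((Fin e → Col) × ℤ)) (N : Fin e → Col) :
    Vec l (fl N) = (((l.filter (fun t => decide (t.1 = N))).map (fun t => t.2)).map
      (fun n => (LaurentPolynomial.T n : LaurentPolynomial ℤ))).sum := by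
  induction l with
  | nil => simp [Vec_nil]
  | cons t l ih =>
    rw [Vec_apply_cons, ih]
    by_cases h : t.1 = N
    · simp [h]
    · have : ¬ fl t.1 = fl N := fun h' => h (fl_inj h')
      simp [h, this]

def DD {e : ℕ} (u : Fin 6) (P Q : Finset (Fin e)) (M : Fin 3 → Fin e → Bool) : Prop :=
  ∃ c h : Fin e, ((c = h ∧ (c ∈ P ∨ c ∈ Q)) ∨ (c ∈ P ∧ h ∈ Q)) ∧ M = fl (matC u P Q c h)

def Concl {e : ℕ} (u : Fin 6) (P Q : Finset (Fin e)) (c h : Fin e) : Prop :=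
  ∃ L : Fin 3 → Fin e → Bool, wtM L = 0 ∧
      ∃ ops : List (Fin e × ℕ), (∀ p ∈ ops, p.1.1 ≠ 0 ∧ 0 < p.2) ∧
        GopList ops (Finsupp.single L 1) (fl (matC u P Q c h)) = 1 ∧
        ∀ M' : Fin 3 → Fin e → Bool, M' ≠ fl (matC u P Q c h) →
          IsVNPoly (GopList ops (Finsupp.single L 1) M') ∧
          (GopList ops (Finsupp.single L 1) M' ≠ 0 → DD u P Q M')

theorem weq_iff {m : ℕ} (w w' : Fin m → Col) : weq w w' = true ↔ w = w' := by
  simp only [weq, List.all_eq_true, List.mem_finRange, forall_const, ceq_iff]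
  exact ⟨fun h => funext h, fun h => congrFun h⟩

/-- the embedded positions have the right kinds -/
def KD {e m : ℕ} (P Q : Finset (Fin e)) (pos : Fin m → Fin e) (kd : Fin m → Bool) : Prop :=
  ∀ j, (kd j = true → pos j ∈ P) ∧ (kd j = false → pos j ∈ Q)

theorem extend_wC {e m : ℕ} (u : Fin 6) (P Q : Finset (Fin e)) (hPQ : Disjoint P Q)
    (pos : Fin m → Fin e) (hp : Function.Injective pos) (kd : Fin m → Bool)
    (hkd : KD P Q pos kd) (c h : Fin m) :
    Function.extend pos (wC u kd c h) (bas u P Q) = matC u P Q (pos c) (pos h) := by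
  funext x
  by_cases hx : ∃ j, pos j = x
  · obtain ⟨j, rfl⟩ := hx
    rw [hp.extend_apply]
    have e1 : (decide (pos j ∈ P)) = kd j := by
      cases hk : kd j
      · simpa using Finset.disjoint_right.1 hPQ ((hkd j).2 hk)
      · simpa using (hkd j).1 hk
    have e2 : (decide (pos j ∈ Q)) = !(kd j) := by
      cases hk : kd j
      · simpa using (hkd j).2 hk
      · simpa using Finset.disjoint_left.1 hPQ ((hkd j).1 hk)
    simp only [wC, matC, e1, e2, hp.eq_iff]
    congr 1
  · rw [Function.extend_apply' _ _ _ hx]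
    have e1 : x ≠ pos c := fun h => hx ⟨c, h.symm⟩
    have e2 : x ≠ pos h := fun h' => hx ⟨h, h'.symm⟩
    simp [bas, matC, e1, e2]

theorem finish {e m : ℕ} (u : Fin 6) (P Q : Finset (Fin e)) (hPQ : Disjoint P Q)
    (pos : Fin m → Fin e) (hp : Function.Injective pos) (kd : Fin m → Bool)
    (hkd : KD P Q pos kd) (l : List ((Fin m → Col) × ℤ))
    (hr : Reach (l.map (ext pos (bas u P Q)))) (c h : Fin m) (hc : check u kd l c h = true) :
    Concl u P Q (pos c) (pos h) := by
  obtain ⟨L, hL, ops, hops, hV⟩ := hr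
  simp only [check, Bool.and_eq_true, List.all_eq_true, List.any_eq_true, Bool.or_eq_true,
    decide_eq_true_eq, weq_iff, beq_iff_eq, List.mem_finRange, true_and] at hc
  obtain ⟨⟨h1, h2⟩, h3⟩ := hc
  have hext := extend_wC u P Q hPQ pos hp kd hkd
  have hinj : ∀ w w' : Fin m → Col,
      Function.extend pos w (bas u P Q) = Function.extend pos w' (bas u P Q) → w = w' := by
    intro w w' hw
    funext j
    have := congrFun hw (pos j)
    rwa [hp.extend_apply, hp.extend_apply] at this
  refine ⟨L, hL, ops, hops, ?_, ?_⟩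
  · rw [hV, ← hext c h, Vec_filter, List.filter_map, List.map_map (f := ext pos (bas u P Q))]
    have : (fun t : (Fin e → Col) × ℤ => decide (t.1 = Function.extend pos (wC u kd c h) (bas u P Q)))
        ∘ ext pos (bas u P Q) = fun t => weq t.1 (wC u kd c h) := by
      funext t
      rw [Bool.eq_iff_iff]
      rw [Function.comp_apply, decide_eq_true_eq, weq_iff]
      exact ⟨hinj _ _, fun h => by simp only [ext]; rw [h]⟩
    rw [this]
    have h4 : ((fun t : (Fin e → Col) × ℤ => t.2) ∘ ext pos (bas u P Q)) = fun t => t.2 := rfl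
    rw [h4, h1]
    simp
  · intro M' hM'
    rw [hV]
    constructor
    · apply Vec_isVN
      intro t ht htM
      obtain ⟨t0, ht0, rfl⟩ := List.mem_map.1 ht
      rcases h2 t0 ht0 with h | h
      · exfalso
        apply hM'
        rw [← htM, ← hext]
        simp [ext, h]
      · exact h
    · intro hne
      obtain ⟨t, ht, rfl⟩ := Vec_ne_zero _ _ hne
      obtain ⟨t0, ht0, rfl⟩ := List.mem_map.1 ht
      obtain ⟨c', h', hv, hw⟩ := h3 t0 ht0
      refine ⟨pos c', pos h', ?_, ?_⟩
      · simp only [vld, Bool.or_eq_true, beq_iff_eq, Bool.and_eq_true, Bool.not_eq_true'] at hv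
        rcases hv with hv | hv
        · left
          refine ⟨by rw [hv], ?_⟩
          cases hk : kd c'
          · exact Or.inr ((hkd c').2 hk)
          · exact Or.inl ((hkd c').1 hk)
        · right
          exact ⟨(hkd c').1 hv.1, (hkd h').2 hv.2⟩
      · rw [← hext]; simp [ext, hw]

theorem bas_X {e : ℕ} (u : Fin 6) (P Q : Finset (Fin e)) (x : Fin e) (h1 : x ∉ P) (h2 : x ∉ Q) :
    bas u P Q x = cX := by
  have : ∀ u, cell u false false false false = cX := by decide
  simp [bas, h1, h2, this]

theorem bas_mp {e : ℕ} (u : Fin 6) (P Q : Finset (Fin e)) (x : Fin e) (h2 : x ∉ Q) :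
    bas u P Q x ∈ [cX, cP u] := by
  by_cases h1 : x ∈ P
  · simp [bas, h1, h2, cP]
  · rw [bas_X u P Q x h1 h2]; simp

theorem bas_mq {e : ℕ} (u : Fin 6) (P Q : Finset (Fin e)) (x : Fin e) (h1 : x ∉ P) :
    bas u P Q x ∈ [cX, cQ u] := by
  by_cases h2 : x ∈ Q
  · simp [bas, h1, h2, cQ]
  · rw [bas_X u P Q x h1 h2]; simp

theorem bas_all {e : ℕ} (u : Fin 6) (P Q : Finset (Fin e)) (hPQ : Disjoint P Q) (x : Fin e) :
    bas u P Q x ∈ [cX, cP u, cQ u, cT] := by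
  by_cases h2 : x ∈ Q
  · have h1 := Finset.disjoint_right.1 hPQ h2
    have := bas_mq u P Q x h1
    simp only [List.mem_cons, List.not_mem_nil, or_false] at this ⊢
    tauto
  · have := bas_mp u P Q x h2
    simp only [List.mem_cons, List.not_mem_nil, or_false] at this ⊢
    tauto

theorem chain_all : ∀ u : Fin 6, ([cX, cP u, cQ u, cT].all fun v => [cX, cP u, cQ u, cT].all
    fun w => cmpC v w) = true := by decide

/-- no element of `S` strictly between -/
def noB {e : ℕ} (S : Finset (Fin e)) (a b : Fin e) : Prop := ∀ x, a < x → x < b → x ∉ S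

theorem kind1 {e : ℕ} (u : Fin 6) (P Q : Finset (Fin e)) (hPQ : Disjoint P Q) (a b : Fin e)
    (hab : a < b) (hP : noB P a b) (hQ : noB Q a b) (k : ℕ) (hk : 0 < k) (sa sb : ℕ)
    (hg : goodS 0 1 sa sb (gopG 0 1 k [((![cT, cX] : Fin 2 → Col), 0)]) [cX] = true)
    (kd : Fin 2 → Bool) (hkd : KD P Q ![a, b] kd) (c h : Fin 2)
    (hc : check u kd (gopG 0 1 k [(![cT, cX], 0)]) c h = true) :
    Concl u P Q (![a, b] c) (![a, b] h) := by
  have hp : Function.Injective ![a, b] := by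
    intro i j hij
    fin_cases i <;> fin_cases j <;> simp at hij ⊢ <;> omega
  refine finish u P Q hPQ _ hp kd hkd _ ?_ c h hc
  refine stage0 _ 0 1 k hk sa sb _ hg _ hp _ [cX, cP u, cQ u, cT] (chain_all u) ?_
    (bas_all u P Q hPQ) hab ?_
  · intro j; fin_cases j <;> simp
  · intro x h1 h2
    have h1 : a < x := h1
    have h2 : x < b := h2
    rw [Function.extend_apply', bas_X u P Q x (hP x h1 h2) (hQ x h1 h2)]
    · simp
    · rintro ⟨j, rfl⟩
      fin_cases j <;> simp at h1 h2

theorem K1a {e : ℕ} (u : Fin 6) (P Q : Finset (Fin e)) (hPQ : Disjoint P Q) (k l : Fin e)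
    (hk : k ∈ P) (hl : l ∈ Q) (hab : k < l) (hP : noB P k l) (hQ : noB Q k l) (c h : Fin 2)
    (hc : check u ![true, false] k1a c h = true) : Concl u P Q (![k, l] c) (![k, l] h) :=
  kind1 u P Q hPQ k l hab hP hQ 1 (by omega) 2 1 g1a _
    (by intro j; fin_cases j <;> simp [hk, hl]) c h hc

theorem K1b {e : ℕ} (u : Fin 6) (P Q : Finset (Fin e)) (hPQ : Disjoint P Q) (l k : Fin e)
    (hk : k ∈ P) (hl : l ∈ Q) (hab : l < k) (hP : noB P l k) (hQ : noB Q l k) (c h : Fin 2)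
    (hc : check u ![false, true] k1b c h = true) : Concl u P Q (![l, k] c) (![l, k] h) :=
  kind1 u P Q hPQ l k hab hP hQ 2 (by omega) 1 2 g1b _
    (by intro j; fin_cases j <;> simp [hk, hl]) c h hc

theorem inj3 {e : ℕ} (a b c : Fin e) (h1 : a < b) (h2 : b < c) :
    Function.Injective ![a, b, c] := by
  intro i j hij
  fin_cases i <;> fin_cases j <;> simp at hij ⊢ <;> omega

theorem K2a {e : ℕ} (u : Fin 6) (P Q : Finset (Fin e)) (hPQ : Disjoint P Q) (k k' l : Fin e)
    (hk : k ∈ P) (hk' : k' ∈ P) (hl : l ∈ Q) (hab : k < k') (hbc : k' < l)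
    (hP : noB P k k') (hQ : noB Q k k') (hQ2 : noB Q k' l) (c h : Fin 3)
    (hc : check u ![true, true, false] (k2a u) c h = true) :
    Concl u P Q (![k, k', l] c) (![k, k', l] h) := by
  have hp := inj3 k k' l hab hbc
  refine finish u P Q hPQ _ hp _ (by intro j; fin_cases j <;> simp [hk, hk', hl]) _ ?_ c h hc
  obtain ⟨pos', base', i1, i2, i3, i4, i5, i6, i7, i8, hr⟩ := stage
    (gopG 1 2 1 [(![cT, cP u, cX], 0)]) 0 1 1 (by omega) 2 2 [cX] (g2a1 u) _ hp (bas u P Q) hab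
    (by
      intro x h1 h2
      have h1 : k < x := h1
      have h2 : x < k' := h2
      refine ⟨?_, ?_⟩
      · intro j; fin_cases j <;> simp <;> omega
      · rw [bas_X u P Q x (hP x h1 h2) (hQ x h1 h2)]; simp)
  apply hr
  have j2 : pos' 2 = l := i2 2 (by decide) (by decide)
  have i3 : k ≤ pos' 0 := i3
  have i5 : pos' 1 ≤ k' := i5
  refine stage0 _ 1 2 1 (by omega) 1 1 _ (g2a2 u) _ i1 _ [cX, cP u, cQ u, cT] (chain_all u) ?_ ?_
    (by omega) ?_
  · intro j; fin_cases j <;> simp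
  · intro x; obtain ⟨d, hd⟩ := i6 x; rw [hd]; exact bas_all u P Q hPQ d
  · intro x h1 h2
    rw [Function.extend_apply']
    · by_cases hx : x ≤ k'
      · have := (i8 x (by change k ≤ x; omega) hx (by omega) (by omega)).1
        simp only [List.mem_cons, List.not_mem_nil, or_false] at this ⊢
        exact Or.inl this
      · rw [i7 x (fun h => hx h.2)]
        exact bas_mp u P Q x (hQ2 x (by omega) (by omega))
    · rintro ⟨j, rfl⟩
      fin_cases j <;> simp at h1 h2 <;> omega

theorem inj4 {e : ℕ} (a b c d : Fin e) (h1 : a ≠ b) (h2 : a ≠ c) (h3 : a ≠ d) (h4 : b ≠ c)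
    (h5 : b ≠ d) (h6 : c ≠ d) :
    Function.Injective ![a, b, c, d] := by
  intro i j hij
  fin_cases i <;> fin_cases j <;> simp at hij ⊢ <;> omega

theorem mem2 {a b c : Col} (h : c ∈ [a]) : c ∈ [a, b] := by
  simp only [List.mem_cons, List.not_mem_nil, or_false] at h ⊢; exact Or.inl h

theorem mem3 {a b d c : Col} (h : c ∈ [a, b]) : c ∈ [a, b, d] := by
  simp only [List.mem_cons, List.not_mem_nil, or_false] at h ⊢; tauto

theorem K2b {e : ℕ} (u : Fin 6) (P Q : Finset (Fin e)) (hPQ : Disjoint P Q) (l k k' : Fin e)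
    (hk : k ∈ P) (hk' : k' ∈ P) (hl : l ∈ Q) (hab : l < k) (hbc : k < k')
    (hP : noB P k k') (hQ : noB Q k k') (hQ2 : noB Q l k) (c h : Fin 3)
    (hc : check u ![false, true, true] (k2b u) c h = true) :
    Concl u P Q (![l, k, k'] c) (![l, k, k'] h) := by
  have hp := inj3 l k k' hab hbc
  refine finish u P Q hPQ _ hp _ (by intro j; fin_cases j <;> simp [hk, hk', hl]) _ ?_ c h hc
  obtain ⟨pos', base', i1, i2, i3, i4, i5, i6, i7, i8, hr⟩ := stage
    (gopG 0 2 1 [(![cP u, cT, cX], 0)]) 1 2 1 (by omega) 2 2 [cX] (g2b1 u) _ hp (bas u P Q) hbc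
    (by
      intro x h1 h2
      have h1 : k < x := h1
      have h2 : x < k' := h2
      refine ⟨?_, ?_⟩
      · intro j; fin_cases j <;> simp <;> omega
      · rw [bas_X u P Q x (hP x h1 h2) (hQ x h1 h2)]; simp)
  apply hr
  have j2 : pos' 0 = l := i2 0 (by decide) (by decide)
  have i3 : k ≤ pos' 1 := i3
  have i5 : pos' 2 ≤ k' := i5
  refine stage0 _ 0 2 1 (by omega) 1 1 _ (g2b2 u) _ i1 _ [cX, cP u, cQ u, cT] (chain_all u) ?_ ?_
    (by omega) ?_
  · intro j; fin_cases j <;> simp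
  · intro x; obtain ⟨d, hd⟩ := i6 x; rw [hd]; exact bas_all u P Q hPQ d
  · intro x h1 h2
    by_cases hx1 : x = pos' 1
    · rw [hx1, i1.extend_apply]; simp
    rw [Function.extend_apply']
    · by_cases hx : k ≤ x
      · exact mem3 (mem2 (i8 x hx (by change x ≤ k'; omega) (by omega) (by omega)).1)
      · rw [i7 x (fun h => hx h.1)]
        exact mem3 (bas_mp u P Q x (hQ2 x (by omega) (by omega)))
    · rintro ⟨j, rfl⟩
      fin_cases j <;> simp at h1 h2 hx1

theorem K3a {e : ℕ} (u : Fin 6) (P Q : Finset (Fin e)) (hPQ : Disjoint P Q) (k l l' : Fin e)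
    (hk : k ∈ P) (hl : l ∈ Q) (hl' : l' ∈ Q) (hab : k < l) (hbc : l < l')
    (hP : noB P l l') (hQ : noB Q l l') (hP2 : noB P k l) (c h : Fin 3)
    (hc : check u ![true, false, false] (k3a u) c h = true) :
    Concl u P Q (![k, l, l'] c) (![k, l, l'] h) := by
  have hp := inj3 k l l' hab hbc
  refine finish u P Q hPQ _ hp _ (by intro j; fin_cases j <;> simp [hk, hl', hl]) _ ?_ c h hc
  obtain ⟨pos', base', i1, i2, i3, i4, i5, i6, i7, i8, hr⟩ := stage
    (gopG 0 1 1 [(![cT, cQ u, cX], 0)]) 1 2 1 (by omega) 1 1 [cX] (g3a1 u) _ hp (bas u P Q) hbc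
    (by
      intro x h1 h2
      have h1 : l < x := h1
      have h2 : x < l' := h2
      refine ⟨?_, ?_⟩
      · intro j; fin_cases j <;> simp <;> omega
      · rw [bas_X u P Q x (hP x h1 h2) (hQ x h1 h2)]; simp)
  apply hr
  have j2 : pos' 0 = k := i2 0 (by decide) (by decide)
  have i3 : l ≤ pos' 1 := i3
  have i5 : pos' 2 ≤ l' := i5
  refine stage0 _ 0 1 1 (by omega) 2 2 _ (g3a2 u) _ i1 _ [cX, cP u, cQ u, cT] (chain_all u) ?_ ?_
    (by omega) ?_
  · intro j; fin_cases j <;> simp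
  · intro x; obtain ⟨d, hd⟩ := i6 x; rw [hd]; exact bas_all u P Q hPQ d
  · intro x h1 h2
    rw [Function.extend_apply']
    · by_cases hx : l ≤ x
      · exact mem2 (i8 x hx (by change x ≤ l'; omega) (by omega) (by omega)).1
      · rw [i7 x (fun h => hx h.1)]
        exact bas_mq u P Q x (hP2 x (by omega) (by omega))
    · rintro ⟨j, rfl⟩
      fin_cases j <;> simp at h1 h2 <;> omega

theorem K3b {e : ℕ} (u : Fin 6) (P Q : Finset (Fin e)) (hPQ : Disjoint P Q) (l l' k : Fin e)
    (hk : k ∈ P) (hl : l ∈ Q) (hl' : l' ∈ Q) (hab : l < l') (hbc : l' < k)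
    (hP : noB P l l') (hQ : noB Q l l') (hP2 : noB P l' k) (c h : Fin 3)
    (hc : check u ![false, false, true] (k3b u) c h = true) :
    Concl u P Q (![l, l', k] c) (![l, l', k] h) := by
  have hp := inj3 l l' k hab hbc
  refine finish u P Q hPQ _ hp _ (by intro j; fin_cases j <;> simp [hk, hl', hl]) _ ?_ c h hc
  obtain ⟨pos', base', i1, i2, i3, i4, i5, i6, i7, i8, hr⟩ := stage
    (gopG 0 2 1 [(![cT, cX, cQ u], 0)]) 0 1 1 (by omega) 1 1 [cX] (g3b1 u) _ hp (bas u P Q) hab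
    (by
      intro x h1 h2
      have h1 : l < x := h1
      have h2 : x < l' := h2
      refine ⟨?_, ?_⟩
      · intro j; fin_cases j <;> simp <;> omega
      · rw [bas_X u P Q x (hP x h1 h2) (hQ x h1 h2)]; simp)
  apply hr
  have j2 : pos' 2 = k := i2 2 (by decide) (by decide)
  have i3 : l ≤ pos' 0 := i3
  have i5 : pos' 1 ≤ l' := i5
  refine stage0 _ 0 2 1 (by omega) 2 2 _ (g3b2 u) _ i1 _ [cX, cP u, cQ u, cT] (chain_all u) ?_ ?_
    (by omega) ?_
  · intro j; fin_cases j <;> simp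
  · intro x; obtain ⟨d, hd⟩ := i6 x; rw [hd]; exact bas_all u P Q hPQ d
  · intro x h1 h2
    by_cases hx1 : x = pos' 1
    · rw [hx1, i1.extend_apply]; simp
    rw [Function.extend_apply']
    · by_cases hx : x ≤ l'
      · exact mem2 (i8 x (by change l ≤ x; omega) hx (by omega) (by omega)).1
      · rw [i7 x (fun h => hx h.2)]
        exact bas_mq u P Q x (hP2 x (by omega) (by omega))
    · rintro ⟨j, rfl⟩
      fin_cases j <;> simp at h1 h2 hx1

/-- the common part of `K4` and `K5a` -/
theorem reach4 {e : ℕ} (u : Fin 6) (base : Fin e → Col) (pos : Fin 4 → Fin e)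
    (hp : Function.Injective pos) (hbase : ∀ c, base c ∈ [cX, cP u, cQ u, cT])
    (h01 : pos 0 < pos 1) (h23 : pos 2 < pos 3) (hd : pos 1 < pos 2 ∨ pos 3 < pos 0)
    (hb1 : ∀ x, pos 0 < x → x < pos 1 → base x ∈ [cX, cQ u])
    (hb2 : ∀ x, pos 2 < x → x < pos 3 → base x ∈ [cX, cP u]) :
    Reach ((k4 u).map (ext pos base)) := by
  obtain ⟨pos', base', i1, i2, i3, i4, i5, i6, i7, i8, hr⟩ := stage
    (gopG 2 3 1 [(![cT, cQ u, cP u, cX], 0)]) 0 1 1 (by omega) 2 2 [cX, cQ u] (g41 u) _ hp base h01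
    (by
      intro x h1 h2
      refine ⟨?_, hb1 x h1 h2⟩
      intro j; fin_cases j <;> simp <;> omega)
  apply hr
  have j2 : pos' 2 = pos 2 := i2 2 (by decide) (by decide)
  have j3 : pos' 3 = pos 3 := i2 3 (by decide) (by decide)
  refine stage0 _ 2 3 1 (by omega) 1 1 _ (g42 u) _ i1 _ [cX, cP u, cQ u, cT] (chain_all u) ?_ ?_
    (by omega) ?_
  · intro j; fin_cases j <;> simp
  · intro x; obtain ⟨d, hd⟩ := i6 x; rw [hd]; exact hbase d
  · intro x h1 h2
    rw [Function.extend_apply']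
    · rw [i7 x (by omega)]
      exact hb2 x (by omega) (by omega)
    · rintro ⟨j, rfl⟩
      fin_cases j <;> simp at h1 h2 <;> omega

theorem K4 {e : ℕ} (u : Fin 6) (P Q : Finset (Fin e)) (hPQ : Disjoint P Q) (k k' l l' : Fin e)
    (hk : k ∈ P) (hk' : k' ∈ P) (hl : l ∈ Q) (hl' : l' ∈ Q) (hab : k < k') (hbc : l < l')
    (hd : k' < l ∨ l' < k)
    (hP : noB P k k') (hQ : noB Q l l') (c h : Fin 4)
    (hc : check u ![true, true, false, false] (k4 u) c h = true) :
    Concl u P Q (![k, k', l, l'] c) (![k, k', l, l'] h) := by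
  have hp : Function.Injective ![k, k', l, l'] := by apply inj4 <;> omega
  refine finish u P Q hPQ _ hp _ (by intro j; fin_cases j <;> simp [hk, hk', hl, hl']) _ ?_ c h hc
  exact reach4 u _ _ hp (bas_all u P Q hPQ) hab hbc hd
    (fun x h1 h2 => bas_mq u P Q x (hP x h1 h2))
    (fun x h1 h2 => bas_mp u P Q x (hQ x h1 h2))

theorem K5a {e : ℕ} (u : Fin 6) (P Q : Finset (Fin e)) (hPQ : Disjoint P Q) (k l k' l' : Fin e)
    (hk : k ∈ P) (hk' : k' ∈ P) (hl : l ∈ Q) (hl' : l' ∈ Q) (hab : k < l) (hbc : l < k')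
    (hcd : k' < l')
    (hP : noB P k k') (hQ : noB Q l l') (c h : Fin 4)
    (hc : check u ![true, false, true, false] (k5a u) c h = true) :
    Concl u P Q (![k, l, k', l'] c) (![k, l, k', l'] h) := by
  have hp : Function.Injective ![k, l, k', l'] := by apply inj4 <;> omega
  refine finish u P Q hPQ _ hp _ (by intro j; fin_cases j <;> simp [hk, hk', hl, hl']) _ ?_ c h hc
  obtain ⟨pos', base', i1, i2, i3, i4, i5, i6, i7, i8, hr⟩ := stage
    (k4 u) 1 2 1 (by omega) 1 2 [cX] (g5a1 u) _ hp (bas u P Q) hbc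
    (by
      intro x h1 h2
      have h1 : l < x := h1
      have h2 : x < k' := h2
      refine ⟨?_, ?_⟩
      · intro j; fin_cases j <;> simp <;> omega
      · rw [bas_X u P Q x (hP x (by omega) h2) (hQ x h1 (by omega))]; simp)
  apply hr
  have j0 : pos' 0 = k := i2 0 (by decide) (by decide)
  have j3 : pos' 3 = l' := i2 3 (by decide) (by decide)
  have i3 : l ≤ pos' 1 := i3
  have i5 : pos' 2 ≤ k' := i5
  refine reach4 u _ _ i1 ?_ (by omega) (by omega) (by omega) ?_ ?_
  · intro x; obtain ⟨d, hd⟩ := i6 x; rw [hd]; exact bas_all u P Q hPQ d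
  · intro x h1 h2
    by_cases hx : l ≤ x
    · exact mem2 (i8 x hx (by change x ≤ k'; omega) (by omega) (by omega)).1
    · rw [i7 x (fun h => hx h.1)]
      exact bas_mq u P Q x (hP x (by omega) (by omega))
  · intro x h1 h2
    by_cases hx : x ≤ k'
    · exact mem2 (i8 x (by change l ≤ x; omega) hx (by omega) (by omega)).1
    · rw [i7 x (fun h => hx h.2)]
      exact bas_mp u P Q x (hQ x (by omega) (by omega))

theorem csz_P : ∀ u, csz (cP u) = 2 := by decide

theorem K5b {e : ℕ} (u : Fin 6) (P Q : Finset (Fin e)) (hPQ : Disjoint P Q) (l k l' k' : Fin e)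
    (hk : k ∈ P) (hk' : k' ∈ P) (hl : l ∈ Q) (hl' : l' ∈ Q) (hab : l < k) (hbc : k < l')
    (hcd : l' < k')
    (hP : noB P k k') (hQ : noB Q l l') (c h : Fin 4)
    (hc : check u ![false, true, false, true] (k5b u) c h = true) :
    Concl u P Q (![l, k, l', k'] c) (![l, k, l', k'] h) := by
  have hp : Function.Injective ![l, k, l', k'] := by apply inj4 <;> omega
  refine finish u P Q hPQ _ hp _ (by intro j; fin_cases j <;> simp [hk, hk', hl, hl']) _ ?_ c h hc
  obtain ⟨pos', base', i1, i2, i3, i4, i5, i6, i7, i8, hr⟩ := stage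
    (gopG 1 2 1 (gopG 1 3 1 [(![cP u, cT, cX, cQ u], 0)])) 0 1 1 (by omega) 1 2 [cX, cP u] (g5b1 u)
    _ hp (bas u P Q) hab
    (by
      intro x h1 h2
      have h1 : l < x := h1
      have h2 : x < k := h2
      refine ⟨?_, ?_⟩
      · intro j; fin_cases j <;> simp <;> omega
      · exact bas_mp u P Q x (hQ x h1 (by omega)))
  apply hr
  have j2 : pos' 2 = l' := i2 2 (by decide) (by decide)
  have j3 : pos' 3 = k' := i2 3 (by decide) (by decide)
  have i3 : l ≤ pos' 0 := i3
  have i5 : pos' 1 ≤ k := i5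
  have hall : ∀ x, base' x ∈ [cX, cP u, cQ u, cT] := by
    intro x; obtain ⟨d, hd⟩ := i6 x; rw [hd]; exact bas_all u P Q hPQ d
  obtain ⟨qos, case', a1, a2, a3, a4, a5, a6, a7, a8, ar⟩ := stage
    (gopG 1 3 1 [(![cP u, cT, cX, cQ u], 0)]) 1 2 1 (by omega) 1 1 [cX] (g5b2 u)
    _ i1 base' (by omega)
    (by
      intro x h1 h2
      refine ⟨?_, ?_⟩
      · intro j; fin_cases j <;> simp <;> omega
      · by_cases hx : x ≤ k
        · obtain ⟨b1, b2, b3⟩ := i8 x (by change l ≤ x; omega) hx (by omega) (by omega)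
          have b3 := b3 h1
          simp only [List.mem_cons, List.not_mem_nil, or_false] at b1 ⊢
          rcases b1 with b1 | b1
          · exact b1
          · rw [b1, csz_P] at b3; omega
        · rw [i7 x (fun h => hx h.2), bas_X u P Q x (hP x (by omega) (by omega))
            (hQ x (by omega) (by omega))]
          simp)
  apply ar
  have e0 : qos 0 = pos' 0 := a2 0 (by decide) (by decide)
  have e3 : qos 3 = pos' 3 := a2 3 (by decide) (by decide)
  refine stage0 _ 1 3 1 (by omega) 2 2 _ (g5b3 u) _ a1 _ [cX, cP u, cQ u, cT] (chain_all u) ?_ ?_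
    (by omega) ?_
  · intro j; fin_cases j <;> simp
  · intro x; obtain ⟨d, hd⟩ := a6 x; rw [hd]; exact hall d
  · intro x h1 h2
    by_cases hx1 : x = qos 2
    · rw [hx1, a1.extend_apply]; simp
    rw [Function.extend_apply']
    · by_cases hx : x ≤ l'
      · exact mem2 (a8 x (by omega) (by omega) (by omega) (by omega)).1
      · rw [a7 x (by omega), i7 x (by change ¬ (l ≤ x ∧ x ≤ k); omega)]
        exact bas_mq u P Q x (hP x (by omega) (by omega))
    · rintro ⟨j, rfl⟩
      fin_cases j <;> simp at h1 h2 hx1 <;> omega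

/-! ### Kleshchev condition in terms of matrices -/

def bset {e : ℕ} (R : Fin e → Bool) : Set ℤ := {z | z < 0 ∨ ∃ i : Fin e, (i.1 : ℤ) = z ∧ R i = true}

def num {e : ℕ} (R : Fin e → Bool) : ℕ := (Finset.univ.filter fun i => R i = true).card

theorem rank_zero {e : ℕ} (i : Fin e) : rank (fun _ => 0) i = i := by
  apply Fin.ext
  simp only [rank, prec, lt_irrefl, false_or, true_and]
  have : (Finset.univ.filter (fun j : Fin e => j < i)) = Finset.Iio i := by
    ext j; simp
  rw [this, Fin.card_Iio]

theorem Tset_zero {e : ℕ} (M : Fin 3 → Fin e → Bool) (s : Fin 3) :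
    Tset (fun _ => 0) M s = bset (M s) := by
  ext z
  simp only [Tset, bset, beads, rank_zero, zero_add, Set.mem_ofPred_eq]
  constructor
  · rintro (h | ⟨h0, h1, h2⟩)
    · exact Or.inl h
    · right
      by_cases hM : M s ⟨z.toNat % e, h1⟩ = true
      · rw [if_pos hM] at h2
        have h3 : z.toNat < e := by
          rw [Nat.div_lt_iff_lt_mul (by omega)] at h2
          omega
        refine ⟨⟨z.toNat % e, h1⟩, ?_, hM⟩
        simp only [Nat.mod_eq_of_lt h3]
        omega
      · rw [if_neg hM] at h2; exact absurd h2 (Nat.not_lt_zero _)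
  · rintro (h | ⟨i, hi, hM⟩)
    · exact Or.inl h
    · right
      subst hi
      refine ⟨by omega, ?_⟩
      have h4 : (i.1 : ℤ).toNat % e = i.1 := by
        rw [Int.toNat_natCast, Nat.mod_eq_of_lt i.2]
      refine ⟨by rw [h4]; exact i.2, ?_⟩
      have h5 : (⟨(i.1 : ℤ).toNat % e, by rw [h4]; exact i.2⟩ : Fin e) = i := Fin.ext h4
      rw [h5, if_pos hM, Int.toNat_natCast, Nat.div_eq_of_lt i.2]
      omega

theorem nsum_zero {e : ℕ} (M : Fin 3 → Fin e → Bool) (s : Fin 3) :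
    nsum (fun _ => 0) M s = num (M s) := by
  simp only [nsum, beads, rank_zero, zero_add, num, Finset.card_filter]

section enum
variable {e : ℕ} (R : Fin e → Bool)

theorem bset_bdd : BddAbove (bset R) := by
  refine ⟨e, ?_⟩
  rintro z (h | ⟨i, rfl, _⟩)
  · omega
  · have := i.2; omega

theorem bset_ne (b : ℤ) : (bset R ∩ Set.Iio b).Nonempty := by
  refine ⟨min (-1) (b - 1), Or.inl (by omega), ?_⟩
  rw [Set.mem_Iio]; omega

theorem bset_bdd' (b : ℤ) : BddAbove (bset R ∩ Set.Iio b) :=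
  (bset_bdd R).mono Set.inter_subset_left

theorem tE_mem (x : ℕ) : tEnum (bset R) x ∈ bset R := by
  cases x with
  | zero =>
    rw [tEnum]
    exact Int.csSup_mem ((bset_ne R 0).mono Set.inter_subset_left) (bset_bdd R)
  | succ x =>
    rw [tEnum]
    exact (Int.csSup_mem (bset_ne R _) (bset_bdd' R _)).1

theorem tE_lt (x : ℕ) : tEnum (bset R) (x + 1) < tEnum (bset R) x := by
  rw [tEnum]
  exact (Int.csSup_mem (bset_ne R _) (bset_bdd' R _)).2

theorem tE_anti : StrictAnti (tEnum (bset R)) := strictAnti_nat_of_succ_lt (tE_lt R)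

theorem tE_max (x : ℕ) (z : ℤ) (hz : z ∈ bset R) (h : z < tEnum (bset R) x) :
    z ≤ tEnum (bset R) (x + 1) := by
  rw [tEnum]
  exact le_csSup (bset_bdd' R _) ⟨hz, h⟩

theorem tE_top (z : ℤ) (hz : z ∈ bset R) : z ≤ tEnum (bset R) 0 := by
  rw [tEnum]; exact le_csSup (bset_bdd R) hz

theorem tE_le (x : ℕ) : tEnum (bset R) x ≤ tEnum (bset R) 0 - x := by
  induction x with
  | zero => simp
  | succ x ih => have := tE_lt R x; push_cast; omega

/-- elements at least `t_x` are among the first `x+1` -/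
theorem tE_surj_aux (x : ℕ) (z : ℤ) (hz : z ∈ bset R) (h : tEnum (bset R) x ≤ z) :
    ∃ y ≤ x, tEnum (bset R) y = z := by
  induction x with
  | zero => exact ⟨0, le_rfl, le_antisymm h (tE_top R z hz)⟩
  | succ x ih =>
    by_cases h' : tEnum (bset R) x ≤ z
    · obtain ⟨y, hy, h2⟩ := ih h'
      exact ⟨y, by omega, h2⟩
    · exact ⟨x + 1, le_rfl, le_antisymm h (tE_max R x z hz (by omega))⟩

theorem tE_surj (z : ℤ) (hz : z ∈ bset R) : ∃ y, tEnum (bset R) y = z := by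
  obtain ⟨y, _, h⟩ := tE_surj_aux R (tEnum (bset R) 0 - z).toNat z hz
    (by have := tE_le R (tEnum (bset R) 0 - z).toNat; have := tE_top R z hz; omega)
  exact ⟨y, h⟩

/-- uniqueness of the enumeration -/
theorem tE_unique (f : ℕ → ℤ) (hf : StrictAnti f) (hr : ∀ z, z ∈ bset R ↔ ∃ x, f x = z) :
    tEnum (bset R) = f := by
  funext x
  induction x using Nat.strong_induction_on with
  | _ x ih =>
  cases x with
  | zero =>
    apply le_antisymm
    · obtain ⟨y, hy⟩ := (hr _).1 (tE_mem R 0)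
      rw [← hy]; exact hf.antitone (Nat.zero_le _)
    · exact tE_top R _ ((hr _).2 ⟨0, rfl⟩)
  | succ x =>
    have hx := ih x (by omega)
    apply le_antisymm
    · obtain ⟨y, hy⟩ := (hr _).1 (tE_mem R (x + 1))
      have h1 := tE_lt R x
      rw [hx, ← hy, hf.lt_iff_gt] at h1
      rw [← hy]; exact hf.antitone h1
    · apply tE_max R x _ ((hr _).2 ⟨_, rfl⟩)
      rw [hx]; exact hf (by omega)

/-- integer-valued parts -/
def lp (x : ℕ) : ℤ := tEnum (bset R) x + (x + 1) - (num R : ℤ)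

theorem lp_succ (x : ℕ) : lp R (x + 1) ≤ lp R x := by
  have := tE_lt R x
  simp only [lp]; push_cast; omega

theorem lp_anti : Antitone (lp R) := antitone_nat_of_succ_le (lp_succ R)

theorem lp_nonneg (x : ℕ) : 0 ≤ lp R x := by
  by_contra hcon
  set y := x + (tEnum (bset R) 0).toNat + 1 with hy
  have h1 : lp R y ≤ lp R x := lp_anti R (by omega)
  have h2 : tEnum (bset R) y < 0 := by have := tE_le R y; omega
  have h3 : Finset.Ico (tEnum (bset R) y) 0 ∪
      ((Finset.univ.filter fun i => R i = true).image fun i : Fin e => (i.1 : ℤ)) ⊆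
      (Finset.range (y + 1)).image (tEnum (bset R)) := by
    intro z hz
    rw [Finset.mem_image]
    rw [Finset.mem_union, Finset.mem_Ico, Finset.mem_image] at hz
    have h4 : z ∈ bset R ∧ tEnum (bset R) y ≤ z := by
      rcases hz with hz | ⟨i, hi, rfl⟩
      · exact ⟨Or.inl hz.2, hz.1⟩
      · exact ⟨Or.inr ⟨i, rfl, (Finset.mem_filter.1 hi).2⟩, by omega⟩
    obtain ⟨w, hw, h5⟩ := tE_surj_aux R y z h4.1 h4.2
    exact ⟨w, Finset.mem_range.2 (by omega), h5⟩
  have h4 := Finset.card_le_card h3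
  rw [Finset.card_union_of_disjoint, Finset.card_image_of_injective] at h4
  · have h5 := h4.trans Finset.card_image_le
    rw [Int.card_Ico, Finset.card_range] at h5
    have h6 : (Finset.univ.filter fun i => R i = true).card = num R := rfl
    rw [h6] at h5
    simp only [lp] at h1 hcon
    omega
  · intro i j h; apply Fin.ext; simpa using h
  · rw [Finset.disjoint_left]
    intro z hz hz'
    rw [Finset.mem_Ico] at hz
    rw [Finset.mem_image] at hz'
    obtain ⟨i, _, rfl⟩ := hz'
    omega

theorem mem_bset_nat (i : Fin e) : ((i.1 : ℤ) ∈ bset R) ↔ R i = true := by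
  constructor
  · rintro (h | ⟨j, hj, h⟩)
    · omega
    · have : j = i := Fin.ext (by omega)
      rwa [← this]
  · intro h; exact Or.inr ⟨i, rfl, h⟩

end enum

def plus {e : ℕ} (M : Fin 3 → Fin e → Bool) (t : Fin 3) (i : Fin e) : Prop :=
  M t (colPred i) = true ∧ M t i = false
def minus {e : ℕ} (M : Fin 3 → Fin e → Bool) (t : Fin 3) (i : Fin e) : Prop :=
  M t (colPred i) = false ∧ M t i = true

def mv {e : ℕ} (M : Fin 3 → Fin e → Bool) (s : Fin 3) (i : Fin e) : Fin 3 → Fin e → Bool :=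
  fun t c => if t = s ∧ c = i then false else if t = s ∧ c = colPred i then true else M t c

inductive MK {e : ℕ} : (Fin 3 → Fin e → Bool) → Prop
  | base (M) (h : ∀ s, ∃ n : ℕ, ∀ i, M s i = true ↔ i.1 < n) : MK M
  | step (M) (s : Fin 3) (i : Fin e) (hi : 0 < i.1) (hm : minus M s i)
      (h0 : s = 0 → ¬ plus M 1 i ∧ (plus M 2 i → minus M 1 i))
      (h1 : s = 1 → ¬ plus M 2 i) (h : MK (mv M s i)) : MK M

theorem PtPart_eq {e : ℕ} (M : Fin 3 → Fin e → Bool) (s : Fin 3) (x : ℕ) :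
    PtPart (fun _ => 0) M s x = (lp (M s) x).toNat := by
  simp only [PtPart, Tset_zero, nsum_zero, lp]

theorem PtCharge_eq {e : ℕ} (M : Fin 3 → Fin e → Bool) (s : Fin 3) :
    PtCharge (fun _ => 0) M s = (num (M s) : ZMod e) := by
  simp only [PtCharge, nsum_zero]

/-- a removable node corresponds to a bead that can be moved -/
theorem removable_bead {e : ℕ} (M : Fin 3 → Fin e → Bool) (A : Node 3)
    (h : Removable (PtPart (fun _ => 0) M) A) :
    ∃ i : Fin e, 0 < i.1 ∧ minus M A.1 i ∧ tEnum (bset (M A.1)) A.2.1 = i.1 ∧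
      lp (M A.1) A.2.1 = A.2.2 + 1 ∧
      tEnum (bset (M A.1)) (A.2.1 + 1) + 1 < tEnum (bset (M A.1)) A.2.1 := by
  obtain ⟨s, x, y⟩ := A
  obtain ⟨h1, h2⟩ := h
  simp only [PtPart_eq] at h1 h2 ⊢
  have e1 : lp (M s) x = y + 1 := by omega
  have e2 : tEnum (bset (M s)) (x + 1) + 1 < tEnum (bset (M s)) x := by
    simp only [lp] at h2 e1; push_cast at h2; omega
  have e3 : tEnum (bset (M s)) x - 1 ∉ bset (M s) := by
    intro hz
    have := tE_max _ x _ hz (by omega)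
    omega
  have e4 : 0 ≤ tEnum (bset (M s)) x - 1 := by
    by_contra hc
    exact e3 (Or.inl (by omega))
  rcases tE_mem (M s) x with h5 | ⟨i, hi, hM⟩
  · omega
  · refine ⟨i, by omega, ⟨?_, hM⟩, hi.symm, e1, e2⟩
    by_contra hc
    apply e3
    have : ((colPred i).1 : ℤ) = tEnum (bset (M s)) x - 1 := by
      rw [← hi]; simp only [colPred]; omega
    rw [← this, mem_bset_nat]
    simpa using hc

theorem res_rem {e : ℕ} (M : Fin 3 → Fin e → Bool) (A : Node 3)
    (h1 : lp (M A.1) A.2.1 = A.2.2 + 1) :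
    res (PtCharge (fun _ => 0) M) A = ((tEnum (bset (M A.1)) A.2.1 : ℤ) : ZMod e) := by
  simp only [res, PtCharge_eq]
  have : tEnum (bset (M A.1)) A.2.1 = num (M A.1) - A.2.1 + A.2.2 := by
    simp only [lp] at h1; omega
  rw [this]; push_cast; ring

theorem res_add {e : ℕ} (M : Fin 3 → Fin e → Bool) (A : Node 3)
    (h1 : lp (M A.1) A.2.1 = A.2.2) :
    res (PtCharge (fun _ => 0) M) A = ((tEnum (bset (M A.1)) A.2.1 + 1 : ℤ) : ZMod e) := by
  simp only [res, PtCharge_eq]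
  have : tEnum (bset (M A.1)) A.2.1 + 1 = num (M A.1) - A.2.1 + A.2.2 := by
    simp only [lp] at h1; omega
  rw [this]; push_cast; ring

theorem colPred_val {e : ℕ} (i : Fin e) (hi : 0 < i.1) : ((colPred i).1 : ℤ) = i.1 - 1 := by
  simp only [colPred]; omega

/-- a plus gives an addable node -/
theorem addable_of_plus {e : ℕ} (M : Fin 3 → Fin e → Bool) (t : Fin 3) (i : Fin e) (hi : 0 < i.1)
    (h : plus M t i) : ∃ B : Node 3, B.1 = t ∧ Addable (PtPart (fun _ => 0) M) B ∧
      res (PtCharge (fun _ => 0) M) B = (i.1 : ZMod e) := by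
  obtain ⟨h1, h2⟩ := h
  obtain ⟨x, hx⟩ := tE_surj (M t) (i.1 - 1)
    (by rw [← colPred_val i hi, mem_bset_nat]; exact h1)
  have hn := lp_nonneg (M t) x
  refine ⟨(t, x, (lp (M t) x).toNat), rfl, ⟨?_, ?_⟩, ?_⟩
  · simp only [PtPart_eq]
  · simp only [PtPart_eq]
    cases x with
    | zero => left; rfl
    | succ x =>
      right
      have h3 := tE_lt (M t) x
      have h4 : tEnum (bset (M t)) x ≠ i.1 := by
        intro h5
        have h6 := tE_mem (M t) x
        rw [h5, mem_bset_nat, h2] at h6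
        exact absurd h6 (by decide)
      have h7 : lp (M t) (x + 1) < lp (M t) x := by
        simp only [lp]; push_cast; omega
      simp only [Nat.add_sub_cancel]
      omega
  · rw [res_add M _ (by simp only; omega)]
    simp only [hx]
    push_cast; ring

theorem cast_inj {e : ℕ} (i j : Fin e) (h' : (i.1 : ZMod e) = (j.1 : ZMod e)) : i = j := by
  rw [ZMod.natCast_eq_natCast_iff'] at h'
  rw [Nat.mod_eq_of_lt i.2, Nat.mod_eq_of_lt j.2] at h'
  exact Fin.ext h'

theorem removable_sig {e : ℕ} (M : Fin 3 → Fin e → Bool) (A : Node 3) (i : Fin e)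
    (h : Removable (PtPart (fun _ => 0) M) A)
    (hr : res (PtCharge (fun _ => 0) M) A = (i.1 : ZMod e)) :
    minus M A.1 i ∧ tEnum (bset (M A.1)) A.2.1 = i.1 := by
  obtain ⟨j, h1, h2, h3, h4, h5⟩ := removable_bead M A h
  rw [res_rem M A h4, h3, Int.cast_natCast] at hr
  have := cast_inj j i hr
  subst this
  exact ⟨h2, h3⟩

theorem minus_mv {e : ℕ} (M : Fin 3 → Fin e → Bool) (s : Fin 3) (i : Fin e) (hi : 0 < i.1)
    (x : ℕ) (h3 : tEnum (bset (M s)) x = i.1)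
    (h5 : tEnum (bset (M s)) (x + 1) + 1 < tEnum (bset (M s)) x) :
    tEnum (bset (mv M s i s)) = Function.update (tEnum (bset (M s))) x (i.1 - 1) := by
  have hne : i ≠ colPred i := by
    intro h
    have := congrArg Fin.val h
    simp only [colPred] at this; omega
  apply tE_unique
  · apply strictAnti_nat_of_succ_lt
    intro n
    have h6 := tE_lt (M s) n
    simp only [Function.update_apply]
    by_cases h7 : n = x
    · subst h7
      rw [if_neg (by omega), if_pos rfl]; omega
    · by_cases h8 : n + 1 = x
      · rw [if_pos h8, if_neg h7]
        rw [h8] at h6; omega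
      · rw [if_neg h8, if_neg h7]; exact h6
  · intro z
    constructor
    · intro hz
      by_cases hz1 : z = i.1 - 1
      · exact ⟨x, by rw [Function.update_self]; exact hz1.symm⟩
      · have hz2 : z ∈ bset (M s) ∧ z ≠ i.1 := by
          rcases hz with hz | ⟨j, rfl, hj⟩
          · exact ⟨Or.inl hz, by omega⟩
          · have c1 : j ≠ i := by
              rintro rfl
              simp [mv] at hj
            have c2 : j ≠ colPred i := by
              rintro rfl
              exact hz1 (colPred_val i hi)
            have c3 : M s j = true := by
              simpa [mv, c1, c2] using hj
            refine ⟨Or.inr ⟨j, rfl, c3⟩, ?_⟩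
            intro h; apply c1; apply Fin.ext; omega
        obtain ⟨w, hw⟩ := tE_surj _ z hz2.1
        refine ⟨w, ?_⟩
        rw [Function.update_of_ne, hw]
        rintro rfl
        exact hz2.2 (hw ▸ h3)
    · rintro ⟨w, rfl⟩
      by_cases hw : w = x
      · subst hw
        rw [Function.update_self, ← colPred_val i hi, mem_bset_nat]
        simp [mv, Ne.symm hne]
      · rw [Function.update_of_ne hw]
        rcases tE_mem (M s) w with h | ⟨j, hj, hM⟩
        · exact Or.inl h
        · rw [← hj, mem_bset_nat]
          have c1 : j ≠ i := by
            rintro rfl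
            exact hw ((tE_anti (M s)).injective (by rw [← hj, h3]))
          simp [mv, c1, hM]

theorem num_mv {e : ℕ} (M : Fin 3 → Fin e → Bool) (s : Fin 3) (i : Fin e) (hi : 0 < i.1)
    (hm : minus M s i) (t : Fin 3) : num (mv M s i t) = num (M t) := by
  by_cases hts : t = s
  · subst hts
    have hne : i ≠ colPred i := by
      intro h
      have := congrArg Fin.val h
      simp only [colPred] at this; omega
    have : (Finset.univ.filter fun j => mv M t i t j = true) =
        insert (colPred i) ((Finset.univ.filter fun j => M t j = true).erase i) := by
      ext j
      rw [Finset.mem_insert, Finset.mem_erase, Finset.mem_filter, Finset.mem_filter]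
      by_cases h1 : j = i
      · subst h1; simp [mv, hne]
      · by_cases h2 : j = colPred i
        · subst h2; simp [mv, h1]
        · simp [mv, h1, h2]
    rw [num, this, Finset.card_insert_of_notMem, Finset.card_erase_of_mem]
    · have : 0 < (Finset.univ.filter fun j => M t j = true).card :=
        Finset.card_pos.2 ⟨i, by simp [hm.2]⟩
      simp only [num]; omega
    · simp [hm.2]
    · simp [hm.1]
  · have : mv M s i t = M t := by funext c; simp [mv, hts]
    rw [this]

theorem MK_of_Kleshchev {e : ℕ} (a : Fin 3 → ZMod e) (lam : Fin 3 → ℕ → ℕ)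
    (h : IsKleshchev a lam) : ∀ M : Fin 3 → Fin e → Bool, a = PtCharge (fun _ => 0) M →
      lam = PtPart (fun _ => 0) M → MK M := by
  induction h with
  | empty =>
    intro M _ hl
    apply MK.base
    intro s
    refine ⟨num (M s), fun i => ?_⟩
    have h1 : ∀ x, tEnum (bset (M s)) x = num (M s) - 1 - x := by
      intro x
      have h2 := congrFun (congrFun hl s) x
      simp only [PtPart_eq] at h2
      have h3 := lp_nonneg (M s) x
      have h4 : lp (M s) x = 0 := by omega
      simp only [lp] at h4; omega
    rw [← mem_bset_nat]
    constructor
    · intro h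
      have := tE_top _ _ h
      rw [h1] at this; push_cast at this; omega
    · intro h
      have := tE_mem (M s) (num (M s) - 1 - i.1)
      rw [h1] at this
      convert this using 1
      omega
  | step lam A hA h ih =>
    intro M ha hl
    subst hl
    subst ha
    obtain ⟨⟨hrem, hnorm⟩, -⟩ := hA
    obtain ⟨i, i1, i2, i3, i4, i5⟩ := removable_bead M A hrem
    have hres : res (PtCharge (fun _ => 0) M) A = (i.1 : ZMod e) := by
      rw [res_rem M A i4, i3, Int.cast_natCast]
    have key : ∀ t, A.1 < t → plus M t i → ∃ t', A.1 < t' ∧ t' < t ∧ minus M t' i := by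
      intro t ht hp
      obtain ⟨B, hB1, hB2, hB3⟩ := addable_of_plus M t i i1 hp
      have h1 := hnorm B hB2 (by rw [hB3, hres]) (Or.inl (by rw [hB1]; exact ht))
      have h2 := Set.nonempty_of_ncard_ne_zero (by omega : Set.ncard {C : Node 3 |
        Removable (PtPart (fun _ => 0) M) C ∧ res (PtCharge (fun _ => 0) M) C =
          res (PtCharge (fun _ => 0) M) A ∧ NodeAbove A C ∧ NodeAbove C B} ≠ 0)
      obtain ⟨C, c1, c2, c3, c4⟩ := h2
      obtain ⟨d1, d2⟩ := removable_sig M C i c1 (by rw [c2, hres])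
      refine ⟨C.1, ?_, ?_, d1⟩
      · rcases c3 with c3 | ⟨c3, c3'⟩
        · exact c3
        · exfalso
          rw [← c3, ← i3] at d2
          have := (tE_anti (M A.1)).injective d2
          omega
      · rcases c4 with c4 | ⟨c4, _⟩
        · rw [← hB1]; exact c4
        · exfalso
          rw [c4, hB1] at d1
          have := d1.2.symm.trans hp.2
          exact absurd this (by decide)
    refine MK.step M A.1 i i1 i2 ?_ ?_ ?_
    · intro hs
      constructor
      · intro hp
        obtain ⟨t', b1, b2, _⟩ := key 1 (by rw [hs]; decide) hp
        omega
      · intro hp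
        obtain ⟨t', b1, b2, b3⟩ := key 2 (by rw [hs]; decide) hp
        have : t' = 1 := by omega
        rwa [← this]
    · intro hs hp
      obtain ⟨t', b1, b2, _⟩ := key 2 (by rw [hs]; decide) hp
      omega
    · apply ih
      · funext t
        rw [PtCharge_eq, PtCharge_eq, num_mv M A.1 i i1 i2]
      · funext t x
        rw [removeNode, PtPart_eq, PtPart_eq]
        simp only [lp]
        rw [num_mv M A.1 i i1 i2]
        by_cases ht : t = A.1
        · subst ht
          rw [minus_mv M A.1 i i1 A.2.1 i3 i5, Function.update_apply]
          by_cases hx : x = A.2.1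
          · rw [if_pos ⟨rfl, hx⟩, if_pos hx, hx, i3]; omega
          · rw [if_neg (fun h => hx h.2), if_neg hx]
        · rw [if_neg (fun h => ht h.1)]
          have : mv M A.1 i t = M t := by funext c; simp [mv, ht]
          rw [this]

theorem nextOf {e : ℕ} (S : Finset (Fin e)) (a : Fin e) (h : ∃ b ∈ S, a < b) :
    ∃ b ∈ S, a < b ∧ noB S a b := by
  have hne : (S.filter fun b => a < b).Nonempty := by
    obtain ⟨b, h1, h2⟩ := h; exact ⟨b, Finset.mem_filter.2 ⟨h1, h2⟩⟩
  have hm := Finset.mem_filter.1 (Finset.min'_mem _ hne)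
  refine ⟨_, hm.1, hm.2, ?_⟩
  intro x h1 h2 h3
  exact absurd (Finset.min'_le _ x (Finset.mem_filter.2 ⟨h3, h1⟩)) (not_le.2 h2)

theorem prevOf {e : ℕ} (S : Finset (Fin e)) (a : Fin e) (h : ∃ b ∈ S, b < a) :
    ∃ b ∈ S, b < a ∧ noB S b a := by
  have hne : (S.filter fun b => b < a).Nonempty := by
    obtain ⟨b, h1, h2⟩ := h; exact ⟨b, Finset.mem_filter.2 ⟨h1, h2⟩⟩
  have hm := Finset.mem_filter.1 (Finset.max'_mem _ hne)
  refine ⟨_, hm.1, hm.2, ?_⟩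
  intro x h1 h2 h3
  exact absurd (Finset.le_max' (S.filter fun b => b < a) x (Finset.mem_filter.2 ⟨h3, h2⟩)) (not_le.2 h1)

/-- either nothing of `S` lies strictly between, or there is a first element -/
theorem noB_or_next {e : ℕ} (S : Finset (Fin e)) (a b : Fin e) :
    noB S a b ∨ ∃ x ∈ S, a < x ∧ x < b ∧ noB S a x := by
  by_cases h : noB S a b
  · exact Or.inl h
  · right
    unfold noB at h
    push Not at h
    obtain ⟨x, h1, h2, h3⟩ := h
    obtain ⟨w, w1, w2, w3⟩ := nextOf S a ⟨x, h3, h1⟩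
    refine ⟨w, w1, w2, ?_, w3⟩
    by_contra hc
    exact w3 x h1 (by omega) h3

theorem noB_or_prev {e : ℕ} (S : Finset (Fin e)) (a b : Fin e) :
    noB S a b ∨ ∃ x ∈ S, a < x ∧ x < b ∧ noB S x b := by
  by_cases h : noB S a b
  · exact Or.inl h
  · right
    unfold noB at h
    push Not at h
    obtain ⟨x, h1, h2, h3⟩ := h
    obtain ⟨w, w1, w2, w3⟩ := prevOf S b ⟨x, h3, h2⟩
    refine ⟨w, w1, ?_, w2, w3⟩
    by_contra hc
    exact w3 x (by omega) h2 h3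

theorem noB_mono {e : ℕ} {S : Finset (Fin e)} {a b a' b' : Fin e} (h : noB S a b) (h1 : a ≤ a')
    (h2 : b' ≤ b) : noB S a' b' := fun x h3 h4 => h x (by omega) (by omega)

/-- join at a point not in the set -/
theorem noB_join {e : ℕ} {S : Finset (Fin e)} {a b c : Fin e} (h : noB S a b) (hb : b ∉ S)
    (h' : noB S b c) : noB S a c := by
  intro x h1 h2
  rcases lt_trichotomy x b with h3 | h3 | h3
  · exact h x h1 h3
  · rw [h3]; exact hb
  · exact h' x h3 h2

set_option maxRecDepth 100000

section pick
variable {e : ℕ} (P Q : Finset (Fin e))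

theorem dPQ (hPQ : Disjoint P Q) {x : Fin e} (hx : x ∈ P) : x ∉ Q := Finset.disjoint_left.1 hPQ hx
theorem dQP (hPQ : Disjoint P Q) {x : Fin e} (hx : x ∈ Q) : x ∉ P := Finset.disjoint_right.1 hPQ hx

/-! #### `c = h = k ∈ P` -/

theorem al14 (hPQ : Disjoint P Q) (u : Fin 6) (hu : u = 0 ∨ u = 3) (k : Fin e) (hk : k ∈ P) (hn : ∃ l ∈ Q, k < l) :
    Concl u P Q k k := by
  obtain ⟨l, hl, hkl, hno⟩ := nextOf Q k hn
  rcases noB_or_next P k l with h | ⟨k1, h1, h2, h3, h4⟩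
  · exact K1a u P Q hPQ k l hk hl hkl h hno 0 0 (by rcases hu with rfl | rfl <;> decide)
  · exact K2a u P Q hPQ k k1 l hk h1 hl h2 h3 h4 (noB_mono hno le_rfl h3.le)
      (noB_mono hno h2.le le_rfl) 0 0 (by rcases hu with rfl | rfl <;> decide)

theorem al26 (hPQ : Disjoint P Q) (u : Fin 6) (hu : u = 1 ∨ u = 5) (k : Fin e) (hk : k ∈ P) (hn : ∃ l ∈ Q, l < k) :
    Concl u P Q k k := by
  obtain ⟨l, hl, hkl, hno⟩ := prevOf Q k hn
  rcases noB_or_prev P l k with h | ⟨k1, h1, h2, h3, h4⟩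
  · exact K1b u P Q hPQ l k hk hl hkl h hno 1 1 (by rcases hu with rfl | rfl <;> decide)
  · exact K2b u P Q hPQ l k1 k h1 hk hl h2 h3 h4 (noB_mono hno h2.le le_rfl)
      (noB_mono hno le_rfl h3.le) 2 2 (by rcases hu with rfl | rfl <;> decide)

theorem al3 (hPQ : Disjoint P Q) (k : Fin e) (hk : k ∈ P) (hn : ∃ l ∈ Q, k < l) (hp : ∃ k0 ∈ P, k0 < k) :
    Concl 2 P Q k k := by
  obtain ⟨l, hl, hkl, hno⟩ := nextOf Q k hn
  obtain ⟨k0, hk0, hkk, hnp⟩ := prevOf P k hp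
  rcases noB_or_prev Q k0 k with h | ⟨l0, h1, h2, h3, h4⟩
  · exact K2a 2 P Q hPQ k0 k l hk0 hk hl hkk hkl hnp h hno 1 1 (by decide)
  · exact K5a 2 P Q hPQ k0 l0 k l hk0 hk h1 hl h2 h3 hkl hnp (noB_join h4 (dPQ P Q hPQ hk) hno) 2 2
      (by decide)

theorem al5 (hPQ : Disjoint P Q) (k : Fin e) (hk : k ∈ P) (hn : ∃ l ∈ Q, l < k) (hp : ∃ k1 ∈ P, k < k1) :
    Concl 4 P Q k k := by
  obtain ⟨l, hl, hkl, hno⟩ := prevOf Q k hn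
  obtain ⟨k1, hk1, hkk, hnp⟩ := nextOf P k hp
  rcases noB_or_next Q k k1 with h | ⟨l1, h1, h2, h3, h4⟩
  · exact K2b 4 P Q hPQ l k k1 hk hk1 hl hkl hkk hnp h hno 1 1 (by decide)
  · exact K5b 4 P Q hPQ l k l1 k1 hk hk1 hl h1 hkl h2 h3 hnp (noB_join hno (dPQ P Q hPQ hk) h4) 1 1
      (by decide)

/-! #### `c = h = l ∈ Q` -/

theorem be15 (hPQ : Disjoint P Q) (u : Fin 6) (hu : u = 0 ∨ u = 4) (l : Fin e) (hl : l ∈ Q) (hn : ∃ k ∈ P, l < k) :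
    Concl u P Q l l := by
  obtain ⟨k, hk, hlk, hno⟩ := nextOf P l hn
  rcases noB_or_next Q l k with h | ⟨l1, h1, h2, h3, h4⟩
  · exact K1b u P Q hPQ l k hk hl hlk hno h 0 0 (by rcases hu with rfl | rfl <;> decide)
  · exact K3b u P Q hPQ l l1 k hk hl h1 h2 h3 (noB_mono hno le_rfl h3.le) h4
      (noB_mono hno h2.le le_rfl) 0 0 (by rcases hu with rfl | rfl <;> decide)

theorem be36 (hPQ : Disjoint P Q) (u : Fin 6) (hu : u = 2 ∨ u = 5) (l : Fin e) (hl : l ∈ Q) (hn : ∃ k ∈ P, k < l) :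
    Concl u P Q l l := by
  obtain ⟨k, hk, hlk, hno⟩ := prevOf P l hn
  rcases noB_or_prev Q k l with h | ⟨l1, h1, h2, h3, h4⟩
  · exact K1a u P Q hPQ k l hk hl hlk hno h 1 1 (by rcases hu with rfl | rfl <;> decide)
  · exact K3a u P Q hPQ k l1 l hk h1 hl h2 h3 (noB_mono hno h2.le le_rfl) h4
      (noB_mono hno le_rfl h3.le) 2 2 (by rcases hu with rfl | rfl <;> decide)

theorem be2 (hPQ : Disjoint P Q) (l : Fin e) (hl : l ∈ Q) (hn : ∃ k ∈ P, l < k) (hp : ∃ l0 ∈ Q, l0 < l) :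
    Concl 1 P Q l l := by
  obtain ⟨k, hk, hlk, hno⟩ := nextOf P l hn
  obtain ⟨l0, hl0, hll, hnq⟩ := prevOf Q l hp
  rcases noB_or_prev P l0 l with h | ⟨k0, h1, h2, h3, h4⟩
  · exact K3b 1 P Q hPQ l0 l k hk hl0 hl hll hlk h hnq hno 1 1 (by decide)
  · exact K5b 1 P Q hPQ l0 k0 l k h1 hk hl0 hl h2 h3 hlk (noB_join h4 (dQP P Q hPQ hl) hno) hnq 2 2
      (by decide)

theorem be4 (hPQ : Disjoint P Q) (l : Fin e) (hl : l ∈ Q) (hn : ∃ k ∈ P, k < l) (hp : ∃ l1 ∈ Q, l < l1) :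
    Concl 3 P Q l l := by
  obtain ⟨k, hk, hlk, hno⟩ := prevOf P l hn
  obtain ⟨l1, hl1, hll, hnq⟩ := nextOf Q l hp
  rcases noB_or_next P l l1 with h | ⟨k1, h1, h2, h3, h4⟩
  · exact K3a 3 P Q hPQ k l l1 hk hl hl1 hlk hll h hnq hno 1 1 (by decide)
  · exact K5a 3 P Q hPQ k l k1 l1 hk h1 hl hl1 hlk h2 h3 (noB_join hno (dQP P Q hPQ hl) h4) hnq 1 1
      (by decide)

/-! #### `c = k ∈ P`, `h = l ∈ Q` -/

theorem ga1 (hPQ : Disjoint P Q) (k l : Fin e) (hk : k ∈ P) (hl : l ∈ Q) (n1 : l < k → ∃ x ∈ P, k < x)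
    (n2 : k < l → ∃ x ∈ Q, l < x) : Concl 0 P Q k l := by
  rcases lt_trichotomy k l with hkl | rfl | hkl
  · obtain ⟨l1, a1, a2, a3⟩ := nextOf Q l (n2 hkl)
    rcases noB_or_next P k l1 with h | ⟨k1, h1, h2, h3, h4⟩
    · exact K3a 0 P Q hPQ k l l1 hk hl a1 hkl a2 (noB_mono h hkl.le le_rfl) a3
        (noB_mono h le_rfl a2.le) 0 1 (by decide)
    · rcases lt_trichotomy k1 l with h5 | rfl | h5
      · exact K4 0 P Q hPQ k k1 l l1 hk h1 hl a1 h2 a2 (Or.inl h5) h4 a3 0 2 (by decide)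
      · exact absurd hl (dPQ P Q hPQ h1)
      · exact K5a 0 P Q hPQ k l k1 l1 hk h1 hl a1 hkl h5 h3 h4 a3 0 1 (by decide)
  · exact absurd hl (dPQ P Q hPQ hk)
  · obtain ⟨k1, a1, a2, a3⟩ := nextOf P k (n1 hkl)
    rcases noB_or_next Q l k1 with h | ⟨l1, h1, h2, h3, h4⟩
    · exact K2b 0 P Q hPQ l k k1 hk a1 hl hkl a2 a3 (noB_mono h hkl.le le_rfl)
        (noB_mono h le_rfl a2.le) 1 0 (by decide)
    · rcases lt_trichotomy l1 k with h5 | rfl | h5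
      · exact K4 0 P Q hPQ k k1 l l1 hk a1 hl h1 a2 h2 (Or.inr h5) a3 h4 0 2 (by decide)
      · exact absurd h1 (dPQ P Q hPQ hk)
      · exact K5b 0 P Q hPQ l k l1 k1 hk a1 hl h1 hkl h5 h3 a3 h4 1 0 (by decide)

theorem ga6 (hPQ : Disjoint P Q) (k l : Fin e) (hk : k ∈ P) (hl : l ∈ Q) (n1 : k < l → ∃ x ∈ P, x < k)
    (n2 : l < k → ∃ x ∈ Q, x < l) : Concl 5 P Q k l := by
  rcases lt_trichotomy k l with hkl | rfl | hkl
  · obtain ⟨k0, a1, a2, a3⟩ := prevOf P k (n1 hkl)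
    rcases noB_or_prev Q k0 l with h | ⟨l0, h1, h2, h3, h4⟩
    · exact K2a 5 P Q hPQ k0 k l a1 hk hl a2 hkl a3 (noB_mono h le_rfl hkl.le)
        (noB_mono h a2.le le_rfl) 1 2 (by decide)
    · rcases lt_trichotomy l0 k with h5 | rfl | h5
      · exact K5a 5 P Q hPQ k0 l0 k l a1 hk h1 hl h2 h5 hkl a3 h4 2 3 (by decide)
      · exact absurd h1 (dPQ P Q hPQ hk)
      · exact K4 5 P Q hPQ k0 k l0 l a1 hk h1 hl a2 h3 (Or.inl h5) a3 h4 1 3 (by decide)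
  · exact absurd hl (dPQ P Q hPQ hk)
  · obtain ⟨l0, a1, a2, a3⟩ := prevOf Q l (n2 hkl)
    rcases noB_or_prev P l0 k with h | ⟨k0, h1, h2, h3, h4⟩
    · exact K3b 5 P Q hPQ l0 l k hk a1 hl a2 hkl (noB_mono h le_rfl hkl.le) a3
        (noB_mono h a2.le le_rfl) 2 1 (by decide)
    · rcases lt_trichotomy k0 l with h5 | rfl | h5
      · exact K5b 5 P Q hPQ l0 k0 l k h1 hk a1 hl h2 h5 hkl h4 a3 3 2 (by decide)
      · exact absurd hl (dPQ P Q hPQ h1)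
      · exact K4 5 P Q hPQ k0 k l0 l h1 hk a1 hl h3 a2 (Or.inr h5) h4 a3 1 3 (by decide)

theorem ga25 (hPQ : Disjoint P Q) (u : Fin 6) (hu : u = 1 ∨ u = 4) (k l : Fin e) (hk : k ∈ P) (hl : l ∈ Q)
    (n1 : l < k → ∃ x ∈ P, k < x) (n2 : l < k → ∃ x ∈ Q, x < l) : Concl u P Q k l := by
  rcases lt_trichotomy k l with hkl | rfl | hkl
  · rcases noB_or_next P k l with h | ⟨k1, h1, h2, h3, h4⟩
    · rcases noB_or_prev Q k l with g | ⟨l0, g1, g2, g3, g4⟩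
      · exact K1a u P Q hPQ k l hk hl hkl h g 0 1 (by rcases hu with rfl | rfl <;> decide)
      · exact K3a u P Q hPQ k l0 l hk g1 hl g2 g3 (noB_mono h g2.le le_rfl) g4
          (noB_mono h le_rfl g3.le) 0 2 (by rcases hu with rfl | rfl <;> decide)
    · rcases noB_or_prev Q k l with g | ⟨l0, g1, g2, g3, g4⟩
      · exact K2a u P Q hPQ k k1 l hk h1 hl h2 h3 h4 (noB_mono g le_rfl h3.le)
          (noB_mono g h2.le le_rfl) 0 2 (by rcases hu with rfl | rfl <;> decide)
      · rcases lt_trichotomy k1 l0 with h5 | rfl | h5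
        · exact K4 u P Q hPQ k k1 l0 l hk h1 g1 hl h2 g3 (Or.inl h5) h4 g4 0 3
            (by rcases hu with rfl | rfl <;> decide)
        · exact absurd g1 (dPQ P Q hPQ h1)
        · exact K5a u P Q hPQ k l0 k1 l hk h1 g1 hl g2 h5 h3 h4 g4 0 3
            (by rcases hu with rfl | rfl <;> decide)
  · exact absurd hl (dPQ P Q hPQ hk)
  · obtain ⟨k1, a1, a2, a3⟩ := nextOf P k (n1 hkl)
    obtain ⟨l0, b1, b2, b3⟩ := prevOf Q l (n2 hkl)
    exact K4 u P Q hPQ k k1 l0 l hk a1 b1 hl a2 b2 (Or.inr hkl) a3 b3 0 3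
      (by rcases hu with rfl | rfl <;> decide)

theorem ga34 (hPQ : Disjoint P Q) (u : Fin 6) (hu : u = 2 ∨ u = 3) (k l : Fin e) (hk : k ∈ P) (hl : l ∈ Q)
    (n1 : k < l → ∃ x ∈ P, x < k) (n2 : k < l → ∃ x ∈ Q, l < x) : Concl u P Q k l := by
  rcases lt_trichotomy k l with hkl | rfl | hkl
  · obtain ⟨k0, a1, a2, a3⟩ := prevOf P k (n1 hkl)
    obtain ⟨l1, b1, b2, b3⟩ := nextOf Q l (n2 hkl)
    exact K4 u P Q hPQ k0 k l l1 a1 hk hl b1 a2 b2 (Or.inl hkl) a3 b3 1 2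
      (by rcases hu with rfl | rfl <;> decide)
  · exact absurd hl (dPQ P Q hPQ hk)
  · rcases noB_or_prev P l k with h | ⟨k0, h1, h2, h3, h4⟩
    · rcases noB_or_next Q l k with g | ⟨l1, g1, g2, g3, g4⟩
      · exact K1b u P Q hPQ l k hk hl hkl h g 1 0 (by rcases hu with rfl | rfl <;> decide)
      · exact K3b u P Q hPQ l l1 k hk hl g1 g2 g3 (noB_mono h le_rfl g3.le) g4
          (noB_mono h g2.le le_rfl) 2 0 (by rcases hu with rfl | rfl <;> decide)
    · rcases noB_or_next Q l k with g | ⟨l1, g1, g2, g3, g4⟩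
      · exact K2b u P Q hPQ l k0 k h1 hk hl h2 h3 h4 (noB_mono g h2.le le_rfl)
          (noB_mono g le_rfl h3.le) 2 0 (by rcases hu with rfl | rfl <;> decide)
      · rcases lt_trichotomy k0 l1 with h5 | rfl | h5
        · exact K5b u P Q hPQ l k0 l1 k h1 hk hl g1 h2 h5 g3 h4 g4 3 0
            (by rcases hu with rfl | rfl <;> decide)
        · exact absurd g1 (dPQ P Q hPQ h1)
        · exact K4 u P Q hPQ k0 k l l1 h1 hk hl g1 h3 g2 (Or.inr h5) h4 g4 1 2
            (by rcases hu with rfl | rfl <;> decide)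

end pick

/-- number of beads of a row in positions `< n` -/
def cnt {e : ℕ} (R : Fin e → Bool) : ℕ → ℕ
  | 0 => 0
  | n + 1 => cnt R n + (if ∃ h : n < e, R ⟨n, h⟩ = true then 1 else 0)

theorem cnt_succ {e : ℕ} (R : Fin e → Bool) (i : Fin e) :
    cnt R (i.1 + 1) = cnt R i.1 + (if R i = true then 1 else 0) := by
  rw [cnt]
  congr 1
  by_cases h : R i = true
  · rw [if_pos h, if_pos ⟨i.2, h⟩]
  · rw [if_neg h, if_neg (fun ⟨_, h'⟩ => h h')]

theorem cnt_pred {e : ℕ} (R : Fin e → Bool) (i : Fin e) (hi : 0 < i.1) :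
    cnt R i.1 = cnt R (i.1 - 1) + (if R (colPred i) = true then 1 else 0) := by
  have := cnt_succ R (colPred i)
  have h2 : (colPred i).1 = i.1 - 1 := rfl
  rw [h2] at this
  rw [← this]; congr 1; omega

theorem cnt_mv {e : ℕ} (M : Fin 3 → Fin e → Bool) (s : Fin 3) (i : Fin e) (hi : 0 < i.1)
    (hm : minus M s i) (t : Fin 3) (n : ℕ) :
    cnt (mv M s i t) n = cnt (M t) n + (if t = s ∧ n = i.1 then 1 else 0) := by
  by_cases hts : t = s
  · subst hts
    simp only [true_and]
    induction n with
    | zero => rw [if_neg (by omega)]; simp [cnt]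
    | succ n ih =>
      by_cases hn : n < e
      · have h1 := cnt_succ (mv M t i t) ⟨n, hn⟩
        have h2 := cnt_succ (M t) ⟨n, hn⟩
        simp only at h1 h2
        rw [h1, h2, ih]
        by_cases a1 : n = i.1
        · have : (⟨n, hn⟩ : Fin e) = i := Fin.ext a1
          rw [this]
          have b1 : mv M t i t i = false := by simp [mv]
          rw [b1, hm.2]
          simp [a1]
        · by_cases a2 : n + 1 = i.1
          · have : (⟨n, hn⟩ : Fin e) = colPred i := Fin.ext (by simp only [colPred]; omega)
            have hne : colPred i ≠ i := by
              intro h; have := congrArg Fin.val h; simp only [colPred] at this; omega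
            rw [this]
            have b1 : mv M t i t (colPred i) = true := by simp [mv, hne]
            rw [b1, hm.1]
            simp [a1, a2]
          · have b1 : mv M t i t ⟨n, hn⟩ = M t ⟨n, hn⟩ := by
              have c1 : (⟨n, hn⟩ : Fin e) ≠ i := fun h => a1 (congrArg Fin.val h)
              have c2 : (⟨n, hn⟩ : Fin e) ≠ colPred i := by
                intro h; have := congrArg Fin.val h; simp only [colPred] at this; omega
              simp [mv, c1, c2]
            rw [b1, if_neg a1, if_neg a2]; omega
      · have e1 : ∀ R : Fin e → Bool, cnt R (n + 1) = cnt R n := by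
          intro R; rw [cnt, if_neg (fun ⟨h, _⟩ => hn h)]; rfl
        rw [e1, e1, ih, if_neg (by have := i.2; omega), if_neg (by have := i.2; omega)]
  · have : mv M s i t = M t := by funext c; simp [mv, hts]
    rw [this, if_neg (fun h => hts h.1)]; rfl

theorem cnt_base {e : ℕ} (R : Fin e → Bool) (k : ℕ) (h : ∀ i, R i = true ↔ i.1 < k) (n : ℕ) :
    cnt R n = min n (min k e) := by
  induction n with
  | zero => simp [cnt]
  | succ n ih =>
    rw [cnt, ih]
    by_cases hn : n < e ∧ n < k
    · rw [if_pos ⟨hn.1, (h _).2 hn.2⟩]; omega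
    · rw [if_neg]
      · omega
      · rintro ⟨h1, h2⟩; exact hn ⟨h1, (h _).1 h2⟩

/-- local data at a move -/
theorem sig_cnt {e : ℕ} (M : Fin 3 → Fin e → Bool) (i : Fin e) (hi : 0 < i.1) (t : Fin 3) :
    (minus M t i ↔ cnt (M t) i.1 = cnt (M t) (i.1 - 1) ∧ cnt (M t) (i.1 + 1) = cnt (M t) i.1 + 1) ∧
    (plus M t i ↔ cnt (M t) i.1 = cnt (M t) (i.1 - 1) + 1 ∧ cnt (M t) (i.1 + 1) = cnt (M t) i.1) ∧
    cnt (M t) (i.1 - 1) ≤ cnt (M t) i.1 ∧ cnt (M t) i.1 ≤ cnt (M t) (i.1 - 1) + 1 ∧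
    cnt (M t) i.1 ≤ cnt (M t) (i.1 + 1) ∧ cnt (M t) (i.1 + 1) ≤ cnt (M t) i.1 + 1 := by
  have h1 := cnt_succ (M t) i
  have h2 := cnt_pred (M t) i hi
  unfold minus plus
  cases ha : M t i <;> cases hb : M t (colPred i) <;> simp only [ha, hb] at h1 h2 <;>
    simp at h1 h2 ⊢ <;> omega

/-- the part of the Kleshchev condition that we use, in terms of counting functions -/
theorem MK_rec {e : ℕ} (Pr : (Fin 3 → ℕ → ℕ) → Prop)
    (hbase : ∀ t : Fin 3 → ℕ, (∀ s, t s ≤ e) → Pr (fun s n => min n (t s)))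
    (hstep : ∀ (f g : Fin 3 → ℕ → ℕ) (s : Fin 3) (i : ℕ), 0 < i → i < e →
      (∀ t n, g t n = f t n + (if t = s ∧ n = i then 1 else 0)) →
      (∀ t, f t (i - 1) ≤ f t i ∧ f t i ≤ f t (i - 1) + 1 ∧ f t i ≤ f t (i + 1) ∧
        f t (i + 1) ≤ f t i + 1) →
      (f s i = f s (i - 1) ∧ f s (i + 1) = f s i + 1) →
      (s = 0 → ¬ (f 1 i = f 1 (i - 1) + 1 ∧ f 1 (i + 1) = f 1 i) ∧
        ((f 2 i = f 2 (i - 1) + 1 ∧ f 2 (i + 1) = f 2 i) →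
          (f 1 i = f 1 (i - 1) ∧ f 1 (i + 1) = f 1 i + 1))) →
      (s = 1 → ¬ (f 2 i = f 2 (i - 1) + 1 ∧ f 2 (i + 1) = f 2 i)) → Pr g → Pr f)
    (M : Fin 3 → Fin e → Bool) (h : MK M) : Pr (fun s => cnt (M s)) := by
  induction h with
  | base M h =>
    choose k hk using h
    have := hbase (fun s => min (k s) e) (fun s => min_le_right _ _)
    convert this using 3 with s n
    exact cnt_base (M s) (k s) (hk s) n
  | step M s i hi hm h0 h1 h ih =>
    refine hstep _ _ s i.1 hi i.2 (fun t n => cnt_mv M s i hi hm t n)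
      (fun t => (sig_cnt M i hi t).2.2) ((sig_cnt M i hi s).1.1 hm) ?_ ?_ ih
    · intro hs
      rw [← (sig_cnt M i hi 1).2.1, ← (sig_cnt M i hi 2).2.1, ← (sig_cnt M i hi 1).1]
      exact h0 hs
    · intro hs
      rw [← (sig_cnt M i hi 2).2.1]
      exact h1 hs

theorem inv01 {e : ℕ} (C : ℕ) (M : Fin 3 → Fin e → Bool) (h : MK M) :
    cnt (M 1) e ≤ cnt (M 0) e + C → ∀ n, cnt (M 1) n ≤ cnt (M 0) n + C := by
  refine MK_rec (fun f => f 1 e ≤ f 0 e + C → ∀ n, f 1 n ≤ f 0 n + C) ?_ ?_ M h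
  · intro t ht h n
    have := ht 0
    have := ht 1
    simp only at h ⊢
    omega
  · intro f g s i i0 ie hg hl hs h0 h1 ih hC n
    have hne : ¬ e = i := by omega
    have ih := ih (by
      rw [hg 1 e, hg 0 e]
      simpa [hne] using hC)
    have l0 := hl 0
    have l1 := hl 1
    have a := ih n
    have b := ih (i - 1)
    have c := ih (i + 1)
    have e1 : ¬ i - 1 = i := by omega
    have e2 : ¬ i + 1 = i := by omega
    rw [hg, hg] at a b c
    by_cases hs0 : s = 0
    · subst hs0
      have h0 := (h0 rfl).1
      simp [e1] at a b c
      by_cases hn : n = i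
      · subst hn; simp at a; omega
      · simp [hn] at a; exact a
    · have : ¬ (0 = s ∧ n = i) := fun h => hs0 h.1.symm
      rw [if_neg this] at a
      omega

theorem inv12 {e : ℕ} (C : ℕ) (M : Fin 3 → Fin e → Bool) (h : MK M) :
    cnt (M 2) e ≤ cnt (M 1) e + C → ∀ n, cnt (M 2) n ≤ cnt (M 1) n + C := by
  refine MK_rec (fun f => f 2 e ≤ f 1 e + C → ∀ n, f 2 n ≤ f 1 n + C) ?_ ?_ M h
  · intro t ht h n
    have := ht 2
    have := ht 1
    simp only at h ⊢
    omega
  · intro f g s i i0 ie hg hl hs h0 h1 ih hC n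
    have hne : ¬ e = i := by omega
    have ih := ih (by
      rw [hg 1 e, hg 2 e]
      simpa [hne] using hC)
    have l0 := hl 2
    have l1 := hl 1
    have a := ih n
    have b := ih (i - 1)
    have c := ih (i + 1)
    have e1 : ¬ i - 1 = i := by omega
    have e2 : ¬ i + 1 = i := by omega
    rw [hg, hg] at a b c
    by_cases hs0 : s = 1
    · subst hs0
      have h0 := (h1 rfl)
      simp [e1] at a b c
      by_cases hn : n = i
      · subst hn; simp at a; omega
      · simp [hn] at a; exact a
    · have : ¬ (1 = s ∧ n = i) := fun h => hs0 h.1.symm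
      rw [if_neg this] at a
      omega

theorem fin3 (s : Fin 3) : s = 0 ∨ s = 1 ∨ s = 2 := by omega

theorem invBig {e : ℕ} (C : ℕ) (M : Fin 3 → Fin e → Bool) (h : MK M) :
    (cnt (M 2) e ≤ cnt (M 0) e + C ∧ cnt (M 0) e ≤ cnt (M 1) e ∧ cnt (M 2) e ≤ cnt (M 1) e) →
    ∀ m n, m ≤ n → cnt (M 2) n + cnt (M 1) m ≤ cnt (M 0) m + cnt (M 1) n + C := by
  refine MK_rec (fun f => (f 2 e ≤ f 0 e + C ∧ f 0 e ≤ f 1 e ∧ f 2 e ≤ f 1 e) →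
    ∀ m n, m ≤ n → f 2 n + f 1 m ≤ f 0 m + f 1 n + C) ?_ ?_ M h
  · intro t ht h m n hmn
    have := ht 0
    have := ht 2
    have := ht 1
    simp only at h ⊢
    omega
  · intro f g s i i0 ie hg hl hs h0 h1 ih hC m n hmn
    have hne : ¬ e = i := by omega
    have ih := ih (by
      rw [hg 0 e, hg 1 e, hg 2 e]
      simpa [hne] using hC)
    have l0 := hl 0
    have l1 := hl 1
    have l2 := hl 2
    have e1 : ¬ i - 1 = i := by omega
    have a := ih m n hmn
    rcases fin3 s with rfl | rfl | rfl
    · obtain ⟨p1, p2⟩ := h0 rfl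
      simp [hg] at ih a
      by_cases hm : m = i
      · subst hm
        by_cases hn : n = m
        · subst hn
          have q1 := ih (n - 1) (n - 1) le_rfl
          have q2 := ih (n + 1) (n + 1) le_rfl
          have q3 := ih (n - 1) n (by omega)
          simp [e1] at q1 q2 q3 a
          omega
        · have q1 := ih (m - 1) n (by omega)
          have q2 := ih (m + 1) n (by omega)
          simp [e1] at q1 q2 a
          omega
      · simp [hm] at a; exact a
    · have p1 := h1 rfl
      simp [hg] at ih a
      by_cases hn : n = i
      · subst hn
        by_cases hm : m = n
        · subst hm; simp at a; omega
        · have q1 := ih m (n - 1) (by omega)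
          have q2 := ih m (n + 1) (by omega)
          simp [e1, hm] at q1 q2 a
          omega
      · simp [hn] at a; omega
    · simp [hg] at a; omega

theorem invSmall {e : ℕ} (C : ℕ) (M : Fin 3 → Fin e → Bool) (h : MK M) :
    (cnt (M 2) e ≤ cnt (M 0) e + C ∧ cnt (M 1) e ≤ cnt (M 0) e ∧ cnt (M 1) e ≤ cnt (M 2) e) →
    ∀ m n, m ≤ n → cnt (M 2) m + cnt (M 1) n ≤ cnt (M 0) n + cnt (M 1) m + C := by
  refine MK_rec (fun f => (f 2 e ≤ f 0 e + C ∧ f 1 e ≤ f 0 e ∧ f 1 e ≤ f 2 e) →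
    ∀ m n, m ≤ n → f 2 m + f 1 n ≤ f 0 n + f 1 m + C) ?_ ?_ M h
  · intro t ht h m n hmn
    have := ht 0
    have := ht 2
    have := ht 1
    simp only at h ⊢
    omega
  · intro f g s i i0 ie hg hl hs h0 h1 ih hC m n hmn
    have hne : ¬ e = i := by omega
    have ih := ih (by
      rw [hg 0 e, hg 1 e, hg 2 e]
      simpa [hne] using hC)
    have l0 := hl 0
    have l1 := hl 1
    have l2 := hl 2
    have e1 : ¬ i - 1 = i := by omega
    have a := ih m n hmn
    rcases fin3 s with rfl | rfl | rfl
    · obtain ⟨p1, p2⟩ := h0 rfl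
      simp [hg] at ih a
      by_cases hn : n = i
      · subst hn
        by_cases hm : m = n
        · subst hm
          have q1 := ih (m - 1) (m - 1) le_rfl
          have q2 := ih (m + 1) (m + 1) le_rfl
          have q3 := ih m (m + 1) (by omega)
          simp [e1] at q1 q2 q3 a
          omega
        · have q1 := ih m (n - 1) (by omega)
          have q2 := ih m (n + 1) (by omega)
          simp [e1] at q1 q2 a
          omega
      · simp [hn] at a; exact a
    · have p1 := h1 rfl
      simp [hg] at ih a
      by_cases hm : m = i
      · subst hm
        by_cases hn : n = m
        · subst hn; simp at a; omega
        · have q1 := ih (m - 1) n (by omega)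
          have q2 := ih (m + 1) n (by omega)
          simp [e1, hn] at q1 q2 a
          omega
      · simp [hm] at a; omega
    · simp [hg] at a; omega

/-! ### Counting in the matrices of `D^u` -/

def ind {e : ℕ} (S : Finset (Fin e)) : Fin e → Bool := fun x => decide (x ∈ S)

theorem cnt_mono {e : ℕ} (R : Fin e → Bool) : Monotone (cnt R) := by
  apply monotone_nat_of_le_succ
  intro n; rw [cnt]; omega

theorem cnt_pos {e : ℕ} (S : Finset (Fin e)) (n : ℕ) (h : 0 < cnt (ind S) n) :
    ∃ x ∈ S, x.1 < n := by
  induction n with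
  | zero => simp [cnt] at h
  | succ n ih =>
    rw [cnt] at h
    split_ifs at h with h1
    · obtain ⟨h2, h3⟩ := h1
      exact ⟨⟨n, h2⟩, by simpa [ind] using h3, by simp⟩
    · obtain ⟨x, h1, h2⟩ := ih (by omega)
      exact ⟨x, h1, by omega⟩

theorem cnt_after {e : ℕ} (S : Finset (Fin e)) (m n : ℕ) (h : cnt (ind S) m < cnt (ind S) n) :
    ∃ x ∈ S, m ≤ x.1 := by
  induction n with
  | zero => simp [cnt] at h
  | succ n ih =>
    rw [cnt] at h
    split_ifs at h with h1
    · obtain ⟨h2, h3⟩ := h1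
      by_cases hmn : m ≤ n
      · exact ⟨⟨n, h2⟩, by simpa [ind] using h3, hmn⟩
      · have := cnt_mono (ind S) (by omega : n + 1 ≤ m)
        rw [cnt, if_pos ⟨h2, h3⟩] at this
        omega
    · exact ih (by omega)

def b2n (b : Bool) : ℕ := if b = true then 1 else 0

theorem cell_rel : ∀ (u : Fin 6) (s : Fin 3) (p q a b : Bool),
    (p && q) = false → ((a && b) = true → (p || q) = true) → ((a && !b) = true → p = true) →
    ((b && !a) = true → q = true) →
    (role u s = 0 → b2n (cell u p q a b s) = b2n a) ∧
    (role u s = 1 → b2n (cell u p q a b s) + b2n a = b2n p + b2n b) ∧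
    (role u s = 2 → b2n (cell u p q a b s) + b2n b = b2n p + b2n q) := by decide

theorem lt_succ_b2n {e : ℕ} (c x : Fin e) : (if c.1 < x.1 + 1 then 1 else 0) =
    (if c.1 < x.1 then 1 else 0) + b2n (decide (x = c)) := by
  by_cases h : x = c
  · subst h; simp [b2n]
  · have : x.1 ≠ c.1 := fun h' => h (Fin.ext h')
    by_cases h2 : c.1 < x.1
    · simp [h, h2, b2n, show c.1 < x.1 + 1 by omega]
    · simp [h, h2, b2n, show ¬ c.1 < x.1 + 1 by omega]

theorem cnt_rel {e : ℕ} (u : Fin 6) (P Q : Finset (Fin e)) (hPQ : Disjoint P Q) (c h : Fin e)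
    (hch : (c = h ∧ (c ∈ P ∨ c ∈ Q)) ∨ (c ∈ P ∧ h ∈ Q)) (s : Fin 3) (n : ℕ) :
    (role u s = 0 → cnt (fl (matC u P Q c h) s) n = if c.1 < n then 1 else 0) ∧
    (role u s = 1 → cnt (fl (matC u P Q c h) s) n + (if c.1 < n then 1 else 0) =
      cnt (ind P) n + if h.1 < n then 1 else 0) ∧
    (role u s = 2 → cnt (fl (matC u P Q c h) s) n + (if h.1 < n then 1 else 0) =
      cnt (ind P) n + cnt (ind Q) n) := by
  induction n with
  | zero => simp [cnt]
  | succ n ih =>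
    by_cases hn : n < e
    · obtain ⟨x, rfl⟩ : ∃ x : Fin e, x.1 = n := ⟨⟨n, hn⟩, rfl⟩
      have k1 := cnt_succ (fl (matC u P Q c h) s) x
      have k2 := cnt_succ (ind P) x
      have k3 := cnt_succ (ind Q) x
      have k4 := lt_succ_b2n c x
      have k5 := lt_succ_b2n h x
      rw [k1, k2, k3, k4, k5]
      have d1 : x ∈ P → x ∉ Q := fun hx => Finset.disjoint_left.1 hPQ hx
      obtain ⟨j0, j1, j2⟩ := cell_rel u s (decide (x ∈ P)) (decide (x ∈ Q)) (decide (x = c))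
        (decide (x = h))
        (by by_cases hp : x ∈ P <;> simp [hp, d1])
        (by
          intro hab
          simp only [Bool.and_eq_true, decide_eq_true_eq] at hab
          obtain ⟨rfl, rfl⟩ := hab
          rw [Bool.or_eq_true, decide_eq_true_eq, decide_eq_true_eq]
          tauto)
        (by
          intro hab
          simp only [Bool.and_eq_true, Bool.not_eq_true', decide_eq_true_eq,
            decide_eq_false_iff_not] at hab
          obtain ⟨rfl, hne⟩ := hab
          rw [decide_eq_true_eq]
          tauto)
        (by
          intro hab
          simp only [Bool.and_eq_true, Bool.not_eq_true', decide_eq_true_eq,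
            decide_eq_false_iff_not] at hab
          obtain ⟨rfl, hne⟩ := hab
          rw [decide_eq_true_eq]
          have hne' : c ≠ x := fun h => hne h.symm
          tauto)
      obtain ⟨i0, i1, i2⟩ := ih
      have z1 : (if fl (matC u P Q c h) s x = true then 1 else 0) =
          b2n (cell u (decide (x ∈ P)) (decide (x ∈ Q)) (decide (x = c)) (decide (x = h)) s) := rfl
      have z2 : (if ind P x = true then 1 else 0) = b2n (decide (x ∈ P)) := rfl
      have z3 : (if ind Q x = true then 1 else 0) = b2n (decide (x ∈ Q)) := rfl
      rw [z1, z2, z3]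
      refine ⟨fun hr => ?_, fun hr => ?_, fun hr => ?_⟩
      · have := i0 hr; have := j0 hr; omega
      · have := i1 hr; have := j1 hr; omega
      · have := i2 hr; have := j2 hr; omega
    · have e1 : ∀ R : Fin e → Bool, cnt R (n + 1) = cnt R n := by
        intro R; rw [cnt, if_neg (fun ⟨h, _⟩ => hn h)]; rfl
      have f1 : (c.1 < n + 1) ↔ (c.1 < n) := by have := c.2; omega
      have f2 : (h.1 < n + 1) ↔ (h.1 < n) := by have := h.2; omega
      simp only [e1, f1, f2]
      exact ih

theorem has_after {e : ℕ} (S : Finset (Fin e)) (c : Fin e)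
    (h : cnt (ind S) (c.1 + 1) < cnt (ind S) e) : ∃ x ∈ S, c < x := by
  obtain ⟨x, hx, h1⟩ := cnt_after S _ _ h
  exact ⟨x, hx, by omega⟩

theorem has_before {e : ℕ} (S : Finset (Fin e)) (c : Fin e)
    (h : 0 < cnt (ind S) c.1) : ∃ x ∈ S, x < c := by
  obtain ⟨x, hx, h1⟩ := cnt_pos S _ h
  exact ⟨x, hx, by omega⟩

theorem cnt_mem {e : ℕ} (S : Finset (Fin e)) (c : Fin e) (h : c ∈ S) :
    cnt (ind S) (c.1 + 1) = cnt (ind S) c.1 + 1 := by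
  rw [cnt_succ]; simp [ind, h]

theorem cnt_nmem {e : ℕ} (S : Finset (Fin e)) (c : Fin e) (h : c ∉ S) :
    cnt (ind S) (c.1 + 1) = cnt (ind S) c.1 := by
  rw [cnt_succ]; simp [ind, h]

theorem cnt_ge_one {e : ℕ} (S : Finset (Fin e)) (h : S.Nonempty) : 1 ≤ cnt (ind S) e := by
  obtain ⟨x, hx⟩ := h
  have h1 := cnt_mem S x hx
  have h2 := cnt_mono (ind S) (show x.1 + 1 ≤ e from x.2)
  omega

/-- order facts about the counting functions at the two special positions -/
theorem cnt_facts {e : ℕ} (S : Finset (Fin e)) (c h : Fin e) :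
    cnt (ind S) c.1 ≤ cnt (ind S) (c.1 + 1) ∧ cnt (ind S) (c.1 + 1) ≤ cnt (ind S) e ∧
    cnt (ind S) h.1 ≤ cnt (ind S) (h.1 + 1) ∧ cnt (ind S) (h.1 + 1) ≤ cnt (ind S) e ∧
    (c < h → cnt (ind S) (c.1 + 1) ≤ cnt (ind S) h.1) ∧
    (h < c → cnt (ind S) (h.1 + 1) ≤ cnt (ind S) c.1) := by
  refine ⟨cnt_mono _ (by omega), cnt_mono _ (by omega), cnt_mono _ (by omega),
    cnt_mono _ (by omega), fun _ => cnt_mono _ (by omega), fun _ => cnt_mono _ (by omega)⟩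

/-- values of the two marks at the special positions -/
theorem marks {e : ℕ} (c h : Fin e) (f : ℕ → ℕ) (hf : ∀ n, f n = if c.1 < n then 1 else 0) :
    f c.1 = 0 ∧ f (c.1 + 1) = 1 ∧ f e = 1 ∧ (c < h → f h.1 = 1 ∧ f (h.1 + 1) = 1) ∧
    (h < c → f h.1 = 0 ∧ f (h.1 + 1) = 0) := by
  refine ⟨?_, ?_, ?_, fun _ => ⟨?_, ?_⟩, fun _ => ⟨?_, ?_⟩⟩ <;> rw [hf]
  · exact if_neg (lt_irrefl _)
  · exact if_pos (by omega)
  · exact if_pos c.2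
  · exact if_pos (by omega)
  · exact if_pos (by omega)
  · exact if_neg (by omega)
  · exact if_neg (by omega)

theorem case0 {e : ℕ} (P Q : Finset (Fin e)) (hPQ : Disjoint P Q) (hP : P.Nonempty) (hQ : Q.Nonempty)
    (c h : Fin e) (hch : (c = h ∧ (c ∈ P ∨ c ∈ Q)) ∨ (c ∈ P ∧ h ∈ Q))
    (hK : MK (fl (matC 0 P Q c h))) : Concl 0 P Q c h := by
  have p1 := cnt_ge_one P hP
  have q1 := cnt_ge_one Q hQ
  have hA := fun n => (cnt_rel 0 P Q hPQ c h hch 0 n).1 rfl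
  have hB := fun n => (cnt_rel 0 P Q hPQ c h hch 1 n).2.1 rfl
  have hD := fun n => (cnt_rel 0 P Q hPQ c h hch 2 n).2.2 rfl
  obtain ⟨f, hf⟩ : ∃ f : ℕ → ℕ, ∀ n, f n = if c.1 < n then 1 else 0 := ⟨_, fun _ => rfl⟩
  obtain ⟨g, hg⟩ : ∃ g : ℕ → ℕ, ∀ n, g n = if h.1 < n then 1 else 0 := ⟨_, fun _ => rfl⟩
  have mf := marks c h f hf
  have mg := marks h c g hg
  simp only [← hf, ← hg] at hA hB hD
  clear hf hg
  have eA := hA e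
  have eB := hB e
  have eD := hD e
  have j0 := inv01 (cnt (ind P) e - 1) _ hK (by omega)
  have i1 := j0 c.1
  have j1 := inv12 (cnt (ind Q) e - 1) _ hK (by omega)
  have i2 := j1 h.1
  have a0 := hA c.1
  have b0 := hB c.1
  have d0 := hD c.1
  have a1 := hA h.1
  have b1 := hB h.1
  have d1 := hD h.1
  have fP := cnt_facts P c h
  have fQ := cnt_facts Q c h
  rcases hch with ⟨rfl, hc | hc⟩ | ⟨hc, hh⟩
  · have hn : c ∉ Q := fun hx => Finset.disjoint_left.1 hPQ hc hx
    have m1 := cnt_mem P c hc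
    have m2 := cnt_nmem Q c hn
    exact al14 P Q hPQ 0 (Or.inl rfl) c hc (has_after Q c (by omega))
  · have hn : c ∉ P := fun hx => Finset.disjoint_left.1 hPQ hx hc
    have m1 := cnt_mem Q c hc
    have m2 := cnt_nmem P c hn
    exact be15 P Q hPQ 0 (Or.inl rfl) c hc (has_after P c (by omega))
  · have hn : c ∉ Q := fun hx => Finset.disjoint_left.1 hPQ hc hx
    have hn2 : h ∉ P := fun hx => Finset.disjoint_left.1 hPQ hx hh
    have m1 := cnt_mem P c hc
    have m2 := cnt_nmem Q c hn
    have m3 := cnt_mem Q h hh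
    have m4 := cnt_nmem P h hn2
    exact ga1 P Q hPQ c h hc hh (fun _ => has_after P c (by omega)) (fun _ => has_after Q h (by omega))

theorem case1 {e : ℕ} (P Q : Finset (Fin e)) (hPQ : Disjoint P Q) (hP : P.Nonempty) (hQ : Q.Nonempty)
    (c h : Fin e) (hch : (c = h ∧ (c ∈ P ∨ c ∈ Q)) ∨ (c ∈ P ∧ h ∈ Q))
    (hK : MK (fl (matC 1 P Q c h))) : Concl 1 P Q c h := by
  have p1 := cnt_ge_one P hP
  have q1 := cnt_ge_one Q hQ
  have hA := fun n => (cnt_rel 1 P Q hPQ c h hch 1 n).1 rfl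
  have hB := fun n => (cnt_rel 1 P Q hPQ c h hch 2 n).2.1 rfl
  have hD := fun n => (cnt_rel 1 P Q hPQ c h hch 0 n).2.2 rfl
  obtain ⟨f, hf⟩ : ∃ f : ℕ → ℕ, ∀ n, f n = if c.1 < n then 1 else 0 := ⟨_, fun _ => rfl⟩
  obtain ⟨g, hg⟩ : ∃ g : ℕ → ℕ, ∀ n, g n = if h.1 < n then 1 else 0 := ⟨_, fun _ => rfl⟩
  have mf := marks c h f hf
  have mg := marks h c g hg
  simp only [← hf, ← hg] at hA hB hD
  clear hf hg
  have eA := hA e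
  have eB := hB e
  have eD := hD e
  have j0 := invSmall 0 _ hK (by omega)
  have i1 := j0 (h.1 + 1) (h.1 + 1) le_rfl
  have i2 := j0 c.1 (c.1 + 1) (by omega)
  have i3 := j0 h.1 (h.1 + 1) (by omega)
  have j1 := inv12 (cnt (ind P) e - 1) _ hK (by omega)
  have i4 := j1 c.1
  have a0 := hA c.1
  have b0 := hB c.1
  have d0 := hD c.1
  have a1 := hA (c.1 + 1)
  have b1 := hB (c.1 + 1)
  have d1 := hD (c.1 + 1)
  have a2 := hA h.1
  have b2 := hB h.1
  have d2 := hD h.1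
  have a3 := hA (h.1 + 1)
  have b3 := hB (h.1 + 1)
  have d3 := hD (h.1 + 1)
  have fP := cnt_facts P c h
  have fQ := cnt_facts Q c h
  rcases hch with ⟨rfl, hc | hc⟩ | ⟨hc, hh⟩
  · have hn : c ∉ Q := fun hx => Finset.disjoint_left.1 hPQ hc hx
    have m1 := cnt_mem P c hc
    have m2 := cnt_nmem Q c hn
    exact al26 P Q hPQ 1 (Or.inl rfl) c hc (has_before Q c (by omega))
  · have hn : c ∉ P := fun hx => Finset.disjoint_left.1 hPQ hx hc
    have m1 := cnt_mem Q c hc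
    have m2 := cnt_nmem P c hn
    exact be2 P Q hPQ c hc (has_after P c (by omega)) (has_before Q c (by omega))
  · have hn : c ∉ Q := fun hx => Finset.disjoint_left.1 hPQ hc hx
    have hn2 : h ∉ P := fun hx => Finset.disjoint_left.1 hPQ hx hh
    have m1 := cnt_mem P c hc
    have m2 := cnt_nmem Q c hn
    have m3 := cnt_mem Q h hh
    have m4 := cnt_nmem P h hn2
    exact ga25 P Q hPQ 1 (Or.inl rfl) c h hc hh (fun _ => has_after P c (by omega)) (fun _ => has_before Q h (by omega))

theorem case2 {e : ℕ} (P Q : Finset (Fin e)) (hPQ : Disjoint P Q) (hP : P.Nonempty) (hQ : Q.Nonempty)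
    (c h : Fin e) (hch : (c = h ∧ (c ∈ P ∨ c ∈ Q)) ∨ (c ∈ P ∧ h ∈ Q))
    (hK : MK (fl (matC 2 P Q c h))) : Concl 2 P Q c h := by
  have p1 := cnt_ge_one P hP
  have q1 := cnt_ge_one Q hQ
  have hA := fun n => (cnt_rel 2 P Q hPQ c h hch 2 n).1 rfl
  have hB := fun n => (cnt_rel 2 P Q hPQ c h hch 0 n).2.1 rfl
  have hD := fun n => (cnt_rel 2 P Q hPQ c h hch 1 n).2.2 rfl
  obtain ⟨f, hf⟩ : ∃ f : ℕ → ℕ, ∀ n, f n = if c.1 < n then 1 else 0 := ⟨_, fun _ => rfl⟩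
  obtain ⟨g, hg⟩ : ∃ g : ℕ → ℕ, ∀ n, g n = if h.1 < n then 1 else 0 := ⟨_, fun _ => rfl⟩
  have mf := marks c h f hf
  have mg := marks h c g hg
  simp only [← hf, ← hg] at hA hB hD
  clear hf hg
  have eA := hA e
  have eB := hB e
  have eD := hD e
  have j0 := invBig 0 _ hK (by omega)
  have i1 := j0 (c.1 + 1) (c.1 + 1) le_rfl
  have i2 := j0 c.1 (c.1 + 1) (by omega)
  have i3 := j0 h.1 (h.1 + 1) (by omega)
  have j1 := inv01 (cnt (ind Q) e - 1) _ hK (by omega)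
  have i4 := j1 h.1
  have a0 := hA c.1
  have b0 := hB c.1
  have d0 := hD c.1
  have a1 := hA (c.1 + 1)
  have b1 := hB (c.1 + 1)
  have d1 := hD (c.1 + 1)
  have a2 := hA h.1
  have b2 := hB h.1
  have d2 := hD h.1
  have a3 := hA (h.1 + 1)
  have b3 := hB (h.1 + 1)
  have d3 := hD (h.1 + 1)
  have fP := cnt_facts P c h
  have fQ := cnt_facts Q c h
  rcases hch with ⟨rfl, hc | hc⟩ | ⟨hc, hh⟩
  · have hn : c ∉ Q := fun hx => Finset.disjoint_left.1 hPQ hc hx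
    have m1 := cnt_mem P c hc
    have m2 := cnt_nmem Q c hn
    exact al3 P Q hPQ c hc (has_after Q c (by omega)) (has_before P c (by omega))
  · have hn : c ∉ P := fun hx => Finset.disjoint_left.1 hPQ hx hc
    have m1 := cnt_mem Q c hc
    have m2 := cnt_nmem P c hn
    exact be36 P Q hPQ 2 (Or.inl rfl) c hc (has_before P c (by omega))
  · have hn : c ∉ Q := fun hx => Finset.disjoint_left.1 hPQ hc hx
    have hn2 : h ∉ P := fun hx => Finset.disjoint_left.1 hPQ hx hh
    have m1 := cnt_mem P c hc
    have m2 := cnt_nmem Q c hn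
    have m3 := cnt_mem Q h hh
    have m4 := cnt_nmem P h hn2
    exact ga34 P Q hPQ 2 (Or.inl rfl) c h hc hh (fun _ => has_before P c (by omega)) (fun _ => has_after Q h (by omega))

theorem case3 {e : ℕ} (P Q : Finset (Fin e)) (hPQ : Disjoint P Q) (hP : P.Nonempty) (hQ : Q.Nonempty)
    (c h : Fin e) (hch : (c = h ∧ (c ∈ P ∨ c ∈ Q)) ∨ (c ∈ P ∧ h ∈ Q))
    (hK : MK (fl (matC 3 P Q c h))) : Concl 3 P Q c h := by
  have p1 := cnt_ge_one P hP
  have q1 := cnt_ge_one Q hQ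
  have hA := fun n => (cnt_rel 3 P Q hPQ c h hch 1 n).1 rfl
  have hB := fun n => (cnt_rel 3 P Q hPQ c h hch 0 n).2.1 rfl
  have hD := fun n => (cnt_rel 3 P Q hPQ c h hch 2 n).2.2 rfl
  obtain ⟨f, hf⟩ : ∃ f : ℕ → ℕ, ∀ n, f n = if c.1 < n then 1 else 0 := ⟨_, fun _ => rfl⟩
  obtain ⟨g, hg⟩ : ∃ g : ℕ → ℕ, ∀ n, g n = if h.1 < n then 1 else 0 := ⟨_, fun _ => rfl⟩
  have mf := marks c h f hf
  have mg := marks h c g hg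
  simp only [← hf, ← hg] at hA hB hD
  clear hf hg
  have eA := hA e
  have eB := hB e
  have eD := hD e
  have j0 := invSmall (cnt (ind Q) e - 1) _ hK (by omega)
  have i1 := j0 h.1 h.1 le_rfl
  have i2 := j0 c.1 (c.1 + 1) (by omega)
  have i3 := j0 h.1 (h.1 + 1) (by omega)
  have j1 := inv01 0 _ hK (by omega)
  have i4 := j1 (c.1 + 1)
  have a0 := hA c.1
  have b0 := hB c.1
  have d0 := hD c.1
  have a1 := hA (c.1 + 1)
  have b1 := hB (c.1 + 1)
  have d1 := hD (c.1 + 1)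
  have a2 := hA h.1
  have b2 := hB h.1
  have d2 := hD h.1
  have a3 := hA (h.1 + 1)
  have b3 := hB (h.1 + 1)
  have d3 := hD (h.1 + 1)
  have fP := cnt_facts P c h
  have fQ := cnt_facts Q c h
  rcases hch with ⟨rfl, hc | hc⟩ | ⟨hc, hh⟩
  · have hn : c ∉ Q := fun hx => Finset.disjoint_left.1 hPQ hc hx
    have m1 := cnt_mem P c hc
    have m2 := cnt_nmem Q c hn
    exact al14 P Q hPQ 3 (Or.inr rfl) c hc (has_after Q c (by omega))
  · have hn : c ∉ P := fun hx => Finset.disjoint_left.1 hPQ hx hc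
    have m1 := cnt_mem Q c hc
    have m2 := cnt_nmem P c hn
    exact be4 P Q hPQ c hc (has_before P c (by omega)) (has_after Q c (by omega))
  · have hn : c ∉ Q := fun hx => Finset.disjoint_left.1 hPQ hc hx
    have hn2 : h ∉ P := fun hx => Finset.disjoint_left.1 hPQ hx hh
    have m1 := cnt_mem P c hc
    have m2 := cnt_nmem Q c hn
    have m3 := cnt_mem Q h hh
    have m4 := cnt_nmem P h hn2
    exact ga34 P Q hPQ 3 (Or.inr rfl) c h hc hh (fun _ => has_before P c (by omega)) (fun _ => has_after Q h (by omega))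

theorem case4 {e : ℕ} (P Q : Finset (Fin e)) (hPQ : Disjoint P Q) (hP : P.Nonempty) (hQ : Q.Nonempty)
    (c h : Fin e) (hch : (c = h ∧ (c ∈ P ∨ c ∈ Q)) ∨ (c ∈ P ∧ h ∈ Q))
    (hK : MK (fl (matC 4 P Q c h))) : Concl 4 P Q c h := by
  have p1 := cnt_ge_one P hP
  have q1 := cnt_ge_one Q hQ
  have hA := fun n => (cnt_rel 4 P Q hPQ c h hch 0 n).1 rfl
  have hB := fun n => (cnt_rel 4 P Q hPQ c h hch 2 n).2.1 rfl
  have hD := fun n => (cnt_rel 4 P Q hPQ c h hch 1 n).2.2 rfl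
  obtain ⟨f, hf⟩ : ∃ f : ℕ → ℕ, ∀ n, f n = if c.1 < n then 1 else 0 := ⟨_, fun _ => rfl⟩
  obtain ⟨g, hg⟩ : ∃ g : ℕ → ℕ, ∀ n, g n = if h.1 < n then 1 else 0 := ⟨_, fun _ => rfl⟩
  have mf := marks c h f hf
  have mg := marks h c g hg
  simp only [← hf, ← hg] at hA hB hD
  clear hf hg
  have eA := hA e
  have eB := hB e
  have eD := hD e
  have j0 := invBig (cnt (ind P) e - 1) _ hK (by omega)
  have i1 := j0 c.1 c.1 le_rfl
  have i2 := j0 c.1 (c.1 + 1) (by omega)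
  have i3 := j0 h.1 (h.1 + 1) (by omega)
  have j1 := inv12 0 _ hK (by omega)
  have i4 := j1 (h.1 + 1)
  have a0 := hA c.1
  have b0 := hB c.1
  have d0 := hD c.1
  have a1 := hA (c.1 + 1)
  have b1 := hB (c.1 + 1)
  have d1 := hD (c.1 + 1)
  have a2 := hA h.1
  have b2 := hB h.1
  have d2 := hD h.1
  have a3 := hA (h.1 + 1)
  have b3 := hB (h.1 + 1)
  have d3 := hD (h.1 + 1)
  have fP := cnt_facts P c h
  have fQ := cnt_facts Q c h
  rcases hch with ⟨rfl, hc | hc⟩ | ⟨hc, hh⟩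
  · have hn : c ∉ Q := fun hx => Finset.disjoint_left.1 hPQ hc hx
    have m1 := cnt_mem P c hc
    have m2 := cnt_nmem Q c hn
    exact al5 P Q hPQ c hc (has_before Q c (by omega)) (has_after P c (by omega))
  · have hn : c ∉ P := fun hx => Finset.disjoint_left.1 hPQ hx hc
    have m1 := cnt_mem Q c hc
    have m2 := cnt_nmem P c hn
    exact be15 P Q hPQ 4 (Or.inr rfl) c hc (has_after P c (by omega))
  · have hn : c ∉ Q := fun hx => Finset.disjoint_left.1 hPQ hc hx
    have hn2 : h ∉ P := fun hx => Finset.disjoint_left.1 hPQ hx hh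
    have m1 := cnt_mem P c hc
    have m2 := cnt_nmem Q c hn
    have m3 := cnt_mem Q h hh
    have m4 := cnt_nmem P h hn2
    exact ga25 P Q hPQ 4 (Or.inr rfl) c h hc hh (fun _ => has_after P c (by omega)) (fun _ => has_before Q h (by omega))

theorem case5 {e : ℕ} (P Q : Finset (Fin e)) (hPQ : Disjoint P Q) (hP : P.Nonempty) (hQ : Q.Nonempty)
    (c h : Fin e) (hch : (c = h ∧ (c ∈ P ∨ c ∈ Q)) ∨ (c ∈ P ∧ h ∈ Q))
    (hK : MK (fl (matC 5 P Q c h))) : Concl 5 P Q c h := by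
  have p1 := cnt_ge_one P hP
  have q1 := cnt_ge_one Q hQ
  have hA := fun n => (cnt_rel 5 P Q hPQ c h hch 2 n).1 rfl
  have hB := fun n => (cnt_rel 5 P Q hPQ c h hch 1 n).2.1 rfl
  have hD := fun n => (cnt_rel 5 P Q hPQ c h hch 0 n).2.2 rfl
  obtain ⟨f, hf⟩ : ∃ f : ℕ → ℕ, ∀ n, f n = if c.1 < n then 1 else 0 := ⟨_, fun _ => rfl⟩
  obtain ⟨g, hg⟩ : ∃ g : ℕ → ℕ, ∀ n, g n = if h.1 < n then 1 else 0 := ⟨_, fun _ => rfl⟩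
  have mf := marks c h f hf
  have mg := marks h c g hg
  simp only [← hf, ← hg] at hA hB hD
  clear hf hg
  have eA := hA e
  have eB := hB e
  have eD := hD e
  have j0 := inv01 0 _ hK (by omega)
  have i1 := j0 (h.1 + 1)
  have j1 := inv12 0 _ hK (by omega)
  have i2 := j1 (c.1 + 1)
  have a0 := hA (c.1 + 1)
  have b0 := hB (c.1 + 1)
  have d0 := hD (c.1 + 1)
  have a1 := hA (h.1 + 1)
  have b1 := hB (h.1 + 1)
  have d1 := hD (h.1 + 1)
  have fP := cnt_facts P c h
  have fQ := cnt_facts Q c h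
  rcases hch with ⟨rfl, hc | hc⟩ | ⟨hc, hh⟩
  · have hn : c ∉ Q := fun hx => Finset.disjoint_left.1 hPQ hc hx
    have m1 := cnt_mem P c hc
    have m2 := cnt_nmem Q c hn
    exact al26 P Q hPQ 5 (Or.inr rfl) c hc (has_before Q c (by omega))
  · have hn : c ∉ P := fun hx => Finset.disjoint_left.1 hPQ hx hc
    have m1 := cnt_mem Q c hc
    have m2 := cnt_nmem P c hn
    exact be36 P Q hPQ 5 (Or.inr rfl) c hc (has_before P c (by omega))
  · have hn : c ∉ Q := fun hx => Finset.disjoint_left.1 hPQ hc hx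
    have hn2 : h ∉ P := fun hx => Finset.disjoint_left.1 hPQ hx hh
    have m1 := cnt_mem P c hc
    have m2 := cnt_nmem Q c hn
    have m3 := cnt_mem Q h hh
    have m4 := cnt_nmem P h hn2
    exact ga6 P Q hPQ c h hc hh (fun _ => has_before P c (by omega)) (fun _ => has_before Q h (by omega))

theorem main_case {e : ℕ} (u : Fin 6) (P Q : Finset (Fin e)) (hPQ : Disjoint P Q) (hP : P.Nonempty)
    (hQ : Q.Nonempty) (c h : Fin e) (hch : (c = h ∧ (c ∈ P ∨ c ∈ Q)) ∨ (c ∈ P ∧ h ∈ Q))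
    (hK : MK (fl (matC u P Q c h))) : Concl u P Q c h := by
  have hu : u = 0 ∨ u = 1 ∨ u = 2 ∨ u = 3 ∨ u = 4 ∨ u = 5 := by omega
  rcases hu with rfl | rfl | rfl | rfl | rfl | rfl
  · exact case0 P Q hPQ hP hQ c h hch hK
  · exact case1 P Q hPQ hP hQ c h hch hK
  · exact case2 P Q hPQ hP hQ c h hch hK
  · exact case3 P Q hPQ hP hQ c h hch hK
  · exact case4 P Q hPQ hP hQ c h hch hK
  · exact case5 P Q hPQ hP hQ c h hch hK

def evenU (u : Fin 6) : Bool := u == 0 || u == 2 || u == 4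

theorem cellA : ∀ (u : Fin 6) (s : Fin 3) (y z a : Bool), (y && z) = false → (a = true → y = true) →
    (bif a then aacol u s else bif y then ycol u s else bif z then zcol u s else false) =
    bif evenU u then cell u y z a a s else cell u z y a a s := by decide

theorem cellB : ∀ (u : Fin 6) (s : Fin 3) (y z a : Bool), (y && z) = false → (a = true → z = true) →
    (bif a then abcol u s else bif z then zcol u s else bif y then ycol u s else false) =
    bif evenU u then cell u y z a a s else cell u z y a a s := by decide

theorem cellC : ∀ (u : Fin 6) (s : Fin 3) (y z a b : Bool), (y && z) = false → (a = true → y = true) →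
    (b = true → z = true) →
    (bif a then oycol u s else bif b then ozcol u s else
      bif y then ycol u s else bif z then zcol u s else false) =
    bif evenU u then cell u y z a b s else cell u z y b a s := by decide

section conv
variable {e : ℕ} (Y Z : Finset (Fin e)) {y z : ℕ} (hY : Y.card = y + 1) (hZ : Z.card = z + 1)

theorem and_dec (hYZ : Disjoint Y Z) (x : Fin e) : (decide (x ∈ Y) && decide (x ∈ Z)) = false := by
  by_cases h : x ∈ Y
  · have : x ∉ Z := Finset.disjoint_left.1 hYZ h
    simp [this]
  · simp [h]

theorem alpha_eq (hYZ : Disjoint Y Z) (u : Fin 6) (k : Fin (y + 1)) :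
    alphaM Y Z hY u k = bif evenU u then fl (matC u Y Z (Y.orderEmbOfFin hY k) (Y.orderEmbOfFin hY k))
      else fl (matC u Z Y (Y.orderEmbOfFin hY k) (Y.orderEmbOfFin hY k)) := by
  have hm := Finset.orderEmbOfFin_mem Y hY k
  generalize hg : Y.orderEmbOfFin hY k = a at hm
  funext s x
  have h := cellA u s (decide (x ∈ Y)) (decide (x ∈ Z)) (decide (x = a)) (and_dec Y Z hYZ x)
    (by intro h; simp only [decide_eq_true_eq] at h ⊢; rw [h]; exact hm)
  simp only [Bool.cond_decide] at h
  simp only [alphaM, hg]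
  cases hu : evenU u <;> simp only [hu, cond_true, cond_false] at h ⊢ <;> simpa [fl, matC] using h

theorem beta_eq (hYZ : Disjoint Y Z) (u : Fin 6) (l : Fin (z + 1)) :
    betaM Y Z hZ u l = bif evenU u then fl (matC u Y Z (Z.orderEmbOfFin hZ l) (Z.orderEmbOfFin hZ l))
      else fl (matC u Z Y (Z.orderEmbOfFin hZ l) (Z.orderEmbOfFin hZ l)) := by
  have hm := Finset.orderEmbOfFin_mem Z hZ l
  generalize hg : Z.orderEmbOfFin hZ l = a at hm
  funext s x
  have h := cellB u s (decide (x ∈ Y)) (decide (x ∈ Z)) (decide (x = a)) (and_dec Y Z hYZ x)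
    (by intro h; simp only [decide_eq_true_eq] at h ⊢; rw [h]; exact hm)
  simp only [Bool.cond_decide] at h
  simp only [betaM, hg]
  cases hu : evenU u <;> simp only [hu, cond_true, cond_false] at h ⊢ <;> simpa [fl, matC] using h

theorem gamma_eq (hYZ : Disjoint Y Z) (u : Fin 6) (k : Fin (y + 1)) (l : Fin (z + 1)) :
    gammaM Y Z hY hZ u k l =
      bif evenU u then fl (matC u Y Z (Y.orderEmbOfFin hY k) (Z.orderEmbOfFin hZ l))
      else fl (matC u Z Y (Z.orderEmbOfFin hZ l) (Y.orderEmbOfFin hY k)) := by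
  have hm := Finset.orderEmbOfFin_mem Y hY k
  have hm' := Finset.orderEmbOfFin_mem Z hZ l
  generalize hg : Y.orderEmbOfFin hY k = a at hm
  generalize hg' : Z.orderEmbOfFin hZ l = b at hm'
  funext s x
  have h := cellC u s (decide (x ∈ Y)) (decide (x ∈ Z)) (decide (x = a)) (decide (x = b))
    (and_dec Y Z hYZ x)
    (by intro h; simp only [decide_eq_true_eq] at h ⊢; rw [h]; exact hm)
    (by intro h; simp only [decide_eq_true_eq] at h ⊢; rw [h]; exact hm')
  simp only [Bool.cond_decide] at h
  simp only [gammaM, hg, hg']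
  cases hu : evenU u <;> simp only [hu, cond_true, cond_false] at h ⊢ <;> simpa [fl, matC] using h

theorem exists_idx {n : ℕ} (S : Finset (Fin e)) (hS : S.card = n) (x : Fin e) (hx : x ∈ S) :
    ∃ k, S.orderEmbOfFin hS k = x := by
  have : x ∈ Set.range (S.orderEmbOfFin hS) := by
    rw [Finset.range_orderEmbOfFin]; exact hx
  exact this

theorem Duset_iff (hYZ : Disjoint Y Z) (u : Fin 6) (M : Fin 3 → Fin e → Bool) :
    M ∈ Duset Y Z hY hZ u ↔ if evenU u = true then DD u Y Z M else DD u Z Y M := by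
  have hmY := Finset.orderEmbOfFin_mem Y hY
  have hmZ := Finset.orderEmbOfFin_mem Z hZ
  have h1 := alpha_eq Y Z hY hYZ u
  have h2 := beta_eq Y Z hZ hYZ u
  have h3 := gamma_eq Y Z hY hZ hYZ u
  cases hu : evenU u <;> simp only [hu, cond_true, cond_false] at h1 h2 h3
  · rw [if_neg (by simp)]
    constructor
    · rintro (⟨k, rfl⟩ | ⟨l, rfl⟩ | ⟨k, l, rfl⟩)
      · exact ⟨_, _, Or.inl ⟨rfl, Or.inr (hmY k)⟩, h1 k⟩
      · exact ⟨_, _, Or.inl ⟨rfl, Or.inl (hmZ l)⟩, h2 l⟩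
      · exact ⟨_, _, Or.inr ⟨hmZ l, hmY k⟩, h3 k l⟩
    · rintro ⟨c, h, ⟨rfl, hc | hc⟩ | ⟨hc, hh⟩, rfl⟩
      · obtain ⟨l, rfl⟩ := exists_idx Z hZ c hc
        exact Or.inr (Or.inl ⟨l, (h2 l).symm⟩)
      · obtain ⟨k, rfl⟩ := exists_idx Y hY c hc
        exact Or.inl ⟨k, (h1 k).symm⟩
      · obtain ⟨l, rfl⟩ := exists_idx Z hZ c hc
        obtain ⟨k, rfl⟩ := exists_idx Y hY h hh
        exact Or.inr (Or.inr ⟨k, l, (h3 k l).symm⟩)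
  · rw [if_pos rfl]
    constructor
    · rintro (⟨k, rfl⟩ | ⟨l, rfl⟩ | ⟨k, l, rfl⟩)
      · exact ⟨_, _, Or.inl ⟨rfl, Or.inl (hmY k)⟩, h1 k⟩
      · exact ⟨_, _, Or.inl ⟨rfl, Or.inr (hmZ l)⟩, h2 l⟩
      · exact ⟨_, _, Or.inr ⟨hmY k, hmZ l⟩, h3 k l⟩
    · rintro ⟨c, h, ⟨rfl, hc | hc⟩ | ⟨hc, hh⟩, rfl⟩
      · obtain ⟨k, rfl⟩ := exists_idx Y hY c hc
        exact Or.inl ⟨k, (h1 k).symm⟩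
      · obtain ⟨l, rfl⟩ := exists_idx Z hZ c hc
        exact Or.inr (Or.inl ⟨l, (h2 l).symm⟩)
      · obtain ⟨k, rfl⟩ := exists_idx Y hY c hc
        obtain ⟨l, rfl⟩ := exists_idx Z hZ h hh
        exact Or.inr (Or.inr ⟨k, l, (h3 k l).symm⟩)
end conv

theorem DD_concl {e : ℕ} (u : Fin 6) (P Q : Finset (Fin e)) (hPQ : Disjoint P Q) (hP : P.Nonempty)
    (hQ : Q.Nonempty) (M : Fin 3 → Fin e → Bool) (hM : DD u P Q M) (hK : MK M) :
    ∃ L : Fin 3 → Fin e → Bool, wtM L = 0 ∧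
      ∃ ops : List (Fin e × ℕ), (∀ p ∈ ops, p.1.1 ≠ 0 ∧ 0 < p.2) ∧
        GopList ops (Finsupp.single L 1) M = 1 ∧
        ∀ M' : Fin 3 → Fin e → Bool, M' ≠ M →
          IsVNPoly (GopList ops (Finsupp.single L 1) M') ∧
          (GopList ops (Finsupp.single L 1) M' ≠ 0 → DD u P Q M') := by
  obtain ⟨c, h, hch, rfl⟩ := hM
  exact main_case u P Q hPQ hP hQ c h hch hK

/-- Every Kleshchev multipartition in `D^u` is reachable by an
induction sequence from a matrix of weight 0, with coefficients in `v·ℕ[v]`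
supported on `D^u`. -/
theorem Duset_induction_sequence (e : ℕ) (he : 2 ≤ e)
    (X Y Z : Finset (Fin e)) {y z : ℕ} (hY : Y.card = y + 1) (hZ : Z.card = z + 1)
    (hXY : Disjoint X Y) (hXZ : Disjoint X Z) (hYZ : Disjoint Y Z)
    (hcover : X ∪ Y ∪ Z = Finset.univ)
    (u : Fin 6) (M : Fin 3 → Fin e → Bool) (hM : M ∈ Duset Y Z hY hZ u)
    (hK : IsKleshchev (PtCharge (fun _ => 0) M) (PtPart (fun _ => 0) M)) :
    ∃ L : Fin 3 → Fin e → Bool, wtM L = 0 ∧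
      ∃ ops : List (Fin e × ℕ), (∀ p ∈ ops, p.1.1 ≠ 0 ∧ 0 < p.2) ∧
        GopList ops (Finsupp.single L 1) M = 1 ∧
        ∀ M' : Fin 3 → Fin e → Bool, M' ≠ M →
          IsVNPoly (GopList ops (Finsupp.single L 1) M') ∧
          (GopList ops (Finsupp.single L 1) M' ≠ 0 → M' ∈ Duset Y Z hY hZ u) := by
  have hMK : MK M := MK_of_Kleshchev _ _ hK M rfl rfl
  have hYn : Y.Nonempty := Finset.card_pos.1 (by omega)
  have hZn : Z.Nonempty := Finset.card_pos.1 (by omega)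
  have hiff := Duset_iff Y Z hY hZ hYZ u
  simp only [hiff] at hM ⊢
  by_cases hu : evenU u = true
  · simp only [if_pos hu] at hM ⊢
    exact DD_concl u Y Z hYZ hYn hZn M hM hMK
  · simp only [if_neg hu] at hM ⊢
    exact DD_concl u Z Y hYZ.symm hZn hYn M hM hMK


end
end AK
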